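/- Let d ↦ n(d) be a function with n(d) → ∞ and d/n(d) → 0 as d → ∞. For each d, let X_1, …, X_{n(d)} be i.i.d. d-dimensional standard normal random vectors N_d(0, I). Let S_d = (1/n(d)) Σ_{j=1}^{n(d)} X_j X_j^t be the sample covariance matrix, T_d Tyler's M-estimator of the sample, and set S*_d = √(n(d)/d)(S_d − I), T*_d = √(n(d)/d)(T_d − I). Then ‖T*_d − S*_d‖₂ → 0 in probability as d → ∞. -/

import Mathlib

open MeasureTheory ProbabilityTheory Filter Matrix

/-- The eigenvalues of a real symmetric `d × d` matrix, sorted in increasing order,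
so that `sortedEigs A i` is `λ_{i+1}(A)` with `λ_1(A) ≤ … ≤ λ_d(A)`
(junk value `0` if the matrix is not symmetric). -/
noncomputable def sortedEigs {d : ℕ} (A : Matrix (Fin d) (Fin d) ℝ) : Fin d → ℝ :=
  if h : A.IsHermitian then h.eigenvalues ∘ Tuple.sort h.eigenvalues else 0

/-- The spectral norm `‖A‖₂ = max (|λ_1(A)|, |λ_d(A)|)` of a symmetric matrix,
i.e. the largest absolute value of an eigenvalue. -/
noncomputable def specNorm {d : ℕ} (A : Matrix (Fin d) (Fin d) ℝ) : ℝ :=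
  ⨆ i : Fin d, |sortedEigs A i|

/-- `IsTyler X T` says that `T` is Tyler's M-estimator of the sample
`X : Fin n → (Fin d → ℝ)`: it is symmetric positive definite, normalized by
`tr T = d`, and satisfies Tyler's fixed-point equation
`T = (d/n) ∑_j (X_j X_jᵗ) / (X_jᵗ T⁻¹ X_j)`. -/
def IsTyler {d n : ℕ} (X : Fin n → Fin d → ℝ) (T : Matrix (Fin d) (Fin d) ℝ) : Prop :=
  T.PosDef ∧ T.trace = d ∧
    T = ((d : ℝ) / (n : ℝ)) •
      ∑ j : Fin n, (X j ⬝ᵥ T⁻¹ *ᵥ X j)⁻¹ • vecMulVec (X j) (X j)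


open MeasureTheory ProbabilityTheory Filter Matrix

set_option linter.unusedSectionVars false

namespace TY

/-- squared Frobenius norm -/
noncomputable def fro {m k : Type*} [Fintype m] [Fintype k] (M : Matrix m k ℝ) : ℝ :=
  ∑ i, ∑ j, M i j ^ 2

section LA
variable {m : Type*} [Fintype m] [DecidableEq m]

lemma fro_nonneg (M : Matrix m m ℝ) : 0 ≤ fro M :=
  Finset.sum_nonneg fun _ _ => Finset.sum_nonneg fun _ _ => sq_nonneg _

lemma dot_self_nonneg (v : m → ℝ) : 0 ≤ v ⬝ᵥ v :=
  Finset.sum_nonneg fun _ _ => mul_self_nonneg _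

lemma sq_dot_le (a b : m → ℝ) : (a ⬝ᵥ b) ^ 2 ≤ (a ⬝ᵥ a) * (b ⬝ᵥ b) := by
  have := Finset.sum_mul_sq_le_sq_mul_sq Finset.univ a b
  simpa [dotProduct, sq] using this

lemma fro_transpose (M : Matrix m m ℝ) : fro Mᵀ = fro M := by
  unfold fro; rw [Finset.sum_comm]; rfl

lemma fro_mulVec (M : Matrix m m ℝ) (v : m → ℝ) :
    (M *ᵥ v) ⬝ᵥ (M *ᵥ v) ≤ fro M * (v ⬝ᵥ v) := by
  unfold fro
  rw [Finset.sum_mul]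
  refine Finset.sum_le_sum fun i _ => ?_
  have := sq_dot_le (M i) v
  have h2 : M i ⬝ᵥ M i = ∑ j, M i j ^ 2 := by simp [dotProduct, sq]
  rw [← h2]; simpa [mulVec, sq] using this

lemma fro_mul_left {k : ℝ} (Q M : Matrix m m ℝ)
    (hQ : ∀ v, (Q *ᵥ v) ⬝ᵥ (Q *ᵥ v) ≤ k * (v ⬝ᵥ v)) : fro (Q * M) ≤ k * fro M := by
  rw [← fro_transpose (Q * M), ← fro_transpose M]
  unfold fro
  rw [Finset.mul_sum]
  refine Finset.sum_le_sum fun j _ => ?_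
  have := hQ (Mᵀ j)
  simpa [dotProduct, mulVec, Matrix.mul_apply, sq] using this

lemma fro_mul_right {k : ℝ} (Q M : Matrix m m ℝ)
    (hQ : ∀ v, (Qᵀ *ᵥ v) ⬝ᵥ (Qᵀ *ᵥ v) ≤ k * (v ⬝ᵥ v)) : fro (M * Q) ≤ k * fro M := by
  rw [← fro_transpose (M * Q), ← fro_transpose M, Matrix.transpose_mul]
  exact fro_mul_left _ _ hQ

lemma trace_mul_sq_le (A B : Matrix m m ℝ) : (A * B).trace ^ 2 ≤ fro A * fro B := by
  rw [← fro_transpose B]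
  unfold fro
  simp only [Matrix.trace, Matrix.diag, Matrix.mul_apply, transpose_apply]
  rw [← Finset.sum_product', ← Finset.sum_product', ← Finset.sum_product']
  exact Finset.sum_mul_sq_le_sq_mul_sq _ (fun x : m × m => A x.1 x.2) (fun x => B x.2 x.1)

lemma fro_eq_trace (A : Matrix m m ℝ) (hA : Aᵀ = A) : fro A = (A * A).trace := by
  unfold fro
  simp only [Matrix.trace, Matrix.diag, Matrix.mul_apply]
  refine Finset.sum_congr rfl fun i _ => Finset.sum_congr rfl fun j _ => ?_
  have : A j i = A i j := congrFun (congrFun hA i) j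
  rw [this]; ring

lemma fro_add_le (A B : Matrix m m ℝ) : fro (A + B) ≤ 2 * fro A + 2 * fro B := by
  unfold fro
  simp only [Finset.mul_sum, ← Finset.sum_add_distrib]
  refine Finset.sum_le_sum fun i _ => Finset.sum_le_sum fun j _ => ?_
  simp only [Matrix.add_apply]
  nlinarith [sq_nonneg (A i j - B i j)]

lemma fro_smul (c : ℝ) (A : Matrix m m ℝ) : fro (c • A) = c ^ 2 * fro A := by
  unfold fro
  simp only [Finset.mul_sum, Matrix.smul_apply, smul_eq_mul, mul_pow]

lemma fro_one : fro (1 : Matrix m m ℝ) = Fintype.card m := by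
  unfold fro
  simp [Matrix.one_apply]

lemma dot_comm_sym (A : Matrix m m ℝ) (hA : Aᵀ = A) (u v : m → ℝ) :
    u ⬝ᵥ A *ᵥ v = (A *ᵥ u) ⬝ᵥ v := by
  rw [Matrix.dotProduct_mulVec, ← Matrix.mulVec_transpose, hA]

lemma quad_vecMulVec (a v : m → ℝ) : v ⬝ᵥ (vecMulVec a a) *ᵥ v = (a ⬝ᵥ v) ^ 2 := by
  rw [Matrix.vecMulVec_mulVec]
  simp [dotProduct_comm v a, sq]

lemma trace_mul_vecMulVec (A : Matrix m m ℝ) (a : m → ℝ) :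
    (A * vecMulVec a a).trace = a ⬝ᵥ A *ᵥ a := by
  rw [Matrix.mul_vecMulVec, Matrix.trace_vecMulVec, dotProduct_comm]

lemma spec (A : Matrix m m ℝ) (hA : A.IsHermitian) :
    ∃ e : m → m → ℝ, (∀ i, A *ᵥ e i = hA.eigenvalues i • e i) ∧ (∀ i, e i ⬝ᵥ e i = 1) ∧
      (∀ u, u ⬝ᵥ u = ∑ i, (e i ⬝ᵥ u) ^ 2) ∧
      (∀ u, u ⬝ᵥ A *ᵥ u = ∑ i, hA.eigenvalues i * (e i ⬝ᵥ u) ^ 2) := by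
  classical
  let b := hA.eigenvectorBasis
  have hin : ∀ x y : EuclideanSpace ℝ m, inner ℝ x y = x.ofLp ⬝ᵥ y.ofLp := by
    intro x y; rw [EuclideanSpace.inner_eq_star_dotProduct, dotProduct_comm]; simp
  have hev : ∀ i, A *ᵥ (b i).ofLp = hA.eigenvalues i • (b i).ofLp := fun i =>
    hA.mulVec_eigenvectorBasis i
  have hpar : ∀ u v : m → ℝ, u ⬝ᵥ v = ∑ i, ((b i).ofLp ⬝ᵥ u) * ((b i).ofLp ⬝ᵥ v) := by
    intro u v
    have := b.sum_inner_mul_inner (WithLp.toLp 2 u) (WithLp.toLp 2 v)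
    simp only [hin] at this
    rw [← this]
    refine Finset.sum_congr rfl fun i _ => ?_
    rw [dotProduct_comm u]
  refine ⟨fun i => (b i).ofLp, hev, fun i => ?_, fun u => ?_, fun u => ?_⟩
  · rw [← hin, real_inner_self_eq_norm_sq, b.norm_eq_one]; norm_num
  · rw [hpar]; exact Finset.sum_congr rfl fun i _ => (sq _).symm
  · rw [hpar]
    refine Finset.sum_congr rfl fun i _ => ?_
    have hT : Aᵀ = A := by have h := hA.eq; rwa [conjTranspose_eq_transpose_of_trivial] at h
    rw [dot_comm_sym A hT, hev i, smul_dotProduct, smul_eq_mul]; ring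

lemma exists_max_eig [Nonempty m] (A : Matrix m m ℝ) (hA : A.IsHermitian) :
    ∃ (c : ℝ) (v : m → ℝ), v ⬝ᵥ v = 1 ∧ A *ᵥ v = c • v ∧ ∀ u, u ⬝ᵥ A *ᵥ u ≤ c * (u ⬝ᵥ u) := by
  obtain ⟨e, h1, h2, h3, h4⟩ := spec A hA
  obtain ⟨i, -, hi⟩ := Finset.exists_max_image Finset.univ hA.eigenvalues Finset.univ_nonempty
  refine ⟨hA.eigenvalues i, e i, h2 i, h1 i, fun u => ?_⟩
  rw [h3, h4, Finset.mul_sum]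
  exact Finset.sum_le_sum fun j _ => mul_le_mul_of_nonneg_right (hi j (Finset.mem_univ _)) (sq_nonneg _)

end LA
end TY

open MeasureTheory ProbabilityTheory Filter Matrix
set_option linter.unusedSectionVars false

namespace TY
section D1
variable {m : Type*} [Fintype m] [DecidableEq m] {ι : Type*} [Fintype ι]

lemma quad_sum (A : Matrix m m ℝ) (δ : ℝ) (c : ι → ℝ) (W : ι → m → ℝ) :
    (A * (δ • ∑ j, c j • vecMulVec (W j) (W j))).trace = δ * ∑ j, c j * (W j ⬝ᵥ A *ᵥ W j) := by
  simp only [Matrix.mul_smul, Matrix.trace_smul, Matrix.mul_sum, Matrix.trace_sum,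
    trace_mul_vecMulVec, smul_eq_mul]

lemma quad_sum' (A : Matrix m m ℝ) (δ : ℝ) (W : ι → m → ℝ) :
    (A * (δ • ∑ j, vecMulVec (W j) (W j))).trace = δ * ∑ j, (W j ⬝ᵥ A *ᵥ W j) := by
  simpa using quad_sum A δ (fun _ => 1) W

lemma detW [Nonempty m] (W : ι → m → ℝ) (δ : ℝ) (hδ : 0 < δ)
    (hδn : δ * Fintype.card ι = Fintype.card m)
    (R : Matrix m m ℝ) (hR : R.PosDef)
    (hI : δ • ∑ j, vecMulVec (W j) (W j) = 1)
    (hRT : R⁻¹ = δ • ∑ j, (W j ⬝ᵥ R *ᵥ W j)⁻¹ • vecMulVec (W j) (W j))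
    (hp1 : ∀ j, 10 / 11 ≤ W j ⬝ᵥ W j) (hp2 : ∀ j, W j ⬝ᵥ W j ≤ 10 / 9)
    (hθ : ∀ C : Matrix m m ℝ, Cᵀ = C → C.trace = 0 →
      δ * ∑ j, (W j ⬝ᵥ C *ᵥ W j) ^ 2 ≤ 1 / 4 * fro C) :
    ∃ c : ℝ, 0 < c ∧ ∀ u, (R *ᵥ u - c • u) ⬝ᵥ (R *ᵥ u - c • u) ≤
      16 * c ^ 2 * fro (δ • ∑ j, (W j ⬝ᵥ W j)⁻¹ • vecMulVec (W j) (W j) - 1) * (u ⬝ᵥ u) := by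
  set G : Matrix m m ℝ := δ • ∑ j, (W j ⬝ᵥ W j)⁻¹ • vecMulVec (W j) (W j) - 1 with hG
  have hRt : Rᵀ = R := by have h := hR.1.eq; rwa [conjTranspose_eq_transpose_of_trivial] at h
  obtain ⟨c, v, hv1, hv2, hc⟩ := exists_max_eig R hR.1
  have hRq : ∀ u : m → ℝ, u ≠ 0 → 0 < u ⬝ᵥ R *ᵥ u := by
    intro u hu; simpa using hR.dotProduct_mulVec_pos hu
  have hv0 : v ≠ 0 := by rintro rfl; simp at hv1
  have hc0 : 0 < c := by
    have := hRq v hv0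
    rw [hv2, dotProduct_smul, hv1] at this; simpa using this
  have hd : (0 : ℝ) < Fintype.card m := by exact_mod_cast Fintype.card_pos
  set t : ℝ := R.trace / Fintype.card m with ht
  set C : Matrix m m ℝ := R - t • 1 with hC
  have hCt : Cᵀ = C := by rw [hC, transpose_sub, hRt, transpose_smul, transpose_one]
  have hCtr : C.trace = 0 := by
    rw [hC, trace_sub, trace_smul, trace_one, ht, smul_eq_mul]; field_simp; ring
  have hCu : ∀ u, C *ᵥ u = R *ᵥ u - t • u := by
    intro u; rw [hC, sub_mulVec, smul_mulVec, one_mulVec]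
  have hp0 : ∀ j, 0 < W j ⬝ᵥ W j := fun j => lt_of_lt_of_le (by norm_num) (hp1 j)
  have hW0 : ∀ j, W j ≠ 0 := by
    intro j h; have := hp0 j; rw [h] at this; simp at this
  have hr0 : ∀ j, 0 < W j ⬝ᵥ R *ᵥ W j := fun j => hRq _ (hW0 j)
  -- trace identities
  have e1 : R.trace = δ * ∑ j, (W j ⬝ᵥ R *ᵥ W j)⁻¹ * (W j ⬝ᵥ (R * R) *ᵥ W j) := by
    rw [← quad_sum, ← hRT, Matrix.mul_assoc, Matrix.mul_nonsing_inv _ ((Matrix.isUnit_iff_isUnit_det _).1 hR.isUnit), Matrix.mul_one]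
  have e2 : (C * G).trace = δ * ∑ j, (W j ⬝ᵥ W j)⁻¹ * (W j ⬝ᵥ C *ᵥ W j) := by
    rw [hG, Matrix.mul_sub, trace_sub, quad_sum, Matrix.mul_one, hCtr, sub_zero]
  have e3 : δ * ∑ j, (C *ᵥ W j) ⬝ᵥ (C *ᵥ W j) = fro C := by
    rw [fro_eq_trace C hCt]
    have := quad_sum' (C * C) δ W
    rw [hI, Matrix.mul_one] at this
    rw [this]
    congr 1
    refine Finset.sum_congr rfl fun j _ => ?_
    rw [← Matrix.mulVec_mulVec]
    exact (dot_comm_sym C hCt _ _).symm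
  have hCW : ∀ j, W j ⬝ᵥ C *ᵥ W j = W j ⬝ᵥ R *ᵥ W j - t * (W j ⬝ᵥ W j) := by
    intro j; rw [hCu, dotProduct_sub, dotProduct_smul, smul_eq_mul]
  have hCCW : ∀ j, (C *ᵥ W j) ⬝ᵥ (C *ᵥ W j) = W j ⬝ᵥ (R * R) *ᵥ W j
      - 2 * t * (W j ⬝ᵥ R *ᵥ W j) + t ^ 2 * (W j ⬝ᵥ W j) := by
    intro j
    rw [hCu, ← Matrix.mulVec_mulVec, dot_comm_sym R hRt]
    simp only [sub_dotProduct, dotProduct_sub, dotProduct_smul, smul_dotProduct, smul_eq_mul]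
    rw [dotProduct_comm (R *ᵥ W j) (W j)]; ring
  have key : δ * ∑ j, ((W j ⬝ᵥ R *ᵥ W j)⁻¹ * (W j ⬝ᵥ (R * R) *ᵥ W j)
      - (W j ⬝ᵥ W j)⁻¹ * (W j ⬝ᵥ C *ᵥ W j) - t) = - (C * G).trace := by
    simp only [Finset.sum_sub_distrib, mul_sub, ← e1, ← e2, Finset.sum_const, Finset.card_univ, nsmul_eq_mul]
    have : δ * ((Fintype.card ι : ℝ) * t) = R.trace := by
      rw [← mul_assoc, hδn, ht]; field_simp
    rw [this]; ring
  have low : ∀ j, c⁻¹ * (9 / 10 * ((C *ᵥ W j) ⬝ᵥ (C *ᵥ W j)) - 121 / 100 * (W j ⬝ᵥ C *ᵥ W j) ^ 2) ≤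
      ((W j ⬝ᵥ R *ᵥ W j)⁻¹ * (W j ⬝ᵥ (R * R) *ᵥ W j)
      - (W j ⬝ᵥ W j)⁻¹ * (W j ⬝ᵥ C *ᵥ W j) - t) := by
    intro j
    have hcs := sq_dot_le (W j) (C *ᵥ W j)
    have hX := hCW j
    have hY := hCCW j
    have hcj := hc (W j)
    have hX0 := dot_self_nonneg (C *ᵥ W j)
    have h0 := hp0 j
    have h1 := hp1 j
    have h2 := hp2 j
    have h3 := hr0 j
    generalize (C *ᵥ W j) ⬝ᵥ (C *ᵥ W j) = y at *
    generalize W j ⬝ᵥ C *ᵥ W j = x at *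
    generalize W j ⬝ᵥ W j = p at *
    generalize W j ⬝ᵥ (R * R) *ᵥ W j = s at *
    generalize W j ⬝ᵥ R *ᵥ W j = r at *
    have hs : s = y + 2 * t * r - t ^ 2 * p := by linarith
    have e : r⁻¹ * s - p⁻¹ * x - t = (p * y - x ^ 2) / (r * p) := by
      rw [hs]; have hr : r = x + t * p := by linarith
      field_simp
      rw [hr]; ring
    rw [e]
    have f1 : (p * y - x ^ 2) / ((c * p) * p) ≤ (p * y - x ^ 2) / (r * p) :=
      div_le_div_of_nonneg_left (by linarith) (by positivity) (by nlinarith)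
    refine le_trans ?_ f1
    have f2 : (p * y - x ^ 2) / (c * p * p) = c⁻¹ * (y * p⁻¹ - x ^ 2 * (p⁻¹) ^ 2) := by
      field_simp
    rw [f2]
    refine mul_le_mul_of_nonneg_left ?_ (by positivity)
    have g1 : 9 / 10 ≤ p⁻¹ := by
      rw [le_inv_comm₀ (by norm_num) h0]; linarith
    have g2 : p⁻¹ ≤ 11 / 10 := by
      rw [inv_le_comm₀ h0 (by norm_num)]; linarith
    have g3 : (p⁻¹) ^ 2 ≤ 121 / 100 := by nlinarith
    nlinarith [mul_le_mul_of_nonneg_left g1 hX0, mul_le_mul_of_nonneg_left g3 (sq_nonneg x)]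
  have tot : c⁻¹ * (1 / 2 * fro C) ≤ - (C * G).trace := by
    rw [← key]
    refine le_trans ?_ (mul_le_mul_of_nonneg_left (Finset.sum_le_sum fun j _ => low j) hδ.le)
    rw [← Finset.mul_sum, Finset.sum_sub_distrib, ← Finset.mul_sum, ← Finset.mul_sum]
    have := hθ C hCt hCtr
    have hf := fro_nonneg C
    have e4 : ∀ X Y : ℝ, δ * (c⁻¹ * (9 / 10 * X - 121 / 100 * Y)) = c⁻¹ * (9/10 * (δ * X) - 121/100 * (δ * Y)) := by
      intros; ring
    rw [e4, e3]
    refine mul_le_mul_of_nonneg_left ?_ (by positivity)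
    linarith
  have tot2 : fro C ≤ 4 * c ^ 2 * fro G := by
    have h1 := trace_mul_sq_le C G
    have h2 : 1 / 2 * fro C ≤ c * (- (C * G).trace) := by
      have := mul_le_mul_of_nonneg_left tot hc0.le
      rwa [← mul_assoc, mul_inv_cancel₀ hc0.ne', one_mul] at this
    have hf := fro_nonneg C
    have h3 : (1 / 2 * fro C) ^ 2 ≤ c ^ 2 * (fro C * fro G) := by
      calc (1 / 2 * fro C) ^ 2 ≤ (c * (- (C * G).trace)) ^ 2 := by
            apply pow_le_pow_left₀ (by positivity) h2
        _ = c ^ 2 * (C * G).trace ^ 2 := by ring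
        _ ≤ _ := by gcongr
    rcases hf.eq_or_lt with h0 | h0
    · rw [← h0]; have := fro_nonneg G; positivity
    · have : fro C * (fro C) ≤ fro C * (4 * c ^ 2 * fro G) := by nlinarith
      exact le_of_mul_le_mul_left this h0
  refine ⟨c, hc0, fun u => ?_⟩
  have hct : (c - t) ^ 2 ≤ fro C := by
    have := fro_mulVec C v
    rw [hCu, hv2, hv1, ← sub_smul] at this
    simp only [smul_dotProduct, dotProduct_smul, hv1, smul_eq_mul] at this
    nlinarith
  have hCu2 := fro_mulVec C u
  have e5 : R *ᵥ u - c • u = C *ᵥ u + (t - c) • u := by rw [hCu, sub_smul]; abel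
  have hpar : ∀ a b : m → ℝ, (a + b) ⬝ᵥ (a + b) ≤ 2 * (a ⬝ᵥ a) + 2 * (b ⬝ᵥ b) := by
    intro a b
    have := dot_self_nonneg (a - b)
    simp only [sub_dotProduct, dotProduct_sub, add_dotProduct, dotProduct_add] at *
    linarith
  rw [e5]
  refine (hpar _ _).trans ?_
  simp only [smul_dotProduct, dotProduct_smul, smul_eq_mul]
  have hu := dot_self_nonneg u
  have a1 : (t - c) * ((t - c) * (u ⬝ᵥ u)) ≤ fro C * (u ⬝ᵥ u) := by
    rw [← mul_assoc]; refine mul_le_mul_of_nonneg_right ?_ hu; nlinarith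
  have a2 : fro C * (u ⬝ᵥ u) ≤ 4 * c ^ 2 * fro G * (u ⬝ᵥ u) := mul_le_mul_of_nonneg_right tot2 hu
  linarith
end D1
end TY

open MeasureTheory ProbabilityTheory Filter Matrix
set_option linter.unusedSectionVars false

namespace TY
section D2
variable {m : Type*} [Fintype m] [DecidableEq m] {ι : Type*} [Fintype ι]

lemma sqrt_ex (S : Matrix m m ℝ) (hS : S.PosDef) :
    ∃ B K : Matrix m m ℝ, Bᵀ = B ∧ Kᵀ = K ∧ B * B = S ∧ B * K = 1 ∧ K * B = 1 := by
  classical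
  let U := hS.1.eigenvectorUnitary
  have hpos : ∀ i, 0 < hS.1.eigenvalues i := hS.eigenvalues_pos
  have hU1 : (U : Matrix m m ℝ)ᵀ * U = 1 := by
    have := Unitary.coe_star_mul_self U
    simpa [star_eq_conjTranspose] using this
  have hU2 : (U : Matrix m m ℝ) * (U : Matrix m m ℝ)ᵀ = 1 := by
    have := Unitary.coe_mul_star_self U
    simpa [star_eq_conjTranspose] using this
  set V : Matrix m m ℝ := (U : Matrix m m ℝ) with hV
  have hsp : S = V * diagonal hS.1.eigenvalues * Vᵀ := by
    have := hS.1.spectral_theorem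
    simpa [Unitary.conjStarAlgAut_apply, star_eq_conjTranspose, Function.comp_def] using this
  have key : ∀ a b : m → ℝ, (V * diagonal a * Vᵀ) * (V * diagonal b * Vᵀ)
      = V * diagonal (fun i => a i * b i) * Vᵀ := by
    intro a b
    calc _ = V * diagonal a * (Vᵀ * V) * diagonal b * Vᵀ := by simp only [Matrix.mul_assoc]
      _ = _ := by rw [hU1, Matrix.mul_one, Matrix.mul_assoc V, diagonal_mul_diagonal]
  have ht : ∀ a : m → ℝ, (V * diagonal a * Vᵀ)ᵀ = V * diagonal a * Vᵀ := by
    intro a; simp [Matrix.mul_assoc]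
  refine ⟨V * diagonal (fun i => √(hS.1.eigenvalues i)) * Vᵀ,
    V * diagonal (fun i => (√(hS.1.eigenvalues i))⁻¹) * Vᵀ, ht _, ht _, ?_, ?_, ?_⟩
  · rw [key]
    conv_rhs => rw [hsp]
    congr 3; ext i; exact Real.mul_self_sqrt (hpos i).le
  · rw [key]
    have : (fun i => √(hS.1.eigenvalues i) * (√(hS.1.eigenvalues i))⁻¹) = 1 := by
      ext i; exact mul_inv_cancel₀ (Real.sqrt_pos.2 (hpos i)).ne'
    rw [this, Pi.one_def, diagonal_one, Matrix.mul_one, hU2]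
  · rw [key]
    have : (fun i => (√(hS.1.eigenvalues i))⁻¹ * √(hS.1.eigenvalues i)) = 1 := by
      ext i; exact inv_mul_cancel₀ (Real.sqrt_pos.2 (hpos i)).ne'
    rw [this, Pi.one_def, diagonal_one, Matrix.mul_one, hU2]

lemma conj_sum (K : Matrix m m ℝ) (hK : Kᵀ = K) (δ : ℝ) (c : ι → ℝ) (U : ι → m → ℝ) :
    K * (δ • ∑ j, c j • vecMulVec (U j) (U j)) * K =
      δ • ∑ j, c j • vecMulVec (K *ᵥ U j) (K *ᵥ U j) := by
  simp only [Matrix.mul_smul, Matrix.smul_mul, Matrix.mul_sum, Matrix.sum_mul, Matrix.mul_vecMulVec,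
    Matrix.vecMulVec_mul]
  congr 1; refine Finset.sum_congr rfl fun j _ => ?_
  rw [← Matrix.mulVec_transpose, hK]

lemma posDef_of_quad (S : Matrix m m ℝ) (hS : Sᵀ = S) (a : ℝ) (ha : 0 < a)
    (h : ∀ v, a * (v ⬝ᵥ v) ≤ v ⬝ᵥ S *ᵥ v) : S.PosDef := by
  refine Matrix.PosDef.of_dotProduct_mulVec_pos
    (by rw [Matrix.IsHermitian, conjTranspose_eq_transpose_of_trivial, hS]) fun v hv => ?_
  have h1 : 0 < v ⬝ᵥ v := by
    rcases (dot_self_nonneg v).lt_or_eq with h | h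
    · exact h
    · exact absurd (dotProduct_self_eq_zero.1 h.symm) hv
  have := h v
  simp only [star_trivial]
  have := mul_pos ha h1
  linarith

lemma trace_quad (M : Matrix m m ℝ) :
    M.trace = ∑ i, (Pi.single i (1:ℝ) : m → ℝ) ⬝ᵥ M *ᵥ Pi.single i 1 := by
  simp [Matrix.trace]

lemma sumVV_t (δ : ℝ) (c : ι → ℝ) (U : ι → m → ℝ) :
    (δ • ∑ j, c j • vecMulVec (U j) (U j))ᵀ = δ • ∑ j, c j • vecMulVec (U j) (U j) := by
  simp [Matrix.transpose_sum, Matrix.transpose_vecMulVec]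

lemma detT [Nonempty m] (U : ι → m → ℝ) (δ : ℝ) (hδ : 0 < δ)
    (hδn : δ * Fintype.card ι = Fintype.card m) (hU : ∀ j, U j ⬝ᵥ U j = 1)
    (S T : Matrix m m ℝ) (hS : S = δ • ∑ j, vecMulVec (U j) (U j))
    (h1 : ∀ v, 9 / 10 * (v ⬝ᵥ v) ≤ v ⬝ᵥ S *ᵥ v)
    (h2 : ∀ v, v ⬝ᵥ S *ᵥ v ≤ 11 / 10 * (v ⬝ᵥ v))
    (hT : T.PosDef) (hTt : T.trace = Fintype.card m)
    (hTe : T = δ • ∑ j, (U j ⬝ᵥ T⁻¹ *ᵥ U j)⁻¹ • vecMulVec (U j) (U j))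
    (hθ : ∀ C : Matrix m m ℝ, Cᵀ = C →
      δ * ∑ j, (U j ⬝ᵥ C *ᵥ U j - C.trace / Fintype.card m) ^ 2 ≤ 1 / 5 * fro C)
    (e : ℝ) (he0 : 0 ≤ e) (he1 : e ≤ 9 / 160)
    (he : fro (δ • ∑ j, ((U j ⬝ᵥ S⁻¹ *ᵥ U j)⁻¹ - 1) • vecMulVec (U j) (U j)) ≤ e ^ 2) (v : m → ℝ) :
    |v ⬝ᵥ (T - S) *ᵥ v| ≤ 40 * e * (v ⬝ᵥ v) := by
  have hSt : Sᵀ = S := by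
    have := sumVV_t δ (fun _ => 1) U
    simp only [one_smul] at this; rw [hS]; exact this
  have hSp : S.PosDef := posDef_of_quad S hSt (9/10) (by norm_num) h1
  obtain ⟨B, K, hB, hK, hBB, hBK, hKB⟩ := sqrt_ex S hSp
  have hBv : ∀ v, (B *ᵥ v) ⬝ᵥ (B *ᵥ v) = v ⬝ᵥ S *ᵥ v := by
    intro v; rw [← dot_comm_sym B hB, mulVec_mulVec, hBB]
  have hBKv : ∀ v, B *ᵥ (K *ᵥ v) = v := by intro v; rw [mulVec_mulVec, hBK, one_mulVec]
  have hKBv : ∀ v, K *ᵥ (B *ᵥ v) = v := by intro v; rw [mulVec_mulVec, hKB, one_mulVec]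
  have hKu : ∀ v, (K *ᵥ v) ⬝ᵥ (K *ᵥ v) ≤ 10 / 9 * (v ⬝ᵥ v) := by
    intro v; have := h1 (K *ᵥ v); rw [← hBv, hBKv] at this; linarith
  have hKl : ∀ v, 10 / 11 * (v ⬝ᵥ v) ≤ (K *ᵥ v) ⬝ᵥ (K *ᵥ v) := by
    intro v; have := h2 (K *ᵥ v); rw [← hBv, hBKv] at this; linarith
  have hSinv : S⁻¹ = K * K := by
    apply Matrix.inv_eq_right_inv
    rw [← hBB, Matrix.mul_assoc, ← Matrix.mul_assoc B K K, hBK, Matrix.one_mul, hBK]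
  have hTd : IsUnit T.det := (Matrix.isUnit_iff_isUnit_det _).1 hT.isUnit
  set W : ι → m → ℝ := fun j => K *ᵥ U j with hW
  have hWW : ∀ j, W j ⬝ᵥ W j = U j ⬝ᵥ S⁻¹ *ᵥ U j := by
    intro j; rw [hSinv, ← mulVec_mulVec, dot_comm_sym K hK (U j)]
  set R : Matrix m m ℝ := B * T⁻¹ * B with hR
  have hRp : R.PosDef := by
    have hinj : Function.Injective B.mulVec := by
      intro a b hab
      have := congrArg (K.mulVec) hab
      simpa [mulVec_mulVec, hKB] using this
    have := hT.inv.conjTranspose_mul_mul_same hinj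
    rwa [conjTranspose_eq_transpose_of_trivial, hB] at this
  have hRi : R⁻¹ = K * T * K := by
    apply Matrix.inv_eq_right_inv
    calc R * (K * T * K) = B * T⁻¹ * (B * K) * T * K := by rw [hR]; simp only [Matrix.mul_assoc]
      _ = B * (T⁻¹ * T) * K := by rw [hBK]; simp only [Matrix.mul_assoc, Matrix.mul_one, Matrix.one_mul]
      _ = 1 := by rw [Matrix.nonsing_inv_mul _ hTd, Matrix.mul_one, hBK]
  have hWR : ∀ j, W j ⬝ᵥ R *ᵥ W j = U j ⬝ᵥ T⁻¹ *ᵥ U j := by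
    intro j
    rw [hR, ← mulVec_mulVec, ← mulVec_mulVec, dot_comm_sym B hB, hW]; simp only [hBKv]
  have hKSK : K * S * K = 1 := by
    rw [← hBB, ← Matrix.mul_assoc, hKB, Matrix.one_mul, hBK]
  have hI : δ • ∑ j, vecMulVec (W j) (W j) = 1 := by
    have := conj_sum K hK δ (fun _ => 1) U
    simp only [one_smul] at this
    rw [← hKSK, hS, this]
  have hG : δ • ∑ j, (W j ⬝ᵥ W j)⁻¹ • vecMulVec (W j) (W j) - 1 =
      K * (δ • ∑ j, ((U j ⬝ᵥ S⁻¹ *ᵥ U j)⁻¹ - 1) • vecMulVec (U j) (U j)) * K := by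
    rw [conj_sum K hK, ← hI]
    simp only [sub_smul, one_smul, Finset.sum_sub_distrib, smul_sub, hWW]
    rfl
  have hKT : ∀ v, (Kᵀ *ᵥ v) ⬝ᵥ (Kᵀ *ᵥ v) ≤ 10 / 9 * (v ⬝ᵥ v) := by rw [hK]; exact hKu
  have hfK : ∀ M, fro (K * M * K) ≤ 100 / 81 * fro M := by
    intro M
    have a1 := fro_mul_right K (K * M) hKT
    have a2 := fro_mul_left K M hKu
    linarith
  obtain ⟨c, hc0, hc⟩ := detW W δ hδ hδn R hRp hI
    (by
      rw [hRi]
      conv_lhs => rw [hTe]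
      rw [conj_sum K hK]; simp only [hWR]; rfl)
    (fun j => by have := hKl (U j); rw [hU j] at this; linarith)
    (fun j => by have := hKu (U j); rw [hU j] at this; linarith)
    (by
      intro C hC hCt
      set C' := K * C * K with hC'
      have hC't : C'ᵀ = C' := by rw [hC']; simp [hK, hC, Matrix.mul_assoc]
      have q1 : ∀ j, W j ⬝ᵥ C *ᵥ W j = U j ⬝ᵥ C' *ᵥ U j := by
        intro j
        rw [hC', ← mulVec_mulVec, ← mulVec_mulVec, dot_comm_sym K hK]
      have q2 : δ * ∑ j, U j ⬝ᵥ C' *ᵥ U j = 0 := by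
        rw [← quad_sum', ← hS, hC']
        have : K * C * K * S = K * (C * B) := by
          rw [← hBB, Matrix.mul_assoc, ← Matrix.mul_assoc K, hKB, Matrix.one_mul, Matrix.mul_assoc]
        rw [this, Matrix.trace_mul_comm, Matrix.mul_assoc, hBK, Matrix.mul_one, hCt]
      have q3 := hθ C' hC't
      have q4 := hfK C
      simp only [q1]
      set t := C'.trace / Fintype.card m
      have : δ * ∑ j, (U j ⬝ᵥ C' *ᵥ U j - t) ^ 2
          = δ * ∑ j, (U j ⬝ᵥ C' *ᵥ U j)^2 - 2 * t * (δ * ∑ j, U j ⬝ᵥ C' *ᵥ U j)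
            + t^2 * (δ * Fintype.card ι) := by
        simp only [sub_sq, Finset.sum_add_distrib, Finset.sum_sub_distrib, Finset.sum_const,
          Finset.card_univ, nsmul_eq_mul, ← Finset.sum_mul, ← Finset.mul_sum]
        ring
      rw [q2] at this
      have : 0 ≤ t^2 * (δ * Fintype.card ι) := by positivity
      have := fro_nonneg C
      linarith)
  rw [hG] at hc
  set g := (10 / 9) * e with hg
  have hg0 : 0 ≤ g := by positivity
  have hg1 : g ≤ 1 / 16 := by rw [hg]; linarith
  have hgf : fro (K * (δ • ∑ j, ((U j ⬝ᵥ S⁻¹ *ᵥ U j)⁻¹ - 1) • vecMulVec (U j) (U j)) * K) ≤ g ^ 2 := by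
    refine (hfK _).trans ?_
    rw [hg]; nlinarith
  -- quadratic form bound
  have hTR : T = B * R⁻¹ * B := by
    rw [hRi]
    calc T = (B * K) * T * (K * B) := by rw [hBK, hKB]; simp
      _ = _ := by simp only [Matrix.mul_assoc]
  have hq : ∀ v, |c * (v ⬝ᵥ T *ᵥ v) - v ⬝ᵥ S *ᵥ v| ≤ 8 * g * (v ⬝ᵥ S *ᵥ v) := by
    intro v
    set z := B *ᵥ v with hz
    set u := R⁻¹ *ᵥ z with hu
    have e1 : v ⬝ᵥ T *ᵥ v = z ⬝ᵥ u := by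
      rw [hTR, ← mulVec_mulVec, ← mulVec_mulVec, dot_comm_sym B hB]
    have e2 : R *ᵥ u = z := by
      rw [hu, mulVec_mulVec, Matrix.mul_nonsing_inv _ ((Matrix.isUnit_iff_isUnit_det _).1 hRp.isUnit), one_mulVec]
    have e3 := hc u
    rw [e2] at e3
    set y := c • u with hy
    have hyy : y ⬝ᵥ y = c^2 * (u ⬝ᵥ u) := by rw [hy]; simp; ring
    set s := (z - y) ⬝ᵥ (z - y) with hs
    have hs0 : 0 ≤ s := dot_self_nonneg _
    have hY : y ⬝ᵥ y ≤ 2 * (z ⬝ᵥ z) + 2 * s := by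
      have : y ⬝ᵥ y + (z + (z - y)) ⬝ᵥ (z + (z-y)) = 2 * (z ⬝ᵥ z) + 2 * s := by
        rw [hs]; simp only [dotProduct_add, add_dotProduct, dotProduct_sub, sub_dotProduct]; ring_nf
      have := dot_self_nonneg (z + (z - y))
      linarith
    have hu0 := dot_self_nonneg u
    have hz0 := dot_self_nonneg z
    have e4 : s ≤ 16 * g^2 * (y ⬝ᵥ y) := by
      rw [hyy]
      have : 16 * c ^ 2 * fro (K * (δ • ∑ j, ((U j ⬝ᵥ S⁻¹ *ᵥ U j)⁻¹ - 1) • vecMulVec (U j) (U j)) * K) * (u ⬝ᵥ u) ≤ 16 * c^2 * g^2 * (u ⬝ᵥ u) := by gcongr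
      linarith
    have hg2 : g^2 ≤ 1/256 := by nlinarith
    have e5 : s ≤ 64 * g^2 * (z ⬝ᵥ z) := by
      have : 16 * g^2 * (y ⬝ᵥ y) ≤ 16 * g^2 * (2 * (z ⬝ᵥ z) + 2 * s) := by gcongr
      nlinarith [mul_nonneg (sq_nonneg g) hz0, mul_nonneg (sub_nonneg.2 hg2) hs0]
    have e6 : c * (v ⬝ᵥ T *ᵥ v) - v ⬝ᵥ S *ᵥ v = - (z ⬝ᵥ (z - y)) := by
      rw [e1, ← hBv, hy, dotProduct_sub, dotProduct_smul, smul_eq_mul]; ring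
    rw [e6, abs_neg, ← hBv]
    apply abs_le_of_sq_le_sq _ (by positivity)
    calc _ ≤ (z ⬝ᵥ z) * s := sq_dot_le _ _
      _ ≤ (z ⬝ᵥ z) * (64 * g^2 * (z ⬝ᵥ z)) := by gcongr
      _ = _ := by ring
  have hd : (0 : ℝ) < Fintype.card m := by exact_mod_cast Fintype.card_pos
  have hStr : S.trace = Fintype.card m := by
    have := quad_sum' 1 δ U
    simp only [Matrix.one_mul, one_mulVec, hU, Finset.sum_const, Finset.card_univ, nsmul_eq_mul, mul_one] at this
    rw [hS, this, hδn]
  have hcc : |c - 1| ≤ 8 * g := by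
    have : |c * T.trace - S.trace| ≤ 8 * g * S.trace := by
      rw [trace_quad T, trace_quad S, Finset.mul_sum, ← Finset.sum_sub_distrib, Finset.mul_sum]
      exact (Finset.abs_sum_le_sum_abs _ _).trans (Finset.sum_le_sum fun i _ => hq _)
    rw [hTt, hStr, ← sub_one_mul, abs_mul, abs_of_pos hd] at this
    exact le_of_mul_le_mul_right this hd
  have hc2 : 1 / 2 ≤ c := by
    have := (abs_le.1 hcc).1; linarith
  have hSv : 0 ≤ v ⬝ᵥ S *ᵥ v := by rw [← hBv]; exact dot_self_nonneg _
  have f1 : c * |v ⬝ᵥ (T - S) *ᵥ v| ≤ 16 * g * (v ⬝ᵥ S *ᵥ v) := by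
    rw [show c * |v ⬝ᵥ (T - S) *ᵥ v| = |c * (v ⬝ᵥ (T - S) *ᵥ v)| by rw [abs_mul, abs_of_pos hc0]]
    have : c * (v ⬝ᵥ (T - S) *ᵥ v) = (c * (v ⬝ᵥ T *ᵥ v) - v ⬝ᵥ S *ᵥ v) - (c - 1) * (v ⬝ᵥ S *ᵥ v) := by
      rw [sub_mulVec, dotProduct_sub]; ring
    rw [this]
    refine (abs_sub _ _).trans ?_
    rw [abs_mul, abs_of_nonneg hSv]
    have := hq v
    have := mul_le_mul_of_nonneg_right hcc hSv
    linarith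
  have f2 : 1/2 * |v ⬝ᵥ (T - S) *ᵥ v| ≤ c * |v ⬝ᵥ (T - S) *ᵥ v| := by gcongr
  have f3 : 16 * g * (v ⬝ᵥ S *ᵥ v) ≤ 16 * g * (11 / 10 * (v ⬝ᵥ v)) := by
    have := h2 v; gcongr
  have f4 : 0 ≤ e * (v ⬝ᵥ v) := mul_nonneg he0 (dot_self_nonneg v)
  rw [hg] at f1 f3
  nlinarith

end D2
end TY

open MeasureTheory ProbabilityTheory Filter Matrix
set_option linter.unusedSectionVars false

namespace TY
section D3
variable {m : Type*} [Fintype m] [DecidableEq m] {ι : Type*} [Fintype ι] [DecidableEq ι]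

lemma quad_pow4 (M : Matrix m m ℝ) (hM : Mᵀ = M) (v : m → ℝ) :
    (v ⬝ᵥ M *ᵥ v) ^ 4 ≤ fro (M * M) * (v ⬝ᵥ v) ^ 4 := by
  have h1 := sq_dot_le v (M *ᵥ v)
  have h2 : (M *ᵥ v) ⬝ᵥ (M *ᵥ v) = v ⬝ᵥ (M * M) *ᵥ v := by
    rw [← mulVec_mulVec, dot_comm_sym M hM v]
  have h3 := sq_dot_le v ((M * M) *ᵥ v)
  have h4 := fro_mulVec (M * M) v
  have h5 := dot_self_nonneg v
  have h6 := dot_self_nonneg (M *ᵥ v)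
  calc (v ⬝ᵥ M *ᵥ v) ^ 4 = ((v ⬝ᵥ M *ᵥ v) ^ 2)^2 := by ring
    _ ≤ ((v ⬝ᵥ v) * ((M *ᵥ v) ⬝ᵥ (M *ᵥ v)))^2 := by gcongr
    _ = (v ⬝ᵥ v)^2 * (v ⬝ᵥ (M * M) *ᵥ v)^2 := by rw [h2]; ring
    _ ≤ (v ⬝ᵥ v)^2 * ((v ⬝ᵥ v) * (fro (M * M) * (v ⬝ᵥ v))) := by
        gcongr; exact h3.trans (by gcongr)
    _ = _ := by ring

lemma quad_le_of_fro4 (M : Matrix m m ℝ) (hM : Mᵀ = M) (h : ℝ) (hh : 0 ≤ h)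
    (hf : fro (M * M) ≤ h ^ 4) (v : m → ℝ) : |v ⬝ᵥ M *ᵥ v| ≤ h * (v ⬝ᵥ v) := by
  have h1 := quad_pow4 M hM v
  have h5 := dot_self_nonneg v
  have : |v ⬝ᵥ M *ᵥ v| ^ 4 ≤ (h * (v ⬝ᵥ v)) ^ 4 := by
    rw [← abs_pow, abs_of_nonneg (by positivity), mul_pow]
    exact h1.trans (by gcongr)
  exact le_of_pow_le_pow_left₀ (by norm_num) (by positivity) this

/-- off diagonal Gram kernel -/
noncomputable def Hm (U : ι → m → ℝ) : Matrix ι ι ℝ := fun i j =>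
  if i = j then 0 else ((U i ⬝ᵥ U j) ^ 2 - 1 / Fintype.card m) / Fintype.card ι

lemma Hm_t (U : ι → m → ℝ) : (Hm U)ᵀ = Hm U := by
  ext i j
  simp only [Hm, transpose_apply, eq_comm (a := j), dotProduct_comm (U j)]

noncomputable def Qm (u : m → ℝ) : Matrix m m ℝ := vecMulVec u u - (1 / (Fintype.card m : ℝ)) • 1

lemma Qm_t (u : m → ℝ) : (Qm u)ᵀ = Qm u := by
  simp [Qm, Matrix.transpose_vecMulVec]

lemma trace_mul_Qm (C : Matrix m m ℝ) (u : m → ℝ) :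
    (C * Qm u).trace = u ⬝ᵥ C *ᵥ u - C.trace / Fintype.card m := by
  rw [Qm, Matrix.mul_sub, trace_sub, trace_mul_vecMulVec, Matrix.mul_smul, Matrix.mul_one, trace_smul]
  simp; ring

lemma trace_Qm_Qm [Nonempty m] (u v : m → ℝ) (hu : u ⬝ᵥ u = 1) (hv : v ⬝ᵥ v = 1) :
    (Qm u * Qm v).trace = (u ⬝ᵥ v) ^ 2 - 1 / Fintype.card m := by
  have hd : (Fintype.card m : ℝ) ≠ 0 := by exact_mod_cast Fintype.card_ne_zero
  rw [trace_mul_Qm]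
  have : (Qm u).trace = 0 := by
    rw [Qm, trace_sub, trace_smul, trace_one, Matrix.trace_vecMulVec, hu]; simp [hd]
  rw [this, Qm, sub_mulVec, dotProduct_sub, quad_vecMulVec, smul_mulVec, one_mulVec, dotProduct_smul, hv]
  simp

lemma fro_sumQ [Nonempty m] [Nonempty ι] (U : ι → m → ℝ) (hU : ∀ j, U j ⬝ᵥ U j = 1) (h : ℝ) (hh : 0 ≤ h)
    (hf : fro (Hm U * Hm U) ≤ h ^ 4) (x : ι → ℝ) :
    fro (∑ j, x j • Qm (U j)) ≤ (1 + Fintype.card ι * h) * (x ⬝ᵥ x) := by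
  have hn : (0 : ℝ) < Fintype.card ι := by exact_mod_cast Fintype.card_pos
  have hd : (0 : ℝ) < Fintype.card m := by exact_mod_cast Fintype.card_pos
  have hb := (abs_le.1 (quad_le_of_fro4 (Hm U) (Hm_t U) h hh hf x)).2
  have ht : (∑ j, x j • Qm (U j))ᵀ = ∑ j, x j • Qm (U j) := by
    simp [Matrix.transpose_sum, Qm_t]
  have e1 : fro (∑ j, x j • Qm (U j)) = ∑ i, ∑ j, x i * (x j * ((U i ⬝ᵥ U j) ^ 2 - 1 / Fintype.card m)) := by
    rw [fro_eq_trace _ ht]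
    simp only [Matrix.sum_mul, Matrix.mul_sum, Matrix.smul_mul, Matrix.mul_smul, trace_sum, trace_smul,
      trace_Qm_Qm _ _ (hU _) (hU _), smul_eq_mul]
    rw [Finset.sum_comm]
    refine Finset.sum_congr rfl fun i _ => ?_
    rw [Finset.mul_sum]
    refine Finset.sum_congr rfl fun j _ => ?_
    rw [dotProduct_comm (U j)]; ring
  have e2 : x ⬝ᵥ (Hm U) *ᵥ x = ∑ i, ∑ j, x i * (x j * Hm U i j) := by
    simp only [dotProduct, mulVec, Finset.mul_sum]
    refine Finset.sum_congr rfl fun i _ => Finset.sum_congr rfl fun j _ => ?_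
    ring
  have e3 : fro (∑ j, x j • Qm (U j)) = Fintype.card ι * (x ⬝ᵥ (Hm U) *ᵥ x) + (1 - 1 / Fintype.card m) * (x ⬝ᵥ x) := by
    rw [e1, e2, dotProduct, Finset.mul_sum, Finset.mul_sum, ← Finset.sum_add_distrib]
    refine Finset.sum_congr rfl fun i _ => ?_
    rw [Finset.mul_sum]
    have : (1 - 1 / (Fintype.card m:ℝ)) * (x i * x i) = ∑ j, if i = j then (1 - 1 / (Fintype.card m:ℝ)) * (x i * x j) else 0 := by
      simp
    rw [this, ← Finset.sum_add_distrib]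
    refine Finset.sum_congr rfl fun j _ => ?_
    by_cases hij : i = j
    · subst hij; simp [Hm, hU]; ring
    · simp only [Hm, hij, if_false]; field_simp; ring
  rw [e3]
  have := dot_self_nonneg x
  have h3 : 0 ≤ 1 / (Fintype.card m : ℝ) := by positivity
  nlinarith [mul_le_mul_of_nonneg_left hb hn.le, mul_nonneg h3 this]

lemma dualQ [Nonempty m] [Nonempty ι] (U : ι → m → ℝ) (hU : ∀ j, U j ⬝ᵥ U j = 1) (h : ℝ) (hh : 0 ≤ h)
    (hf : fro (Hm U * Hm U) ≤ h ^ 4) (C : Matrix m m ℝ) :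
    ∑ j, (U j ⬝ᵥ C *ᵥ U j - C.trace / Fintype.card m) ^ 2 ≤ (1 + Fintype.card ι * h) * fro C := by
  set z : ι → ℝ := fun j => U j ⬝ᵥ C *ᵥ U j - C.trace / Fintype.card m with hz
  have h1 := fro_sumQ U hU h hh hf z
  have h2 := trace_mul_sq_le C (∑ j, z j • Qm (U j))
  have h3 : (C * ∑ j, z j • Qm (U j)).trace = z ⬝ᵥ z := by
    simp only [Matrix.mul_sum, Matrix.mul_smul, trace_sum, trace_smul, trace_mul_Qm, smul_eq_mul]
    rfl
  have h4 : ∑ j, (U j ⬝ᵥ C *ᵥ U j - C.trace / Fintype.card m) ^ 2 = z ⬝ᵥ z := by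
    simp [dotProduct, sq, hz]
  rw [h4]; rw [h3] at h2
  have h5 := dot_self_nonneg z
  have h6 := fro_nonneg C
  rcases h5.lt_or_eq with h7 | h7
  · have : (z ⬝ᵥ z) * (z ⬝ᵥ z) ≤ ((1 + Fintype.card ι * h) * fro C) * (z ⬝ᵥ z) := by
      nlinarith [mul_le_mul_of_nonneg_left h1 h6]
    exact le_of_mul_le_mul_right this h7
  · rw [← h7]; positivity

lemma detFull [Nonempty m] [Nonempty ι] (U : ι → m → ℝ) (δ : ℝ)
    (hδn : δ = Fintype.card m / Fintype.card ι) (hU : ∀ j, U j ⬝ᵥ U j = 1)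
    (S T : Matrix m m ℝ) (hS : S = δ • ∑ j, vecMulVec (U j) (U j))
    (h1 : ∀ v, 9 / 10 * (v ⬝ᵥ v) ≤ v ⬝ᵥ S *ᵥ v)
    (h2 : ∀ v, v ⬝ᵥ S *ᵥ v ≤ 11 / 10 * (v ⬝ᵥ v))
    (hT : T.PosDef) (hTt : T.trace = Fintype.card m)
    (hTe : T = δ • ∑ j, (U j ⬝ᵥ T⁻¹ *ᵥ U j)⁻¹ • vecMulVec (U j) (U j))
    (h : ℝ) (hh : 0 ≤ h) (hf : fro (Hm U * Hm U) ≤ h ^ 4)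
    (hθ : δ + Fintype.card m * h ≤ 1 / 5)
    (L : ℝ) (hL : ∑ j, (U j ⬝ᵥ S⁻¹ *ᵥ U j - 1) ^ 2 ≤ L)
    (e : ℝ) (he0 : 0 ≤ e) (he1 : e ≤ 9 / 160)
    (he : 3 * δ * ((δ + Fintype.card m * h) * L + L ^ 2 / Fintype.card ι) ≤ e ^ 2) (v : m → ℝ) :
    |v ⬝ᵥ (T - S) *ᵥ v| ≤ 40 * e * (v ⬝ᵥ v) := by
  have hn : (0 : ℝ) < Fintype.card ι := by exact_mod_cast Fintype.card_pos
  have hd : (0 : ℝ) < Fintype.card m := by exact_mod_cast Fintype.card_pos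
  have hδ : 0 < δ := by rw [hδn]; positivity
  have hδc : δ * Fintype.card ι = Fintype.card m := by rw [hδn]; field_simp
  have hθ' : δ * (1 + Fintype.card ι * h) = δ + Fintype.card m * h := by rw [← hδc]; ring
  refine detT U δ hδ hδc hU S T hS h1 h2 hT hTt hTe ?_ e he0 he1 ?_ v
  · intro C _
    have := dualQ U hU h hh hf C
    calc _ ≤ δ * ((1 + Fintype.card ι * h) * fro C) := by gcongr
      _ = (δ + Fintype.card m * h) * fro C := by rw [← hθ']; ring
      _ ≤ _ := by have := fro_nonneg C; gcongr
  · refine le_trans ?_ he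
    have hSt : Sᵀ = S := by
      have := sumVV_t δ (fun _ => 1) U
      simp only [one_smul] at this; rw [hS]; exact this
    have hSp : S.PosDef := posDef_of_quad S hSt (9/10) (by norm_num) h1
    have hSd : IsUnit S.det := (Matrix.isUnit_iff_isUnit_det _).1 hSp.isUnit
    set p : ι → ℝ := fun j => U j ⬝ᵥ S⁻¹ *ᵥ U j with hp
    have hp1 : ∀ j, 10 / 11 ≤ p j := by
      intro j
      obtain ⟨B, K, hB, hK, hBB, hBK, hKB⟩ := sqrt_ex S hSp
      have hSinv : S⁻¹ = K * K := by
        apply Matrix.inv_eq_right_inv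
        rw [← hBB, Matrix.mul_assoc, ← Matrix.mul_assoc B K K, hBK, Matrix.one_mul, hBK]
      have := h2 (K *ᵥ U j)
      rw [← hBB, ← mulVec_mulVec, dot_comm_sym B hB, mulVec_mulVec, hBK, one_mulVec, hU] at this
      rw [hp]; simp only
      rw [hSinv, ← mulVec_mulVec, dot_comm_sym K hK]
      linarith
    have hps : ∑ j, (p j - 1) = 0 := by
      have := quad_sum' S⁻¹ δ U
      rw [← hS, Matrix.nonsing_inv_mul _ hSd, trace_one, ← hδc] at this
      rw [Finset.sum_sub_distrib]
      simp only [Finset.sum_const, Finset.card_univ, nsmul_eq_mul, mul_one]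
      have := mul_left_cancel₀ hδ.ne' this
      rw [this, hp, sub_self]
    set x : ι → ℝ := fun j => (p j)⁻¹ - 1 with hx
    have hpi : ∀ j, (p j)⁻¹ ≤ 11 / 10 := by
      intro j; rw [inv_le_comm₀ (by linarith [hp1 j]) (by norm_num)]; linarith [hp1 j]
    have hpi0 : ∀ j, 0 < (p j)⁻¹ := by
      intro j; have := hp1 j; have : 0 < p j := by linarith
      positivity
    have hpp : ∀ j, p j * (p j)⁻¹ = 1 := by
      intro j; have := hp1 j; exact mul_inv_cancel₀ (by linarith)
    have hL0 : 0 ≤ L := le_trans (Finset.sum_nonneg fun _ _ => sq_nonneg _) hL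
    have hxx : x ⬝ᵥ x ≤ 121 / 100 * L := by
      refine le_trans ?_ (mul_le_mul_of_nonneg_left hL (by norm_num))
      rw [Finset.mul_sum]
      refine Finset.sum_le_sum fun j _ => ?_
      have e : x j = - ((p j)⁻¹ * (p j - 1)) := by rw [hx]; simp only; linarith [hpp j]
      rw [e]
      have : ((p j)⁻¹)^2 ≤ 121/100 := by nlinarith [hpi j, hpi0 j]
      calc _ = ((p j)⁻¹)^2 * (p j - 1)^2 := by ring
        _ ≤ _ := by gcongr
    have hsx : |∑ j, x j| ≤ 11 / 10 * L := by
      have e : ∑ j, x j = ∑ j, (p j)⁻¹ * (p j - 1) ^ 2 := by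
        have : ∀ j, (p j)⁻¹ * (p j - 1) ^ 2 = x j + (p j - 1) := by
          intro j; rw [hx]; simp only
          have := hpp j
          linear_combination (p j - 2) * this
        simp only [this, Finset.sum_add_distrib, hps, add_zero]
      rw [e, abs_of_nonneg (Finset.sum_nonneg fun j _ => mul_nonneg (hpi0 j).le (sq_nonneg _))]
      refine le_trans ?_ (mul_le_mul_of_nonneg_left hL (by norm_num))
      rw [Finset.mul_sum]
      exact Finset.sum_le_sum fun j _ => mul_le_mul_of_nonneg_right (hpi j) (sq_nonneg _)
    have hE : δ • ∑ j, x j • vecMulVec (U j) (U j) =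
        δ • ∑ j, x j • Qm (U j) + (δ / Fintype.card m * ∑ j, x j) • (1 : Matrix m m ℝ) := by
      simp only [Qm, smul_sub, Finset.sum_sub_distrib, smul_smul, ← Finset.sum_smul, ← Finset.sum_mul]
      rw [show δ * ((∑ j, x j) * (1 / (Fintype.card m:ℝ))) = δ / Fintype.card m * ∑ j, x j by ring]
      abel
    change fro (δ • ∑ j, x j • vecMulVec (U j) (U j)) ≤ _
    rw [hE]
    refine (fro_add_le _ _).trans ?_
    rw [fro_smul, fro_smul, fro_one]
    have f1 := fro_sumQ U hU h hh hf x
    have f2 : (∑ j, x j)^2 ≤ (11 / 10 * L)^2 := by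
      rw [← sq_abs]; gcongr
    have g1 : 2 * (δ^2 * fro (∑ j, x j • Qm (U j))) ≤ 2 * (δ^2 * ((1 + Fintype.card ι * h) * (121 / 100 * L))) := by
      have : (1 + Fintype.card ι * h) * (x ⬝ᵥ x) ≤ (1 + Fintype.card ι * h) * (121 / 100 * L) := by gcongr
      gcongr; linarith
    have g2 : 2 * ((δ / Fintype.card m * ∑ j, x j)^2 * Fintype.card m) ≤ 2 * (δ * (11 / 10 * L)^2 / Fintype.card ι) := by
      calc _ = 2 * (δ^2 * (∑ j, x j)^2 / Fintype.card m) := by field_simp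
        _ ≤ 2 * (δ^2 * (11 / 10 * L)^2 / Fintype.card m) := by gcongr
        _ = _ := by rw [← hδc]; field_simp
    have g3 : 2 * (δ^2 * ((1 + Fintype.card ι * h) * (121 / 100 * L))) = 242/100 * (δ * ((δ + Fintype.card m * h) * L)) := by
      rw [← hθ']; ring
    have g4 : 0 ≤ δ * ((δ + Fintype.card m * h) * L) := by positivity
    have g5 : 0 ≤ δ * (L^2 / Fintype.card ι) := by positivity
    have g6 : 2 * (δ * (11 / 10 * L)^2 / Fintype.card ι) = 242/100 * (δ * (L^2 / Fintype.card ι)) := by ring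
    nlinarith

end D3
end TY

open MeasureTheory ProbabilityTheory Filter Matrix
set_option linter.unusedSectionVars false

namespace TY
section D4
variable {m : Type*} [Fintype m] [DecidableEq m] {ι : Type*} [Fintype ι] [DecidableEq ι]

/-- leave one out matrix -/
noncomputable def Sm (U : ι → m → ℝ) (j : ι) : Matrix m m ℝ :=
  ((Fintype.card m : ℝ) / Fintype.card ι) • ∑ i, if i = j then 0 else vecMulVec (U i) (U i)

open Classical in
noncomputable def Nj (U : ι → m → ℝ) (j : ι) : ℝ :=
  if fro ((Sm U j)⁻¹ - 1) ≤ 4 * fro (Sm U j - 1) then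
    (U j ⬝ᵥ ((Sm U j)⁻¹ - 1) *ᵥ U j - ((Sm U j)⁻¹ - 1).trace / Fintype.card m) ^ 2 else 0

lemma Sm_eq (U : ι → m → ℝ) (j : ι) :
    ((Fintype.card m : ℝ) / Fintype.card ι) • ∑ i, vecMulVec (U i) (U i) =
      Sm U j + ((Fintype.card m : ℝ) / Fintype.card ι) • vecMulVec (U j) (U j) := by
  rw [Sm, ← smul_add]
  congr 1
  have : vecMulVec (U j) (U j) = ∑ i, if i = j then vecMulVec (U i) (U i) else 0 := by simp
  rw [this, ← Finset.sum_add_distrib]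
  refine Finset.sum_congr rfl fun i _ => ?_
  split_ifs <;> simp

lemma loo [Nonempty m] [Nonempty ι] (U : ι → m → ℝ) (δ : ℝ)
    (hδn : δ = Fintype.card m / Fintype.card ι) (hδ1 : δ ≤ 1 / 10) (hU : ∀ j, U j ⬝ᵥ U j = 1)
    (S : Matrix m m ℝ) (hS : S = δ • ∑ j, vecMulVec (U j) (U j))
    (h1 : ∀ v, 9 / 10 * (v ⬝ᵥ v) ≤ v ⬝ᵥ S *ᵥ v) :
    ∑ j, (U j ⬝ᵥ S⁻¹ *ᵥ U j - 1) ^ 2 ≤ 2 * ∑ j, Nj U j + 8 / Fintype.card ι := by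
  have hn : (0 : ℝ) < Fintype.card ι := by exact_mod_cast Fintype.card_pos
  have hd : (0 : ℝ) < Fintype.card m := by exact_mod_cast Fintype.card_pos
  have hδ : 0 < δ := by rw [hδn]; positivity
  have hδc : δ * Fintype.card ι = Fintype.card m := by rw [hδn]; field_simp
  have hSt : Sᵀ = S := by
    have := sumVV_t δ (fun _ => 1) U
    simp only [one_smul] at this; rw [hS]; exact this
  have hSp : S.PosDef := posDef_of_quad S hSt (9/10) (by norm_num) h1
  have hSd : IsUnit S.det := (Matrix.isUnit_iff_isUnit_det _).1 hSp.isUnit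
  set τ := S⁻¹.trace / Fintype.card m with hτ
  have hτ0 : 0 ≤ τ := by
    rw [hτ]; exact div_nonneg hSp.inv.posSemidef.trace_nonneg hd.le
  set ps := τ / (1 + δ * τ) with hps
  set p : ι → ℝ := fun j => U j ⬝ᵥ S⁻¹ *ᵥ U j with hp
  have hsum : ∑ j, (p j - 1) = 0 := by
    have := quad_sum' S⁻¹ δ U
    rw [← hS, Matrix.nonsing_inv_mul _ hSd, trace_one, ← hδc] at this
    rw [Finset.sum_sub_distrib]
    simp only [Finset.sum_const, Finset.card_univ, nsmul_eq_mul, mul_one]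
    have := mul_left_cancel₀ hδ.ne' this
    rw [this, hp, sub_self]
  have step1 : ∑ j, (p j - 1) ^ 2 ≤ ∑ j, (p j - ps) ^ 2 := by
    have : ∑ j, (p j - ps) ^ 2 = ∑ j, (p j - 1) ^ 2 + 2 * (1 - ps) * ∑ j, (p j - 1)
        + Fintype.card ι * (1 - ps)^2 := by
      rw [← nsmul_eq_mul, ← Finset.card_univ, ← Finset.sum_const, Finset.mul_sum,
        ← Finset.sum_add_distrib, ← Finset.sum_add_distrib]
      refine Finset.sum_congr rfl fun j _ => ?_
      ring
    rw [this, hsum]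
    have : 0 ≤ Fintype.card ι * (1 - ps)^2 := by positivity
    linarith
  have step2 : ∀ j, (p j - ps) ^ 2 ≤ 2 * Nj U j + 8 / (Fintype.card ι : ℝ) ^ 2 := by
    intro j
    set M := Sm U j with hM
    have hSM : S = M + δ • vecMulVec (U j) (U j) := by
      rw [hS, hδn]; exact Sm_eq U j
    have hMt : Mᵀ = M := by
      have : M = S - δ • vecMulVec (U j) (U j) := by rw [hSM]; simp
      rw [this, transpose_sub, hSt]; simp [Matrix.transpose_vecMulVec]
    have hMq : ∀ v, 8 / 10 * (v ⬝ᵥ v) ≤ v ⬝ᵥ M *ᵥ v := by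
      intro v
      have a1 := h1 v
      rw [hSM, add_mulVec, dotProduct_add, smul_mulVec, dotProduct_smul, quad_vecMulVec, smul_eq_mul] at a1
      have a2 := sq_dot_le (U j) v
      rw [hU, one_mul] at a2
      have := mul_le_mul_of_nonneg_left a2 hδ.le
      have := mul_le_mul_of_nonneg_right hδ1 (dot_self_nonneg v)
      linarith
    have hMp : M.PosDef := posDef_of_quad M hMt (8/10) (by norm_num) hMq
    have hMd : IsUnit M.det := (Matrix.isUnit_iff_isUnit_det _).1 hMp.isUnit
    have hMi : ∀ v, (M⁻¹ *ᵥ v) ⬝ᵥ (M⁻¹ *ᵥ v) ≤ 100 / 64 * (v ⬝ᵥ v) := by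
      intro v
      set w := M⁻¹ *ᵥ v with hw
      have e1 : M *ᵥ w = v := by rw [hw, mulVec_mulVec, Matrix.mul_nonsing_inv _ hMd, one_mulVec]
      have e2 := hMq w
      rw [e1] at e2
      have e3 := sq_dot_le w v
      have e4 := dot_self_nonneg w
      have e5 := dot_self_nonneg v
      rcases e4.lt_or_eq with h | h
      · have : (8 / 10 * (w ⬝ᵥ w))^2 ≤ (w ⬝ᵥ v)^2 := by gcongr
        have : (w ⬝ᵥ w) * (64 / 100 * (w ⬝ᵥ w)) ≤ (w ⬝ᵥ w) * (v ⬝ᵥ v) := by nlinarith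
        have := le_of_mul_le_mul_left this h
        linarith
      · rw [← h]; positivity
    have hcond : fro (M⁻¹ - 1) ≤ 4 * fro (M - 1) := by
      have e : M⁻¹ - 1 = M⁻¹ * ((-1 : ℝ) • (M - 1)) := by
        rw [Matrix.mul_smul, Matrix.mul_sub, Matrix.nonsing_inv_mul _ hMd, Matrix.mul_one]; simp
      rw [e]
      refine (fro_mul_left _ _ hMi).trans ?_
      rw [fro_smul]
      have := fro_nonneg (M - 1)
      linarith
    set x := M⁻¹ *ᵥ U j with hx
    set q := U j ⬝ᵥ x with hq
    have hMx : M *ᵥ x = U j := by rw [hx, mulVec_mulVec, Matrix.mul_nonsing_inv _ hMd, one_mulVec]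
    have hq0 : 0 ≤ q := by
      have := hMp.inv.posSemidef.dotProduct_mulVec_nonneg (U j)
      simpa using this
    have hMit : (M⁻¹)ᵀ = M⁻¹ := by rw [transpose_nonsing_inv, hMt]
    have hden : 0 < 1 + δ * q := by positivity
    have hinv : S⁻¹ = M⁻¹ - (δ / (1 + δ * q)) • vecMulVec x x := by
      apply Matrix.inv_eq_right_inv
      have a1 : S * M⁻¹ = 1 + δ • vecMulVec (U j) x := by
        rw [hSM, Matrix.add_mul, Matrix.mul_nonsing_inv _ hMd, Matrix.smul_mul, Matrix.vecMulVec_mul,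
          ← Matrix.mulVec_transpose, hMit]
      have a2 : S *ᵥ x = (1 + δ * q) • U j := by
        rw [hSM, add_mulVec, hMx, smul_mulVec, Matrix.vecMulVec_mulVec, add_smul, one_smul, mul_smul]
        simp [hq]
      rw [Matrix.mul_sub, a1, Matrix.mul_smul, Matrix.mul_vecMulVec, a2, smul_vecMulVec, smul_smul,
        div_mul_cancel₀ _ hden.ne']
      simp
    have hpj : p j = q / (1 + δ * q) := by
      rw [hp]; simp only
      rw [hinv, sub_mulVec, dotProduct_sub, smul_mulVec, dotProduct_smul, quad_vecMulVec,
        dotProduct_comm x, smul_eq_mul]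
      change q - _ * q^2 = _
      field_simp; ring
    have htr : |M⁻¹.trace / Fintype.card m - τ| ≤ 2 / Fintype.card ι := by
      have b1 : M⁻¹.trace - S⁻¹.trace = (δ / (1 + δ * q)) * (x ⬝ᵥ x) := by
        rw [hinv, trace_sub, trace_smul, Matrix.trace_vecMulVec, smul_eq_mul]; ring
      have b2 := hMi (U j)
      rw [hU] at b2
      have b3 : δ / (1 + δ * q) ≤ δ := div_le_self hδ.le (by nlinarith [mul_nonneg hδ.le hq0])
      have b4 := dot_self_nonneg x
      have b5 : (δ / (1 + δ * q)) * (x ⬝ᵥ x) ≤ δ * 2 := by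
        apply mul_le_mul b3 _ b4 hδ.le; linarith
      rw [hτ, ← sub_div, b1, abs_of_nonneg (by positivity), div_le_div_iff₀ hd hn, ← hδc]
      nlinarith
    have hNj : Nj U j = (q - M⁻¹.trace / Fintype.card m) ^ 2 := by
      unfold Nj
      rw [if_pos hcond, ← hM, sub_mulVec, one_mulVec, dotProduct_sub, hU, trace_sub, trace_one]
      congr 1
      change q - 1 - _ = _
      field_simp; ring
    rw [hNj, hpj, hps]
    have hLip : |q / (1 + δ * q) - τ / (1 + δ * τ)| ≤ |q - τ| := by
      have hden2 : 0 < 1 + δ * τ := by positivity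
      have : q / (1 + δ * q) - τ / (1 + δ * τ) = (q - τ) / ((1 + δ * q) * (1 + δ * τ)) := by
        field_simp; ring
      rw [this, abs_div, abs_of_pos (mul_pos hden hden2)]
      apply div_le_self (abs_nonneg _)
      nlinarith [mul_nonneg hδ.le hq0, mul_nonneg hδ.le hτ0, mul_nonneg (mul_nonneg hδ.le hq0) (mul_nonneg hδ.le hτ0)]
    have c1 := abs_nonneg (q / (1 + δ * q) - τ / (1 + δ * τ))
    rw [← sq_abs]
    calc _ ≤ |q - τ|^2 := by gcongr
      _ = ((q - M⁻¹.trace / Fintype.card m) + (M⁻¹.trace / Fintype.card m - τ))^2 := by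
          rw [sq_abs]; ring
      _ ≤ 2 * (q - M⁻¹.trace / Fintype.card m)^2 + 2 * (M⁻¹.trace / Fintype.card m - τ)^2 := by
          nlinarith [sq_nonneg ((q - M⁻¹.trace / Fintype.card m) - (M⁻¹.trace / Fintype.card m - τ))]
      _ ≤ 2 * (q - M⁻¹.trace / Fintype.card m)^2 + 2 * (2 / Fintype.card ι)^2 := by
          rw [← sq_abs (M⁻¹.trace / Fintype.card m - τ)]; gcongr
      _ = _ := by ring
  refine step1.trans ((Finset.sum_le_sum fun j _ => step2 j).trans ?_)
  rw [Finset.sum_add_distrib, ← Finset.mul_sum]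
  simp only [Finset.sum_const, Finset.card_univ, nsmul_eq_mul]
  apply le_of_eq; field_simp

end D4
end TY

open MeasureTheory ProbabilityTheory Filter Matrix
set_option linter.unusedSectionVars false

namespace TY
section D5

lemma specNorm_le {d : ℕ} (A : Matrix (Fin d) (Fin d) ℝ) (b : ℝ) (hb : 0 ≤ b)
    (h : ∀ v, |v ⬝ᵥ A *ᵥ v| ≤ b * (v ⬝ᵥ v)) : specNorm A ≤ b := by
  unfold specNorm
  apply Real.iSup_le _ hb
  intro i
  unfold sortedEigs
  split_ifs with hA
  · obtain ⟨e, h1, h2, -, -⟩ := spec A hA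
    set k := Tuple.sort hA.eigenvalues i
    have := h (e k)
    rw [h1, dotProduct_smul, h2] at this
    simpa using this
  · simpa using hb

variable {m : Type*} [Fintype m] [DecidableEq m] {ι : Type*} [Fintype ι] [DecidableEq ι]

/-- unit vector in the direction of `x`; at `0` some fixed unit vector -/
noncomputable def un (x : m → ℝ) : m → ℝ :=
  if x ⬝ᵥ x = 0 then fun _ => (√(Fintype.card m))⁻¹ else (√(x ⬝ᵥ x))⁻¹ • x

lemma un_eq (x : m → ℝ) : √(x ⬝ᵥ x) • un x = x := by
  unfold un
  split_ifs with hx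
  · rw [hx]; simp [dotProduct_self_eq_zero.1 hx]
  · have : 0 < x ⬝ᵥ x := lt_of_le_of_ne (dot_self_nonneg x) (Ne.symm hx)
    rw [smul_smul, mul_inv_cancel₀ (Real.sqrt_pos.2 this).ne', one_smul]

lemma un_unit [Nonempty m] (x : m → ℝ) : un x ⬝ᵥ un x = 1 := by
  unfold un
  split_ifs with hx
  · have : (0 : ℝ) < Fintype.card m := by exact_mod_cast Fintype.card_pos
    simp [dotProduct, ← mul_inv, Real.mul_self_sqrt this.le]
  · have : 0 < x ⬝ᵥ x := lt_of_le_of_ne (dot_self_nonneg x) (Ne.symm hx)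
    rw [smul_dotProduct, dotProduct_smul, smul_eq_mul, smul_eq_mul, ← mul_assoc, ← mul_inv,
      Real.mul_self_sqrt this.le, inv_mul_cancel₀ this.ne']

lemma vmv_un (x : m → ℝ) : vecMulVec x x = (x ⬝ᵥ x) • vecMulVec (un x) (un x) := by
  conv_lhs => rw [← un_eq x]
  rw [smul_vecMulVec, vecMulVec_smul, smul_smul, Real.mul_self_sqrt (dot_self_nonneg x)]

lemma quad_un (A : Matrix m m ℝ) (x : m → ℝ) : x ⬝ᵥ A *ᵥ x = (x ⬝ᵥ x) * (un x ⬝ᵥ A *ᵥ un x) := by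
  conv_lhs => rw [← un_eq x]
  rw [mulVec_smul, smul_dotProduct, dotProduct_smul, smul_smul, smul_eq_mul, Real.mul_self_sqrt (dot_self_nonneg x)]

/-- the difference of sample covariance and its spatial-sign version -/
noncomputable def M1 (X : ι → m → ℝ) : Matrix m m ℝ :=
  (Fintype.card ι : ℝ)⁻¹ • ∑ j, (X j ⬝ᵥ X j - Fintype.card m) • vecMulVec (un (X j)) (un (X j))

lemma main_det {d n : ℕ} (hd : 0 < d) (hn : 0 < n) (X : Fin n → Fin d → ℝ) (hX : ∀ j, X j ≠ 0)
    (T : Matrix (Fin d) (Fin d) ℝ) (hT : IsTyler X T)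
    (κ κ' L : ℝ) (hκ : 0 ≤ κ) (hκ1 : κ ≤ 1 / 20) (hκ' : 0 ≤ κ') (hκ'1 : κ' ≤ 9 / 160)
    (hδ1 : (d : ℝ) / n ≤ 1 / 10)
    (hk1 : fro (M1 X * M1 X) ≤ κ ^ 4 * ((d : ℝ) / n) ^ 2)
    (hk2 : ∀ v, |v ⬝ᵥ ((n : ℝ)⁻¹ • ∑ j, vecMulVec (X j) (X j) - 1) *ᵥ v| ≤ 1 / 20 * (v ⬝ᵥ v))
    (hk3 : fro (Hm (fun j => un (X j)) * Hm (fun j => un (X j))) ≤ (κ / d) ^ 4)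
    (hk4 : 2 * ∑ j, Nj (fun j => un (X j)) j + 8 / n ≤ L)
    (hk5 : 3 * (((d : ℝ) / n + κ) * L + L ^ 2 / n) ≤ κ' ^ 2) :
    specNorm (Real.sqrt ((n : ℝ) / d) • (T - 1) -
               Real.sqrt ((n : ℝ) / d) •
                 ((n : ℝ)⁻¹ • ∑ j : Fin n, vecMulVec (X j) (X j) - 1)) ≤ 40 * κ' + κ := by
  have : Nonempty (Fin d) := ⟨⟨0, hd⟩⟩
  have : Nonempty (Fin n) := ⟨⟨0, hn⟩⟩
  have hd' : (0 : ℝ) < d := by exact_mod_cast hd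
  have hn' : (0 : ℝ) < n := by exact_mod_cast hn
  set U : Fin n → Fin d → ℝ := fun j => un (X j) with hU
  have hU1 : ∀ j, U j ⬝ᵥ U j = 1 := fun j => un_unit _
  have hXX : ∀ j, 0 < X j ⬝ᵥ X j := fun j =>
    lt_of_le_of_ne (dot_self_nonneg _) fun h => hX j (dotProduct_self_eq_zero.1 h.symm)
  set δ : ℝ := (d : ℝ) / n with hδ
  have hδ0 : 0 < δ := by positivity
  set S : Matrix (Fin d) (Fin d) ℝ := δ • ∑ j, vecMulVec (U j) (U j) with hS
  set S0 : Matrix (Fin d) (Fin d) ℝ := (n : ℝ)⁻¹ • ∑ j : Fin n, vecMulVec (X j) (X j) with hS0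
  have hM : S0 = S + M1 X := by
    rw [hS0, hS, M1, hδ, div_eq_inv_mul, mul_smul, Fintype.card_fin, Fintype.card_fin, ← smul_add]
    congr 1
    rw [Finset.smul_sum, ← Finset.sum_add_distrib]
    refine Finset.sum_congr rfl fun j _ => ?_
    rw [vmv_un, sub_smul]; simp [hU]
  have hMt : (M1 X)ᵀ = M1 X := sumVV_t _ _ _
  set r := √((n:ℝ)/d) with hr
  have hr2 : r ^ 2 = n / d := Real.sq_sqrt (by positivity)
  have hr0 : 0 < r := Real.sqrt_pos.2 (by positivity)
  have hrs : r * √δ = 1 := by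
    rw [hr, hδ, ← Real.sqrt_mul (by positivity)]
    have : (n:ℝ)/d * (d / n) = 1 := by field_simp
    rw [this, Real.sqrt_one]
  have hsδ : √δ ≤ 1 := Real.sqrt_le_one.2 (by linarith)
  have hsδ0 : 0 < √δ := Real.sqrt_pos.2 hδ0
  have hsδ2 : √δ ^ 2 = δ := Real.sq_sqrt hδ0.le
  have q1 : ∀ v, |v ⬝ᵥ (M1 X) *ᵥ v| ≤ κ * √δ * (v ⬝ᵥ v) := by
    intro v
    refine quad_le_of_fro4 _ hMt _ (by positivity) (hk1.trans_eq ?_) v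
    rw [mul_pow, show √δ ^ 4 = (√δ ^ 2) ^ 2 by ring, hsδ2]
  have q2 : ∀ v, |v ⬝ᵥ S *ᵥ v - v ⬝ᵥ v| ≤ 1 / 10 * (v ⬝ᵥ v) := by
    intro v
    have a1 := hk2 v
    rw [hM, sub_mulVec, add_mulVec, dotProduct_sub, dotProduct_add, one_mulVec] at a1
    have a2 := q1 v
    have a3 : κ * √δ * (v ⬝ᵥ v) ≤ 1/20 * (v ⬝ᵥ v) := by
      have := dot_self_nonneg v
      have : κ * √δ ≤ 1/20 * 1 := by gcongr
      gcongr; linarith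
    rw [abs_le] at *
    constructor <;> linarith [a1.1, a1.2, a2.1, a2.2]
  have h1 : ∀ v, 9 / 10 * (v ⬝ᵥ v) ≤ v ⬝ᵥ S *ᵥ v := fun v => by
    have := (abs_le.1 (q2 v)).1; linarith
  have h2 : ∀ v, v ⬝ᵥ S *ᵥ v ≤ 11 / 10 * (v ⬝ᵥ v) := fun v => by
    have := (abs_le.1 (q2 v)).2; linarith
  obtain ⟨hTp, hTt, hTe⟩ := hT
  have hTe' : T = δ • ∑ j, (U j ⬝ᵥ T⁻¹ *ᵥ U j)⁻¹ • vecMulVec (U j) (U j) := by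
    conv_lhs => rw [hTe]
    congr 1
    refine Finset.sum_congr rfl fun j _ => ?_
    rw [vmv_un, quad_un, smul_smul, mul_inv, mul_comm, ← mul_assoc, mul_inv_cancel₀ (hXX j).ne', one_mul]
  have hL := (loo U δ (by simp [hδ]) hδ1 hU1 S hS h1).trans (by simpa using hk4)
  have hh : (d:ℝ) * (κ / d) = κ := by field_simp
  have fin := detFull U δ (by simp [hδ]) hU1 S T hS h1 h2 hTp (by simpa using hTt) hTe' (κ / d) (by positivity)
    hk3 (by rw [Fintype.card_fin, hh]; linarith) L hL (κ' * √δ) (by positivity)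
    (by calc κ' * √δ ≤ 9/160 * 1 := by gcongr
          _ = _ := by norm_num)
    (by
      rw [Fintype.card_fin, Fintype.card_fin, hh, mul_pow, hsδ2]
      calc _ = (3 * ((δ + κ) * L + L ^ 2 / n)) * δ := by ring
        _ ≤ _ := by gcongr)
  apply specNorm_le _ _ (by positivity)
  intro v
  have e : r • (T - 1) - r • (S0 - 1) = r • ((T - S) - M1 X) := by
    rw [hM, ← smul_sub]; congr 1; abel
  rw [e, smul_mulVec, dotProduct_smul, sub_mulVec, dotProduct_sub, smul_eq_mul, abs_mul, abs_of_pos hr0]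
  have a1 := fin v
  have a2 := q1 v
  calc r * |v ⬝ᵥ (T - S) *ᵥ v - v ⬝ᵥ M1 X *ᵥ v| ≤ r * (40 * (κ' * √δ) * (v ⬝ᵥ v) + κ * √δ * (v ⬝ᵥ v)) := by
        gcongr; exact (abs_sub _ _).trans (add_le_add a1 a2)
    _ = (r * √δ) * ((40 * κ' + κ) * (v ⬝ᵥ v)) := by ring
    _ = _ := by rw [hrs, one_mul]

end D5
end TY

open MeasureTheory ProbabilityTheory Filter Matrix
set_option linter.unusedSectionVars false

namespace TY
section P1

lemma resample {ι E : Type*} [Fintype ι] [DecidableEq ι] [MeasurableSpace E] (μ : Measure E)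
    [IsProbabilityMeasure μ] (j : ι) :
    MeasurePreserving (fun p : (ι → E) × E => Function.update p.1 j p.2)
      ((Measure.pi fun _ : ι => μ).prod μ) (Measure.pi fun _ : ι => μ) := by
  have hm : Measurable (fun p : (ι → E) × E => Function.update p.1 j p.2) := by
    apply measurable_pi_lambda
    intro i
    by_cases h : i = j
    · subst h; simpa using measurable_snd
    · simp only [Function.update_of_ne h]; exact (measurable_pi_apply i).comp measurable_fst
  refine ⟨hm, ?_⟩
  symm
  apply Measure.pi_eq
  intro s hs
  rw [Measure.map_apply hm (MeasurableSet.univ_pi hs)]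
  have : (fun p : (ι → E) × E => Function.update p.1 j p.2) ⁻¹' (Set.univ.pi s) =
      (Set.univ.pi (Function.update s j Set.univ)) ×ˢ s j := by
    ext p
    simp only [Set.mem_preimage, Set.mem_univ_pi, Set.mem_prod]
    constructor
    · intro h
      refine ⟨fun i => ?_, by simpa using h j⟩
      by_cases hi : i = j
      · subst hi; simp
      · simpa [hi] using h i
    · rintro ⟨h1, h2⟩ i
      by_cases hi : i = j
      · subst hi; simpa using h2
      · simpa [hi] using h1 i
  rw [this, Measure.prod_prod, Measure.pi_pi]
  rw [← Finset.mul_prod_erase Finset.univ (fun i => μ (s i)) (Finset.mem_univ j),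
    ← Finset.mul_prod_erase Finset.univ (fun i => μ (Function.update s j Set.univ i)) (Finset.mem_univ j)]
  simp only [Function.update_self, measure_univ, one_mul]
  rw [mul_comm]
  congr 1
  refine Finset.prod_congr rfl fun i hi => ?_
  rw [Function.update_of_ne (Finset.ne_of_mem_erase hi)]

lemma integral_resample {ι E : Type*} [Fintype ι] [DecidableEq ι] [MeasurableSpace E] (μ : Measure E)
    [IsProbabilityMeasure μ] (j : ι) (F : (ι → E) → ℝ) (hF : Integrable F (Measure.pi fun _ : ι => μ)) :
    Integrable (fun x => ∫ y, F (Function.update x j y) ∂μ) (Measure.pi fun _ : ι => μ) ∧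
    ∫ x, F x ∂(Measure.pi fun _ : ι => μ) =
      ∫ x, ∫ y, F (Function.update x j y) ∂μ ∂(Measure.pi fun _ : ι => μ) := by
  have h := resample μ j
  have hi := h.integrable_comp_of_integrable hF
  refine ⟨hi.integral_prod_left, ?_⟩
  have e := integral_map (f := F) h.measurable.aemeasurable (by rw [h.map_eq]; exact hF.1)
  rw [h.map_eq] at e
  rw [e]
  exact integral_prod _ hi

variable {m : Type*} [Fintype m] [DecidableEq m]

variable (m) in
/-- standard Gaussian on `m → ℝ` -/
noncomputable abbrev gm : Measure (m → ℝ) := Measure.pi fun _ : m => gaussianReal 0 1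

lemma rot (b : OrthonormalBasis m ℝ (EuclideanSpace ℝ m)) :
    MeasurePreserving (fun x : m → ℝ => ∑ i, x i • (b i).ofLp) (gm m) (gm m) := by
  have h1 := stdGaussian_eq_map_pi_orthonormalBasis b
  rw [← map_pi_eq_stdGaussian] at h1
  have hm : Measurable (fun x : m → ℝ => ∑ i, x i • (b i).ofLp) := by fun_prop
  refine ⟨hm, ?_⟩
  have h2 := congrArg (Measure.map (fun z : EuclideanSpace ℝ m => z.ofLp)) h1
  rw [Measure.map_map (by fun_prop) (by fun_prop), Measure.map_map (by fun_prop) (by fun_prop)] at h2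
  have e1 : ((fun z : EuclideanSpace ℝ m => z.ofLp) ∘ (WithLp.toLp 2)) = (id : (m → ℝ) → (m → ℝ)) := rfl
  rw [e1, Measure.map_id] at h2
  rw [gm]
  conv_rhs => rw [h2]
  congr 1
  ext x i
  simp

lemma flip_mp (a : m) : MeasurePreserving (fun x : m → ℝ => fun i => if i = a then - x i else x i)
    (gm m) (gm m) := by
  have := measurePreserving_pi (fun _ : m => gaussianReal 0 1) (fun _ : m => gaussianReal 0 1)
    (f := fun i => if i = a then (fun s => - s) else id) (by
      intro i
      split_ifs
      · refine ⟨measurable_neg, ?_⟩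
        rw [gaussianReal_map_neg, neg_zero]
      · exact MeasurePreserving.id _)
  convert this using 2 with x
  ext i
  split_ifs <;> rfl

lemma perm_mp (σ : Equiv.Perm m) : MeasurePreserving (fun x : m → ℝ => x ∘ σ) (gm m) (gm m) := by
  have h := measurePreserving_piCongrLeft (fun _ : m => gaussianReal 0 1) σ⁻¹
  convert h using 1
  ext x i
  simp only [Function.comp, MeasurableEquiv.coe_piCongrLeft]
  have := Equiv.piCongrLeft_apply_apply (fun _ : m => ℝ) σ⁻¹ x (σ i)
  simpa using this.symm

lemma int_pow (k : ℕ) : Integrable (fun x : m → ℝ => (x ⬝ᵥ x) ^ k) (gm m) := by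
  have h0 : MemLp id ((2 * k : ℕ) : ENNReal) (stdGaussian (EuclideanSpace ℝ m)) :=
    IsGaussian.memLp_id _ _ (ENNReal.natCast_ne_top _)
  have h1 := h0.integrable_norm_pow'
  rw [← map_pi_eq_stdGaussian] at h1
  have h2 := (integrable_map_measure h1.1 (by fun_prop)).1 h1
  convert h2 using 1
  ext x
  simp only [id, Function.comp]
  rw [pow_mul, EuclideanSpace.real_norm_sq_eq]
  simp [dotProduct, sq]

lemma int_poly (f : (m → ℝ) → ℝ) (hf : Measurable f) (C : ℝ) (k : ℕ)
    (h : ∀ x, |f x| ≤ C * (1 + x ⬝ᵥ x) ^ k) : Integrable f (gm m) := by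
  have : Integrable (fun x : m → ℝ => C * (1 + x ⬝ᵥ x) ^ k) (gm m) := by
    apply Integrable.const_mul
    have : (fun x : m → ℝ => (1 + x ⬝ᵥ x) ^ k) = fun x : m → ℝ => ∑ i ∈ Finset.range (k + 1), (x ⬝ᵥ x) ^ (k - i) * (k.choose i : ℝ) := by
      ext x; rw [add_pow]; simp
    rw [this]
    exact integrable_finsetSum _ fun i _ => (int_pow _).mul_const _
  exact this.mono' hf.aestronglyMeasurable (by filter_upwards with x; exact h x)

lemma comb4 {ι : Type*} [Fintype ι] [DecidableEq ι] (f : ι → ι → ι → ι → ℝ)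
    (hiso : ∀ i j k l, i ≠ j → i ≠ k → i ≠ l → f i j k l = 0)
    (cyc : ∀ i j k l, f i j k l = f j k l i) (B1 B2 : ℝ) (hB1 : 0 ≤ B1) (hB2 : 0 ≤ B2)
    (h1 : ∀ i k, i ≠ k → f i i k k ≤ B2) (h2 : ∀ i j, i ≠ j → f i j i j ≤ B2)
    (h3 : ∀ i, f i i i i ≤ B1) :
    ∑ i, ∑ j, ∑ k, ∑ l, f i j k l ≤ 3 * (Fintype.card ι * B1 + (Fintype.card ι : ℝ) ^ 2 * B2) := by
  set b : ι → ι → ℝ := fun i k => if i = k then B1 else B2 with hb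
  have hb0 : ∀ i k, 0 ≤ b i k := by intro i k; simp only [hb]; split_ifs <;> assumption
  have g1 : ∀ i k, f i i k k ≤ b i k := by
    intro i k; simp only [hb]; split_ifs with h
    · subst h; exact h3 i
    · exact h1 i k h
  have g2 : ∀ i k, f i k i k ≤ b i k := by
    intro i k; simp only [hb]; split_ifs with h
    · subst h; exact h3 i
    · exact h2 i k h
  have g3 : ∀ i k, f i k k i ≤ b i k := by
    intro i k; rw [cyc, cyc, cyc]; exact g1 i k
  have key : ∀ i j k l, f i j k l ≤ (if i = j then (if k = l then b i k else 0) else 0) +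
      (if i = k then (if j = l then b i j else 0) else 0) +
      (if i = l then (if j = k then b i j else 0) else 0) := by
    intro i j k l
    have n1 : 0 ≤ (if i = j then (if k = l then b i k else 0) else 0) := by
      split_ifs <;> first | exact hb0 _ _ | exact le_rfl
    have n2 : 0 ≤ (if i = k then (if j = l then b i j else 0) else 0) := by
      split_ifs <;> first | exact hb0 _ _ | exact le_rfl
    have n3 : 0 ≤ (if i = l then (if j = k then b i j else 0) else 0) := by
      split_ifs <;> first | exact hb0 _ _ | exact le_rfl
    by_cases c1 : i = j ∧ k = l
    · obtain ⟨rfl, rfl⟩ := c1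
      rw [if_pos rfl, if_pos rfl] at n1 ⊢
      linarith [g1 i k]
    by_cases c2 : i = k ∧ j = l
    · obtain ⟨rfl, rfl⟩ := c2
      rw [if_pos rfl, if_pos rfl] at n2 ⊢
      linarith [g2 i j]
    by_cases c3 : i = l ∧ j = k
    · obtain ⟨rfl, rfl⟩ := c3
      rw [if_pos rfl, if_pos rfl] at n3 ⊢
      linarith [g3 i j]
    have : f i j k l = 0 := by
      by_cases d1 : i = j
      · have : k ≠ l := fun h => c1 ⟨d1, h⟩
        by_cases d2 : k = i
        · -- l isolated
          rw [cyc, cyc, cyc]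
          apply hiso <;> grind
        · rw [cyc, cyc]
          apply hiso <;> grind
      · by_cases d2 : i = k
        · rw [cyc]; apply hiso <;> grind
        · by_cases d3 : i = l
          · rw [cyc]; apply hiso <;> grind
          · exact hiso _ _ _ _ d1 d2 d3
    linarith
  have sb : ∑ i, ∑ k, b i k ≤ Fintype.card ι * B1 + (Fintype.card ι : ℝ) ^ 2 * B2 := by
    have : ∀ i k, b i k ≤ (if i = k then B1 else 0) + B2 := by
      intro i k; simp only [hb]; split_ifs <;> linarith
    calc _ ≤ ∑ i : ι, ∑ k : ι, ((if i = k then B1 else 0) + B2) := 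
          Finset.sum_le_sum fun i _ => Finset.sum_le_sum fun k _ => this i k
      _ = _ := by
        simp only [Finset.sum_add_distrib, Finset.sum_ite_eq, Finset.mem_univ, if_true, Finset.sum_const,
          Finset.card_univ, nsmul_eq_mul]
        ring
  calc _ ≤ ∑ i, ∑ j, ∑ k, ∑ l, ((if i = j then (if k = l then b i k else 0) else 0) +
      (if i = k then (if j = l then b i j else 0) else 0) +
      (if i = l then (if j = k then b i j else 0) else 0)) :=
        Finset.sum_le_sum fun i _ => Finset.sum_le_sum fun j _ => Finset.sum_le_sum fun k _ =>
          Finset.sum_le_sum fun l _ => key i j k l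
    _ = 3 * ∑ i, ∑ k, b i k := by
      simp only [Finset.sum_add_distrib]
      have a1 : ∀ i : ι, ∑ j, ∑ k, ∑ l, (if i = j then (if k = l then b i k else 0) else 0) = ∑ k, b i k := by
        intro i
        rw [Finset.sum_eq_single i (by intro j _ hj; simp [hj.symm]) (by simp)]; simp
      have a2 : ∀ i : ι, ∑ j, ∑ k, ∑ l, (if i = k then (if j = l then b i j else 0) else 0) = ∑ k, b i k := by
        intro i
        refine Finset.sum_congr rfl fun j _ => ?_
        rw [Finset.sum_eq_single i (by intro j _ hj; simp [hj.symm]) (by simp)]; simp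
      have a3 : ∀ i : ι, ∑ j, ∑ k, ∑ l, (if i = l then (if j = k then b i j else 0) else 0) = ∑ k, b i k := by
        intro i
        simp
      simp only [a1, a2, a3]; ring
    _ ≤ _ := by linarith

end P1
end TY

open MeasureTheory ProbabilityTheory Filter Matrix
set_option linter.unusedSectionVars false

namespace TY
section P2
variable {m : Type*} [Fintype m] [DecidableEq m]

noncomputable def V2 : ℝ := ∫ s, (s ^ 2 - 1) ^ 2 ∂(gaussianReal 0 1)
noncomputable def V4 : ℝ := ∫ s, (s ^ 2 - 1) ^ 4 ∂(gaussianReal 0 1)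
lemma V2_nonneg : 0 ≤ V2 := integral_nonneg fun s => by positivity
lemma V4_nonneg : 0 ≤ V4 := integral_nonneg fun s => by positivity

lemma int_y : ∫ s, (s ^ 2 - 1 : ℝ) ∂(gaussianReal 0 1) = 0 := by
  have h := variance_id_gaussianReal (μ := 0) (v := 1)
  rw [variance_eq_sub (memLp_id_gaussianReal 2)] at h
  have h2 : ∫ x : ℝ, x ∂(gaussianReal 0 1) = 0 := integral_id_gaussianReal
  have hi : Integrable (fun s : ℝ => s ^ 2) (gaussianReal 0 1) := (memLp_id_gaussianReal 2).integrable_sq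
  rw [integral_sub hi (integrable_const _)]
  simp [h2] at h
  simp [h]

lemma sq_le_dot (x : m → ℝ) (a : m) : x a ^ 2 ≤ x ⬝ᵥ x := by
  rw [dotProduct, sq]
  exact Finset.single_le_sum (f := fun i => x i * x i) (fun i _ => mul_self_nonneg _) (Finset.mem_univ a)

lemma abs_y_le (x : m → ℝ) (a : m) : |x a ^ 2 - 1| ≤ 1 + x ⬝ᵥ x := by
  have := sq_le_dot x a
  have := sq_nonneg (x a)
  rw [abs_le]; constructor <;> linarith

lemma int_y2 (a b : m) : Integrable (fun x : m → ℝ => (x a ^ 2 - 1) * (x b ^ 2 - 1)) (gm m) := by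
  apply int_poly _ (by fun_prop) 1 2
  intro x
  rw [abs_mul, one_mul, show (1 + x ⬝ᵥ x)^2 = (1 + x ⬝ᵥ x) * (1 + x ⬝ᵥ x) by ring]
  have := dot_self_nonneg x
  exact mul_le_mul (abs_y_le _ _) (abs_y_le _ _) (abs_nonneg _) (by positivity)

lemma int_y4 (a b c e : m) : Integrable (fun x : m → ℝ => (x a ^ 2 - 1) * (x b ^ 2 - 1) * (x c ^ 2 - 1) * (x e ^ 2 - 1)) (gm m) := by
  apply int_poly _ (by fun_prop) 1 4
  intro x
  rw [abs_mul, abs_mul, abs_mul, one_mul, show (1 + x ⬝ᵥ x)^4 = (1 + x ⬝ᵥ x) * (1 + x ⬝ᵥ x) * (1 + x ⬝ᵥ x) * (1 + x ⬝ᵥ x) by ring]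
  have := dot_self_nonneg x
  have h0 : 0 ≤ 1 + x ⬝ᵥ x := by positivity
  exact mul_le_mul (mul_le_mul (mul_le_mul (abs_y_le _ _) (abs_y_le _ _) (abs_nonneg _) h0) (abs_y_le _ _) (abs_nonneg _) (by positivity)) (abs_y_le _ _) (abs_nonneg _) (by positivity)

lemma integral_eval' (a : m) (f : ℝ → ℝ) (hf : Measurable f) :
    ∫ x, f (x a) ∂(gm m) = ∫ s, f s ∂(gaussianReal 0 1) := by
  have h := measurePreserving_eval (fun _ : m => gaussianReal 0 1) a
  have e := integral_map (μ := gm m) (f := f) h.measurable.aemeasurable hf.aestronglyMeasurable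
  rw [h.map_eq] at e
  exact e.symm

lemma E_y2 (a b : m) : ∫ x, (x a ^ 2 - 1) * (x b ^ 2 - 1) ∂(gm m) = if a = b then V2 else 0 := by
  split_ifs with h
  · subst h
    have := integral_eval' a (fun s => (s^2 - 1)^2) (by fun_prop)
    rw [V2, ← this]; congr 1; ext x; ring
  · rw [(integral_resample _ a _ (int_y2 a b)).2]
    simp only [Function.update_self, Function.update_of_ne (Ne.symm h), integral_mul_const, int_y]
    simp

/-- centered squared length -/
noncomputable def ww (x : m → ℝ) : ℝ := x ⬝ᵥ x - Fintype.card m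

lemma ww_eq (x : m → ℝ) : ww x = ∑ a, (x a ^ 2 - 1) := by
  simp [ww, dotProduct, sq]

lemma meas_dot : Measurable (fun x : m → ℝ => x ⬝ᵥ x) := by unfold dotProduct; fun_prop
lemma meas_ww : Measurable (ww : (m → ℝ) → ℝ) := by unfold ww; exact meas_dot.sub_const _

lemma E_w4 : ∫ x, ww x ^ 4 ∂(gm m) ≤ 3 * (V4 + V2 ^ 2) * (Fintype.card m : ℝ) ^ 2 := by
  have e : ∀ x : m → ℝ, ww x ^ 4 = ∑ a, ∑ b, ∑ c, ∑ e, (x a ^ 2 - 1) * (x b ^ 2 - 1) * (x c ^ 2 - 1) * (x e ^ 2 - 1) := by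
    intro x
    simp only [← Finset.mul_sum, ← Finset.sum_mul]
    rw [ww_eq]; ring
  simp only [e]
  have e2 : ∫ x, (∑ a, ∑ b, ∑ c, ∑ e, (x a ^ 2 - 1) * (x b ^ 2 - 1) * (x c ^ 2 - 1) * (x e ^ 2 - 1)) ∂(gm m)
      = ∑ a, ∑ b, ∑ c, ∑ e, ∫ x, (x a ^ 2 - 1) * (x b ^ 2 - 1) * (x c ^ 2 - 1) * (x e ^ 2 - 1) ∂(gm m) := by
    rw [integral_finsetSum _ fun a _ => integrable_finsetSum _ fun b _ => integrable_finsetSum _ fun c _ => integrable_finsetSum _ fun e _ => int_y4 a b c e]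
    refine Finset.sum_congr rfl fun a _ => ?_
    rw [integral_finsetSum _ fun b _ => integrable_finsetSum _ fun c _ => integrable_finsetSum _ fun e _ => int_y4 a b c e]
    refine Finset.sum_congr rfl fun b _ => ?_
    rw [integral_finsetSum _ fun c _ => integrable_finsetSum _ fun e _ => int_y4 a b c e]
    refine Finset.sum_congr rfl fun c _ => ?_
    rw [integral_finsetSum _ fun e _ => int_y4 a b c e]
  rw [e2]
  have hp : ∀ i k : m, i ≠ k → ∫ x, (x i ^ 2 - 1) * (x i ^ 2 - 1) * (x k ^ 2 - 1) * (x k ^ 2 - 1) ∂(gm m) ≤ V2 ^ 2 := by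
    intro i k hik
    apply le_of_eq
    rw [(integral_resample _ i _ (int_y4 i i k k)).2]
    have : ∀ (x : m → ℝ), ∫ y, ((Function.update x i y i ^ 2 - 1) * (Function.update x i y i ^ 2 - 1) * (Function.update x i y k ^ 2 - 1) * (Function.update x i y k ^ 2 - 1)) ∂(gaussianReal 0 1) = V2 * ((x k ^ 2 - 1) * (x k ^ 2 - 1)) := by
      intro x
      rw [V2, ← integral_mul_const]
      congr 1; ext y
      rw [Function.update_self, Function.update_of_ne (Ne.symm hik)]; ring
    simp only [this]
    rw [integral_const_mul, E_y2, if_pos rfl, sq]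
  have := comb4 (fun a b c e : m => ∫ x, (x a ^ 2 - 1) * (x b ^ 2 - 1) * (x c ^ 2 - 1) * (x e ^ 2 - 1) ∂(gm m))
    (by
      intro i j k l h1 h2 h3
      rw [(integral_resample _ i _ (int_y4 i j k l)).2]
      simp only [Function.update_self, Function.update_of_ne (Ne.symm h1), Function.update_of_ne (Ne.symm h2), Function.update_of_ne (Ne.symm h3), integral_mul_const, int_y]
      simp)
    (by intro i j k l; congr 1; ext x; ring) V4 (V2 ^ 2) V4_nonneg (by positivity)
    hp
    (by intro i j h; refine le_trans (le_of_eq ?_) (hp i j h); congr 1; ext x; ring)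
    (by
      intro i
      apply le_of_eq
      rw [V4, ← integral_eval' i (fun s => (s^2 - 1)^4) (by fun_prop)]; congr 1; ext x; ring)
  refine this.trans ?_
  have hc : (Fintype.card m : ℝ) ≤ (Fintype.card m : ℝ)^2 := by
    exact_mod_cast Nat.le_self_pow two_ne_zero _
  nlinarith [V4_nonneg, mul_le_mul_of_nonneg_right hc V4_nonneg]

lemma int_ww (k : ℕ) : Integrable (fun x : m → ℝ => ww x ^ k) (gm m) := by
  apply int_poly _ (meas_ww.pow_const _) ((1 + Fintype.card m : ℝ)^k) k
  intro x
  rw [abs_pow, ← mul_pow]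
  have := dot_self_nonneg x
  gcongr
  rw [ww, abs_le]
  have : (0:ℝ) ≤ Fintype.card m := by positivity
  constructor <;> nlinarith

lemma E_quad (A : Matrix m m ℝ) (hA : A.IsHermitian) :
    ∫ x, (x ⬝ᵥ A *ᵥ x - A.trace) ^ 2 ∂(gm m) = V2 * fro A := by
  have h := rot hA.eigenvectorBasis
  set lam := hA.eigenvalues with hlam
  have ht : A.trace = ∑ i, lam i := by
    have := hA.trace_eq_sum_eigenvalues; simpa using this
  have hAt : Aᵀ = A := by have h := hA.eq; rwa [conjTranspose_eq_transpose_of_trivial] at h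
  have hf : fro A = ∑ i, lam i ^ 2 := by
    rw [fro_eq_trace A hAt]
    have hsp := hA.spectral_theorem
    have hU1 : star (hA.eigenvectorUnitary : Matrix m m ℝ) * hA.eigenvectorUnitary = 1 :=
      Unitary.coe_star_mul_self _
    rw [Unitary.conjStarAlgAut_apply] at hsp
    set Q : Matrix m m ℝ := (hA.eigenvectorUnitary : Matrix m m ℝ)
    have : A * A = Q * (diagonal lam * diagonal lam) * star Q := by
      conv_lhs => rw [hsp]
      have e : (RCLike.ofReal ∘ hA.eigenvalues : m → ℝ) = lam := by ext; simp [hlam]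
      rw [e]
      calc _ = Q * diagonal lam * (star Q * Q) * diagonal lam * star Q := by simp only [Matrix.mul_assoc]
        _ = _ := by rw [hU1]; simp only [Matrix.mul_assoc, Matrix.one_mul]
    rw [this, Matrix.trace_mul_comm, ← Matrix.mul_assoc, hU1, Matrix.one_mul, diagonal_mul_diagonal, trace_diagonal]
    simp only [sq]
  have hm : Measurable (fun x : m → ℝ => (x ⬝ᵥ A *ᵥ x - A.trace) ^ 2) := by
    unfold mulVec dotProduct; fun_prop
  have e := integral_map (μ := gm m) (f := fun x : m → ℝ => (x ⬝ᵥ A *ᵥ x - A.trace) ^ 2) h.measurable.aemeasurable hm.aestronglyMeasurable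
  rw [h.map_eq] at e
  rw [e]
  have hq : ∀ x : m → ℝ, (∑ i, x i • (hA.eigenvectorBasis i).ofLp) ⬝ᵥ A *ᵥ (∑ i, x i • (hA.eigenvectorBasis i).ofLp) = ∑ i, lam i * x i ^ 2 := by
    intro x
    have ho : ∀ i j, (hA.eigenvectorBasis i).ofLp ⬝ᵥ (hA.eigenvectorBasis j).ofLp = if i = j then 1 else 0 := by
      intro i j
      have := orthonormal_iff_ite.1 hA.eigenvectorBasis.orthonormal i j
      rw [EuclideanSpace.inner_eq_star_dotProduct, dotProduct_comm] at this
      simpa using this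
    rw [mulVec_sum]
    simp only [mulVec_smul, hA.mulVec_eigenvectorBasis, dotProduct_sum, sum_dotProduct, dotProduct_smul, smul_dotProduct, ho]
    simp
    refine Finset.sum_congr rfl fun i _ => ?_
    ring
  simp only [hq, ht, hf]
  have : ∀ x : m → ℝ, (∑ i, lam i * x i ^ 2 - ∑ i, lam i) ^ 2 = ∑ i, ∑ j, (lam i * lam j) * ((x i ^ 2 - 1) * (x j ^ 2 - 1)) := by
    intro x
    rw [← Finset.sum_sub_distrib, sq, Finset.sum_mul_sum]
    refine Finset.sum_congr rfl fun i _ => Finset.sum_congr rfl fun j _ => ?_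
    ring
  simp only [this]
  rw [integral_finsetSum _ fun i _ => integrable_finsetSum _ fun j _ => (int_y2 i j).const_mul _, Finset.mul_sum]
  refine Finset.sum_congr rfl fun i _ => ?_
  rw [integral_finsetSum _ fun j _ => (int_y2 i j).const_mul _]
  simp only [integral_const_mul, E_y2]
  simp; ring

lemma E_w2 : ∫ x, ww x ^ 2 ∂(gm m) = V2 * Fintype.card m := by
  have := E_quad (1 : Matrix m m ℝ) Matrix.isHermitian_one
  rw [fro_one] at this
  rw [← this]; simp [ww]

lemma E_w1 : ∫ x, ww x ∂(gm m) = 0 := by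
  simp only [ww_eq]
  rw [integral_finsetSum]
  · refine Finset.sum_eq_zero fun a _ => ?_
    rw [integral_eval' a (fun s => s^2 - 1) (by fun_prop), int_y]
  · intro a _
    exact int_poly _ (by fun_prop) 1 1 (fun x => by simpa using abs_y_le x a)

lemma meas_un : Measurable (un : (m → ℝ) → m → ℝ) := by
  unfold un
  refine Measurable.ite (measurableSet_eq_fun meas_dot measurable_const) measurable_const ?_
  exact (meas_dot.sqrt.inv).smul measurable_id

lemma un_abs_le [Nonempty m] (x : m → ℝ) (a : m) : |un x a| ≤ 1 := by
  have := sq_le_dot (un x) a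
  rw [un_unit] at this
  exact (sq_le_one_iff_abs_le_one _).1 this

lemma dot_un_le [Nonempty m] (x y : m → ℝ) : |un x ⬝ᵥ un y| ≤ 1 := by
  have := sq_dot_le (un x) (un y)
  rw [un_unit, un_unit, mul_one] at this
  exact (sq_le_one_iff_abs_le_one _).1 this

lemma ae_ne [Nonempty m] : ∀ᵐ x ∂(gm m), x ≠ 0 := by
  have : gm m {0} = 0 := by
    have : ({0} : Set (m → ℝ)) = Set.univ.pi fun _ => {0} := by
      ext x; simp [funext_iff]
    rw [this, Measure.pi_pi]
    have : NullSingletonClass (gaussianReal 0 1) := nullSingletonClass_gaussianReal (by simp)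
    rw [Finset.prod_const, measure_singleton, zero_pow]
    exact Finset.card_ne_zero.2 Finset.univ_nonempty
  exact measure_eq_zero_iff_ae_notMem.1 this

lemma fro_center [Nonempty m] (A : Matrix m m ℝ) :
    fro (A - (A.trace / Fintype.card m) • (1 : Matrix m m ℝ)) ≤ fro A := by
  have hd : (0 : ℝ) < Fintype.card m := by exact_mod_cast Fintype.card_pos
  set t := A.trace / Fintype.card m with ht
  have e : fro (A - t • (1 : Matrix m m ℝ)) = fro A - 2 * t * A.trace + t^2 * Fintype.card m := by
    unfold fro
    have : ∀ i, ∑ j, (A - t • (1 : Matrix m m ℝ)) i j ^ 2 = ∑ j, A i j ^ 2 - 2 * t * A i i + t^2 := by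
      intro i
      have : ∀ j, (A - t • (1 : Matrix m m ℝ)) i j ^ 2 = A i j ^ 2 - (if i = j then 2 * t * A i j else 0) + (if i = j then t^2 else 0) := by
        intro j
        simp only [Matrix.sub_apply, Matrix.smul_apply, Matrix.one_apply, smul_eq_mul]
        split_ifs <;> ring
      simp only [this, Finset.sum_add_distrib, Finset.sum_sub_distrib]
      simp
    simp only [this, Finset.sum_add_distrib, Finset.sum_sub_distrib, ← Finset.mul_sum]
    simp [Matrix.trace]; ring
  have : A.trace = t * Fintype.card m := by rw [ht]; field_simp
  rw [e, this]
  nlinarith [mul_nonneg (sq_nonneg t) hd.le]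

noncomputable def C0 : ℝ := 4 * V2 + 48 * (V4 + V2 ^ 2)
lemma C0_nonneg : 0 ≤ C0 := by
  have := V2_nonneg; have := V4_nonneg; unfold C0; positivity

lemma E_c0 [Nonempty m] (A : Matrix m m ℝ) (hA : Aᵀ = A) :
    ∫ x, (un x ⬝ᵥ A *ᵥ un x - A.trace / Fintype.card m) ^ 2 ∂(gm m) ≤ C0 / (Fintype.card m : ℝ) ^ 2 * fro A := by
  have hd : (0 : ℝ) < Fintype.card m := by exact_mod_cast Fintype.card_pos
  set d : ℝ := (Fintype.card m : ℝ) with hdd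
  set A0 := A - (A.trace / d) • (1 : Matrix m m ℝ) with hA0
  have hA0H : A0.IsHermitian := by
    rw [Matrix.IsHermitian, conjTranspose_eq_transpose_of_trivial, hA0]; simp [hA]
  have htr : A0.trace = 0 := by rw [hA0, trace_sub, trace_smul, trace_one, ← hdd]; simp
  have hf0 := fro_nonneg A0
  have e1 : ∀ x, un x ⬝ᵥ A *ᵥ un x - A.trace / d = un x ⬝ᵥ A0 *ᵥ un x := by
    intro x; rw [hA0, sub_mulVec, smul_mulVec, one_mulVec, dotProduct_sub, dotProduct_smul, un_unit]; simp
  have pt : ∀ x, (un x ⬝ᵥ A *ᵥ un x - A.trace / d) ^ 2 ≤ 4 / d^2 * (x ⬝ᵥ A0 *ᵥ x - A0.trace)^2 + 16 / d^4 * fro A0 * ww x ^ 4 := by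
    intro x
    rw [e1, htr, sub_zero, quad_un A0 x]
    set z := un x ⬝ᵥ A0 *ᵥ un x
    have hx := dot_self_nonneg x
    by_cases h : d / 2 ≤ x ⬝ᵥ x
    · have : z^2 ≤ 4 / d^2 * ((x ⬝ᵥ x) * z)^2 := by
        have : (d/2)^2 ≤ (x ⬝ᵥ x)^2 := by gcongr
        calc z^2 = 4 / d^2 * ((d/2)^2 * z^2) := by field_simp; ring
          _ ≤ 4 / d^2 * ((x ⬝ᵥ x)^2 * z^2) := by gcongr
          _ = _ := by ring
      have : 0 ≤ 16 / d^4 * fro A0 * ww x ^ 4 := by positivity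
      linarith
    · push Not at h
      have hz : z^2 ≤ fro A0 := by
        have a1 := sq_dot_le (un x) (A0 *ᵥ un x)
        have a2 := fro_mulVec A0 (un x)
        rw [un_unit] at a1 a2
        linarith
      have hw : (d/2)^4 ≤ ww x ^ 4 := by
        have : d / 2 ≤ - ww x := by rw [ww, ← hdd]; linarith
        calc (d/2)^4 ≤ (- ww x)^4 := by gcongr
          _ = _ := by ring
      have : fro A0 ≤ 16 / d^4 * fro A0 * ww x ^ 4 := by
        calc fro A0 = 16 / d^4 * fro A0 * (d/2)^4 := by field_simp; ring
          _ ≤ _ := by gcongr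
      have : 0 ≤ 4 / d^2 * ((x ⬝ᵥ x) * z)^2 := by positivity
      linarith
  have hi1 : Integrable (fun x : m → ℝ => (x ⬝ᵥ A0 *ᵥ x - A0.trace)^2) (gm m) := by
    apply int_poly _ (by unfold mulVec dotProduct; fun_prop) (fro A0) 2
    intro x
    rw [htr, sub_zero, abs_of_nonneg (sq_nonneg _)]
    have a1 := sq_dot_le x (A0 *ᵥ x)
    have a2 := fro_mulVec A0 x
    have hx := dot_self_nonneg x
    calc _ ≤ (x ⬝ᵥ x) * (fro A0 * (x ⬝ᵥ x)) := a1.trans (by gcongr)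
      _ = fro A0 * (x ⬝ᵥ x)^2 := by ring
      _ ≤ _ := by gcongr; linarith
  calc _ ≤ ∫ x, (4 / d^2 * (x ⬝ᵥ A0 *ᵥ x - A0.trace)^2 + 16 / d^4 * fro A0 * ww x ^ 4) ∂(gm m) := by
        apply integral_mono_of_nonneg (Eventually.of_forall fun x => sq_nonneg _)
          ((hi1.const_mul _).add ((int_ww 4).const_mul _)) (Eventually.of_forall pt)
    _ = 4 / d^2 * (V2 * fro A0) + 16 / d^4 * fro A0 * ∫ x, ww x ^ 4 ∂(gm m) := by
        rw [integral_add (hi1.const_mul _) ((int_ww 4).const_mul _), integral_const_mul, integral_const_mul, E_quad A0 hA0H]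
    _ ≤ 4 / d^2 * (V2 * fro A0) + 16 / d^4 * fro A0 * (3 * (V4 + V2 ^ 2) * d ^ 2) := by
        gcongr; exact E_w4
    _ = C0 / d^2 * fro A0 := by unfold C0; field_simp; ring
    _ ≤ _ := by
        have := C0_nonneg
        gcongr; exact fro_center A

lemma E_g [Nonempty m] (g : ℝ → ℝ) (hg : Measurable g) (hi : Integrable (fun x : m → ℝ => g (x ⬝ᵥ x)) (gm m)) (p q : m → ℝ) :
    ∫ x, g (x ⬝ᵥ x) * ((p ⬝ᵥ un x) * (un x ⬝ᵥ q)) ∂(gm m) = (p ⬝ᵥ q) * ((∫ x, g (x ⬝ᵥ x) ∂(gm m)) / Fintype.card m) := by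
  have hd : (0 : ℝ) < Fintype.card m := by exact_mod_cast Fintype.card_pos
  have hmu : ∀ a : m, Measurable fun x : m → ℝ => un x a := fun a => (measurable_pi_apply a).comp meas_un
  have hm : ∀ a b : m, Measurable (fun x : m → ℝ => g (x ⬝ᵥ x) * (un x a * un x b)) := fun a b =>
    (hg.comp meas_dot).mul ((hmu a).mul (hmu b))
  have hI : ∀ a b : m, Integrable (fun x : m → ℝ => g (x ⬝ᵥ x) * (un x a * un x b)) (gm m) := by
    intro a b
    apply hi.mono (hm a b).aestronglyMeasurable
    filter_upwards with x
    rw [norm_mul]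
    apply mul_le_of_le_one_right (norm_nonneg _)
    rw [norm_mul]
    exact mul_le_one₀ (un_abs_le x a) (norm_nonneg _) (un_abs_le x b)
  -- off diagonal
  have hoff : ∀ a b : m, a ≠ b → ∫ x, g (x ⬝ᵥ x) * (un x a * un x b) ∂(gm m) = 0 := by
    intro a b hab
    have h := flip_mp (m := m) a
    have e := integral_map (μ := gm m) (f := fun x : m → ℝ => g (x ⬝ᵥ x) * (un x a * un x b)) h.measurable.aemeasurable (hm a b).aestronglyMeasurable
    rw [h.map_eq] at e
    have e2 : ∫ x, g (x ⬝ᵥ x) * (un x a * un x b) ∂(gm m) = ∫ x, - (g (x ⬝ᵥ x) * (un x a * un x b)) ∂(gm m) := by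
      rw [e]
      apply integral_congr_ae
      filter_upwards [ae_ne] with x hx
      have hdot : (fun i => if i = a then - x i else x i) ⬝ᵥ (fun i => if i = a then - x i else x i) = x ⬝ᵥ x := by
        simp only [dotProduct]
        refine Finset.sum_congr rfl fun i _ => ?_
        split_ifs <;> ring
      have hx0 : x ⬝ᵥ x ≠ 0 := fun h => hx (dotProduct_self_eq_zero.1 h)
      simp only [un, hdot, if_neg hx0, Pi.smul_apply, smul_eq_mul, if_true, if_neg hab.symm]
      ring
    rw [integral_neg] at e2
    linarith
  have hdiag : ∀ a b : m, ∫ x, g (x ⬝ᵥ x) * (un x a * un x a) ∂(gm m) = ∫ x, g (x ⬝ᵥ x) * (un x b * un x b) ∂(gm m) := by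
    intro a b
    have h := perm_mp (m := m) (Equiv.swap a b)
    have e := integral_map (μ := gm m) (f := fun x : m → ℝ => g (x ⬝ᵥ x) * (un x a * un x a)) h.measurable.aemeasurable (hm a a).aestronglyMeasurable
    rw [h.map_eq] at e
    rw [e]
    congr 1
    ext x
    have hdot : (x ∘ Equiv.swap a b) ⬝ᵥ (x ∘ Equiv.swap a b) = x ⬝ᵥ x := by
      simp only [dotProduct, Function.comp]
      exact Equiv.sum_comp (Equiv.swap a b) (fun i => x i * x i)
    simp only [un, hdot]
    split_ifs
    · rfl
    · simp
  have hcol : ∀ b : m, ∫ x, g (x ⬝ᵥ x) * (un x b * un x b) ∂(gm m) = (∫ x, g (x ⬝ᵥ x) ∂(gm m)) / Fintype.card m := by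
    intro b
    have : ∫ x, g (x ⬝ᵥ x) ∂(gm m) = ∑ a, ∫ x, g (x ⬝ᵥ x) * (un x a * un x a) ∂(gm m) := by
      rw [← integral_finsetSum _ fun a _ => hI a a]
      congr 1; ext x
      rw [← Finset.mul_sum]
      have := un_unit x
      rw [dotProduct] at this
      rw [this, mul_one]
    rw [this]
    simp only [hdiag _ b]
    simp
  have e : ∀ x : m → ℝ, g (x ⬝ᵥ x) * ((p ⬝ᵥ un x) * (un x ⬝ᵥ q)) = ∑ a, ∑ b, (p a * q b) * (g (x ⬝ᵥ x) * (un x a * un x b)) := by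
    intro x
    have e1 : p ⬝ᵥ un x = ∑ a, p a * un x a := rfl
    have e2 : un x ⬝ᵥ q = ∑ a, un x a * q a := rfl
    rw [e1, e2, Finset.sum_mul_sum]
    simp only [Finset.mul_sum]
    refine Finset.sum_congr rfl fun i _ => Finset.sum_congr rfl fun j _ => ?_
    ring
  simp only [e]
  rw [integral_finsetSum _ fun i _ => integrable_finsetSum _ fun j _ => (hI i j).const_mul _, dotProduct, Finset.sum_mul]
  refine Finset.sum_congr rfl fun i _ => ?_
  rw [integral_finsetSum _ fun j _ => (hI i j).const_mul _]
  simp only [integral_const_mul]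
  rw [Finset.sum_eq_single i (by intro j _ hj; rw [hoff i j hj.symm, mul_zero]) (by simp), hcol]

lemma mu0 [Nonempty m] (p q : m → ℝ) : ∫ x, ww x * ((p ⬝ᵥ un x) * (un x ⬝ᵥ q)) ∂(gm m) = 0 := by
  have := E_g (m := m) (fun s => s - Fintype.card m) (by fun_prop) (by simpa [ww] using int_ww (m := m) 1) p q
  rw [show ∫ x : m → ℝ, (x ⬝ᵥ x - Fintype.card m) ∂(gm m) = 0 from E_w1, zero_div, mul_zero] at this
  exact this

lemma mu2 [Nonempty m] (p q : m → ℝ) : ∫ x, ww x ^ 2 * ((p ⬝ᵥ un x) * (un x ⬝ᵥ q)) ∂(gm m) = V2 * (p ⬝ᵥ q) := by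
  have hd : (0 : ℝ) < Fintype.card m := by exact_mod_cast Fintype.card_pos
  have := E_g (m := m) (fun s => (s - Fintype.card m)^2) (by fun_prop) (int_ww (m := m) 2) p q
  rw [show ∫ x : m → ℝ, (x ⬝ᵥ x - Fintype.card m)^2 ∂(gm m) = _ from E_w2] at this
  rw [show V2 * (p ⬝ᵥ q) = (p ⬝ᵥ q) * (V2 * Fintype.card m / Fintype.card m) by field_simp]
  exact this

lemma mu1 [Nonempty m] (p q : m → ℝ) : ∫ x, ((p ⬝ᵥ un x) * (un x ⬝ᵥ q)) ∂(gm m) = (p ⬝ᵥ q) / Fintype.card m := by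
  have := E_g (m := m) (fun s => 1) (by fun_prop) (integrable_const _) p q
  simp at this
  rw [this]; ring

end P2
end TY

open MeasureTheory ProbabilityTheory Filter Matrix
set_option linter.unusedSectionVars false

namespace TY
section P3
variable {m ι : Type*} [Fintype m] [DecidableEq m] [Fintype ι] [DecidableEq ι]

lemma fro4_sum (c : ι → ℝ) (u : ι → m → ℝ) :
    fro ((∑ j, c j • vecMulVec (u j) (u j)) * (∑ j, c j • vecMulVec (u j) (u j))) =
    ∑ i, ∑ j, ∑ k, ∑ l, (c i * c j * c k * c l) *
      ((u i ⬝ᵥ u j) * (u j ⬝ᵥ u k) * (u k ⬝ᵥ u l) * (u l ⬝ᵥ u i)) := by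
  set A := ∑ j, c j • vecMulVec (u j) (u j) with hA
  have hAt : Aᵀ = A := by
    rw [hA, transpose_sum]; simp [transpose_smul, transpose_vecMulVec]
  have h2 : A * A = ∑ i, ∑ j, (c i * c j * (u i ⬝ᵥ u j)) • vecMulVec (u i) (u j) := by
    rw [hA, Finset.sum_mul_sum]
    refine Finset.sum_congr rfl fun i _ => Finset.sum_congr rfl fun j _ => ?_
    rw [smul_mul_smul_comm, vecMulVec_mul_vecMulVec, vecMulVec_smul, smul_smul]
  have h2t : (A * A)ᵀ = A * A := by rw [transpose_mul, hAt]
  rw [fro_eq_trace _ h2t, h2]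
  simp only [Finset.sum_mul, Finset.mul_sum, trace_sum, smul_mul_smul_comm, trace_smul, vecMulVec_mul_vecMulVec, vecMulVec_smul, trace_vecMulVec, smul_eq_mul]
  refine Finset.sum_congr rfl fun i _ => Finset.sum_congr rfl fun j _ => Finset.sum_congr rfl fun k _ => Finset.sum_congr rfl fun l _ => ?_
  rw [dotProduct_comm (u k) (u j)]
  ring

lemma markov' {α : Type*} [MeasurableSpace α] {ν : Measure α} {f : α → ℝ} (hf : Integrable f ν)
    (h0 : ∀ x, 0 ≤ f x) {B a : ℝ} (hB : ∫ x, f x ∂ν ≤ B) (ha : 0 < a) :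
    ν {x | a < f x} ≤ ENNReal.ofReal (B / a) := by
  have h := meas_ge_le_lintegral_div (μ := ν) (f := fun x => ENNReal.ofReal (f x)) (ε := ENNReal.ofReal a) hf.1.aemeasurable.ennreal_ofReal (by simpa using ha) ENNReal.ofReal_ne_top
  rw [← ofReal_integral_eq_lintegral_ofReal hf (Eventually.of_forall h0), ← ENNReal.ofReal_div_of_pos ha] at h
  refine le_trans (measure_mono ?_) (h.trans (ENNReal.ofReal_le_ofReal (by gcongr)))
  intro x hx
  exact ENNReal.ofReal_le_ofReal (le_of_lt hx)

variable (m ι) in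
/-- law of the sample -/
noncomputable abbrev nu : Measure (ι → m → ℝ) := Measure.pi fun _ : ι => gm m

lemma nu_eval (i : ι) (f : (m → ℝ) → ℝ) (hf : Measurable f) :
    ∫ x, f (x i) ∂(nu m ι) = ∫ s, f s ∂(gm m) := by
  have h := measurePreserving_eval (fun _ : ι => gm m) i
  have e := integral_map (μ := nu m ι) (f := f) h.measurable.aemeasurable hf.aestronglyMeasurable
  rw [h.map_eq] at e
  exact e.symm

lemma nu_int (i : ι) (f : (m → ℝ) → ℝ) (hf : Integrable f (gm m)) :
    Integrable (fun x => f (x i)) (nu m ι) :=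
  (measurePreserving_eval (fun _ : ι => gm m) i).integrable_comp_of_integrable hf

lemma meas_K (i j : ι) : Measurable (fun x : ι → m → ℝ => un (x i) ⬝ᵥ un (x j)) := by
  have hm : ∀ (i : ι) (a : m), Measurable (fun x : ι → m → ℝ => un (x i) a) := fun i a =>
    (measurable_pi_apply a).comp (meas_un.comp (measurable_pi_apply i))
  unfold dotProduct
  exact Finset.measurable_sum _ fun a _ => (hm i a).mul (hm j a)

/-- summand -/
noncomputable def t1 (i j k l : ι) (x : ι → m → ℝ) : ℝ :=
  (ww (x i) * ww (x j) * ww (x k) * ww (x l)) *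
      ((un (x i) ⬝ᵥ un (x j)) * (un (x j) ⬝ᵥ un (x k)) * (un (x k) ⬝ᵥ un (x l)) * (un (x l) ⬝ᵥ un (x i)))

lemma prod4_le (a b c d : ℝ) : |a * b * c * d| ≤ a^4 + b^4 + c^4 + d^4 := by
  rw [abs_le]
  constructor <;> nlinarith [sq_nonneg (a*b - c*d), sq_nonneg (a*b + c*d), sq_nonneg (a^2-b^2), sq_nonneg (c^2-d^2), sq_nonneg (a^2), sq_nonneg (b^2), sq_nonneg (c^2), sq_nonneg (d^2), sq_nonneg (a^2+b^2), sq_nonneg (c^2+d^2)]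

lemma abs_prod4_le_one {a b c d : ℝ} (ha : |a| ≤ 1) (hb : |b| ≤ 1) (hc : |c| ≤ 1) (hd : |d| ≤ 1) : |a * b * c * d| ≤ 1 := by
  rw [abs_mul, abs_mul, abs_mul]
  exact mul_le_one₀ (mul_le_one₀ (mul_le_one₀ ha (abs_nonneg _) hb) (abs_nonneg _) hc) (abs_nonneg _) hd

lemma int_t1 [Nonempty m] (i j k l : ι) : Integrable (t1 i j k l) (nu m ι) := by
  have hw : ∀ i : ι, Measurable (fun x : ι → m → ℝ => ww (x i)) := fun i => meas_ww.comp (measurable_pi_apply i)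
  have hI : ∀ i : ι, Integrable (fun x : ι → m → ℝ => ww (x i) ^ 4) (nu m ι) := fun i => nu_int i _ (int_ww 4)
  apply (((hI i).add (hI j)).add (hI k) |>.add (hI l)).mono'
  · unfold t1
    exact (((((hw i).mul (hw j)).mul (hw k)).mul (hw l)).mul ((((meas_K i j).mul (meas_K j k)).mul (meas_K k l)).mul (meas_K l i))).aestronglyMeasurable
  · filter_upwards with x
    rw [t1, norm_mul]
    calc _ ≤ ‖ww (x i) * ww (x j) * ww (x k) * ww (x l)‖ * 1 := by
          gcongr
          exact abs_prod4_le_one (dot_un_le _ _) (dot_un_le _ _) (dot_un_le _ _) (dot_un_le _ _)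
      _ ≤ _ := by rw [mul_one]; exact prod4_le _ _ _ _

lemma E_t1 [Nonempty m] : ∑ i, ∑ j, ∑ k, ∑ l, ∫ x, t1 i j k l x ∂(nu m ι) ≤
    3 * (Fintype.card ι * (3 * (V4 + V2 ^ 2) * (Fintype.card m : ℝ) ^ 2) + (Fintype.card ι : ℝ)^2 * (V2 ^ 2 * Fintype.card m)) := by
  have h2 := V2_nonneg
  have h4 := V4_nonneg
  have hp : ∀ i k : ι, i ≠ k → ∫ x, t1 i i k k x ∂(nu m ι) ≤ V2 ^ 2 * Fintype.card m := by
    intro i k hik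
    apply le_of_eq
    rw [(integral_resample _ i _ (int_t1 i i k k)).2]
    have : ∀ x : ι → m → ℝ, ∫ y, t1 i i k k (Function.update x i y) ∂(gm m) = V2 * ww (x k) ^ 2 := by
      intro x
      have := mu2 (un (x k)) (un (x k))
      rw [un_unit, mul_one] at this
      rw [← this, ← integral_mul_const]
      congr 1; ext y
      simp only [t1, Function.update_self, Function.update_of_ne (Ne.symm hik), un_unit]
      ring
    simp only [this]
    rw [integral_const_mul, nu_eval k (fun s => ww s ^ 2) (meas_ww.pow_const _), E_w2]
    ring
  apply comb4 (fun i j k l : ι => ∫ x, t1 i j k l x ∂(nu m ι)) _ _ _ _ (by positivity) (by positivity) hp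
  · intro i j hij
    refine le_trans (integral_mono (int_t1 _ _ _ _) (int_t1 i i j j) ?_) (hp i j hij)
    intro x
    simp only [t1, un_unit]
    rw [dotProduct_comm (un (x j)) (un (x i))]
    set K := un (x i) ⬝ᵥ un (x j)
    have hK : K^2 ≤ 1 := (sq_le_one_iff_abs_le_one _).2 (dot_un_le _ _)
    have : 0 ≤ (ww (x i) * ww (x j))^2 * K^2 := by positivity
    nlinarith
  · intro i
    have : ∀ x : ι → m → ℝ, t1 i i i i x = ww (x i) ^ 4 := by
      intro x; simp only [t1, un_unit]; ring
    simp only [this]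
    rw [nu_eval i (fun s => ww s ^ 4) (meas_ww.pow_const _)]
    exact E_w4
  · intro i j k l h1 h2 h3
    rw [(integral_resample _ i _ (int_t1 i j k l)).2]
    have : ∀ x : ι → m → ℝ, ∫ y, t1 i j k l (Function.update x i y) ∂(gm m) = 0 := by
      intro x
      have := mu0 (un (x l)) (un (x j))
      have h5 : ∫ y, (ww (x j) * ww (x k) * ww (x l) * ((un (x j) ⬝ᵥ un (x k)) * (un (x k) ⬝ᵥ un (x l)))) * (ww y * ((un (x l) ⬝ᵥ un y) * (un y ⬝ᵥ un (x j)))) ∂(gm m) = 0 := by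
        rw [integral_const_mul, this, mul_zero]
      rw [← h5]
      congr 1; ext y
      simp only [t1, Function.update_self, Function.update_of_ne (Ne.symm h1), Function.update_of_ne (Ne.symm h2), Function.update_of_ne (Ne.symm h3)]
      ring
    simp only [this, integral_zero]
  · intro i j k l
    congr 1; ext x; simp only [t1]; ring

lemma fro_M1 (x : ι → m → ℝ) : fro (M1 x * M1 x) = ((Fintype.card ι : ℝ)⁻¹)^4 * ∑ i, ∑ j, ∑ k, ∑ l, t1 i j k l x := by
  have : M1 x = (Fintype.card ι : ℝ)⁻¹ • ∑ j, ww (x j) • vecMulVec (un (x j)) (un (x j)) := rfl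
  rw [this, smul_mul_smul_comm, fro_smul, fro4_sum]
  unfold t1
  ring

lemma int_M1 [Nonempty m] : Integrable (fun x : ι → m → ℝ => fro (M1 x * M1 x)) (nu m ι) := by
  simp only [fro_M1]
  exact (integrable_finsetSum _ fun a _ => integrable_finsetSum _ fun b _ => integrable_finsetSum _ fun c _ => integrable_finsetSum _ fun e _ => int_t1 a b c e).const_mul _

lemma integral_sum4 {α : Type*} [MeasurableSpace α] {ν : Measure α} (f : ι → ι → ι → ι → α → ℝ) (h : ∀ i j k l, Integrable (f i j k l) ν) :
    ∫ x, (∑ i, ∑ j, ∑ k, ∑ l, f i j k l x) ∂ν = ∑ i, ∑ j, ∑ k, ∑ l, ∫ x, f i j k l x ∂ν := by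
  rw [integral_finsetSum _ fun a _ => integrable_finsetSum _ fun b _ => integrable_finsetSum _ fun c _ => integrable_finsetSum _ fun e _ => h a b c e]
  refine Finset.sum_congr rfl fun a _ => ?_
  rw [integral_finsetSum _ fun b _ => integrable_finsetSum _ fun c _ => integrable_finsetSum _ fun e _ => h a b c e]
  refine Finset.sum_congr rfl fun b _ => ?_
  rw [integral_finsetSum _ fun c _ => integrable_finsetSum _ fun e _ => h a b c e]
  refine Finset.sum_congr rfl fun c _ => ?_
  rw [integral_finsetSum _ fun e _ => h a b c e]

noncomputable def C1 : ℝ := 9 * (V4 + V2 ^ 2)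

lemma K1 [Nonempty m] [Nonempty ι] {κ : ℝ} (hκ : 0 < κ) :
    nu m ι {x | κ ^ 4 * ((Fintype.card m : ℝ) / Fintype.card ι) ^ 2 < fro (M1 x * M1 x)} ≤
      ENNReal.ofReal ((C1 / κ^4) * (1 / (Fintype.card ι : ℝ) + 1 / Fintype.card m)) := by
  have hd : (0 : ℝ) < Fintype.card m := by exact_mod_cast Fintype.card_pos
  have hn : (0 : ℝ) < Fintype.card ι := by exact_mod_cast Fintype.card_pos
  have h2 := V2_nonneg
  have h4 := V4_nonneg
  refine (markov' int_M1 (fun x => fro_nonneg _) (B := ((Fintype.card ι : ℝ)⁻¹)^4 * (C1 * (Fintype.card ι * (Fintype.card m : ℝ) ^ 2 + (Fintype.card ι : ℝ)^2 * Fintype.card m))) ?_ (by positivity)).trans (ENNReal.ofReal_le_ofReal (le_of_eq ?_))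
  · simp only [fro_M1]
    rw [integral_const_mul, integral_sum4 _ int_t1]
    gcongr
    refine E_t1.trans ?_
    unfold C1
    have : 0 ≤ (Fintype.card ι : ℝ)^2 * (Fintype.card m : ℝ) * V2^2 := by positivity
    have : 0 ≤ (Fintype.card ι : ℝ)^2 * (Fintype.card m : ℝ) * V4 := by positivity
    nlinarith
  · field_simp

end P3
end TY

open MeasureTheory ProbabilityTheory Filter Matrix
set_option linter.unusedSectionVars false

namespace TY
section P4
variable {m ι : Type*} [Fintype m] [DecidableEq m] [Fintype ι] [DecidableEq ι]

/-- centered squared inner product of directions -/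
noncomputable def qq (x y : m → ℝ) : ℝ := (un x ⬝ᵥ un y) ^ 2 - 1 / Fintype.card m

lemma qq_comm (x y : m → ℝ) : qq x y = qq y x := by unfold qq; rw [dotProduct_comm]

lemma qq_abs [Nonempty m] (x y : m → ℝ) : |qq x y| ≤ 1 := by
  have hd : (1 : ℝ) ≤ Fintype.card m := by exact_mod_cast Fintype.card_pos
  have h1 : 1 / (Fintype.card m : ℝ) ≤ 1 := by rw [div_le_one (by linarith)]; exact hd
  have h0 : 0 ≤ 1 / (Fintype.card m : ℝ) := by positivity
  have hK : (un x ⬝ᵥ un y)^2 ≤ 1 := (sq_le_one_iff_abs_le_one _).2 (dot_un_le _ _)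
  have := sq_nonneg (un x ⬝ᵥ un y)
  rw [qq, abs_le]; constructor <;> linarith

lemma qq_sq [Nonempty m] (x y : m → ℝ) : qq x y ^ 2 ≤ 1 := (sq_le_one_iff_abs_le_one _).2 (qq_abs _ _)

lemma meas_una (a : m) : Measurable (fun x : m → ℝ => un x a) := (measurable_pi_apply a).comp meas_un

lemma meas_qq (y : m → ℝ) : Measurable (fun x : m → ℝ => qq x y) := by
  unfold qq dotProduct
  exact ((Finset.measurable_sum _ fun a _ => (meas_una a).mul_const _).pow_const 2).sub_const _

lemma meas_qqn (i j : ι) : Measurable (fun x : ι → m → ℝ => qq (x i) (x j)) := by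
  unfold qq
  exact ((meas_K i j).pow_const 2).sub_const _

lemma int_bdd {α : Type*} [MeasurableSpace α] {μ : Measure α} [IsFiniteMeasure μ] {f : α → ℝ} (hf : Measurable f) (C : ℝ) (h : ∀ x, |f x| ≤ C) : Integrable f μ :=
  (integrable_const C).mono' hf.aestronglyMeasurable (Eventually.of_forall h)

variable (m) in
/-- variance scale -/
noncomputable def c0 : ℝ := (C0 + 1) / (Fintype.card m : ℝ) ^ 2

lemma c0_pos [Nonempty m] : 0 < c0 m := by
  have hd : (0 : ℝ) < Fintype.card m := by exact_mod_cast Fintype.card_pos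
  have := C0_nonneg
  unfold c0; positivity

lemma E_c0' [Nonempty m] (A : Matrix m m ℝ) (hA : Aᵀ = A) :
    ∫ x, (un x ⬝ᵥ A *ᵥ un x - A.trace / Fintype.card m) ^ 2 ∂(gm m) ≤ c0 m * fro A := by
  refine (E_c0 A hA).trans ?_
  have := fro_nonneg A
  unfold c0
  gcongr; linarith

lemma qq_eq [Nonempty m] (x y : m → ℝ) : qq y x = un y ⬝ᵥ (vecMulVec (un x) (un x)) *ᵥ un y - (vecMulVec (un x) (un x)).trace / Fintype.card m := by
  rw [trace_vecMulVec, un_unit, qq, quad_vecMulVec]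
  rw [dotProduct_comm]

lemma fro_vmv [Nonempty m] (x : m → ℝ) : fro (vecMulVec (un x) (un x)) = 1 := by
  rw [fro_eq_trace _ (transpose_vecMulVec _ _), vecMulVec_mul_vecMulVec, un_unit, one_smul, trace_vecMulVec, un_unit]

lemma E_qq2 [Nonempty m] (x : m → ℝ) : ∫ y, qq y x ^ 2 ∂(gm m) ≤ c0 m := by
  have := E_c0' (vecMulVec (un x) (un x)) (transpose_vecMulVec _ _)
  rw [fro_vmv, mul_one] at this
  simp only [qq_eq]
  exact this

/-- averaged matrix -/
noncomputable def Gam (x : m → ℝ) : Matrix m m ℝ := Matrix.of fun a b => ∫ y, qq y x * Qm (un y) a b ∂(gm m)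

lemma int_qQ [Nonempty m] (x : m → ℝ) (a b : m) : Integrable (fun y => qq y x * Qm (un y) a b) (gm m) := by
  have hQ : ∀ y, Qm (un y) a b = un y a * un y b - (1 / (Fintype.card m : ℝ)) * (1 : Matrix m m ℝ) a b := by
    intro y; simp [Qm, vecMulVec_apply]
  simp only [hQ]
  apply int_bdd ((meas_qq x).mul (((meas_una a).mul (meas_una b)).sub_const _)) (1 * (1 + |(1 / (Fintype.card m : ℝ)) * (1 : Matrix m m ℝ) a b|))
  intro y
  have : |un y a * un y b| ≤ 1 := by
    rw [abs_mul]; exact mul_le_one₀ (un_abs_le y a) (abs_nonneg _) (un_abs_le y b)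
  refine (abs_mul _ _).trans_le ?_
  exact mul_le_mul (qq_abs y x) ((abs_sub _ _).trans (add_le_add this le_rfl)) (abs_nonneg _) zero_le_one

lemma Gam_t (x : m → ℝ) : (Gam x)ᵀ = Gam x := by
  ext a b
  simp only [Gam, transpose_apply, of_apply]
  congr 1; ext y
  rw [← transpose_apply (Qm (un y)) , Qm_t]

lemma Gam_lin [Nonempty m] (x : m → ℝ) (C : Matrix m m ℝ) :
    (C * Gam x).trace = ∫ y, qq y x * (un y ⬝ᵥ C *ᵥ un y - C.trace / Fintype.card m) ∂(gm m) := by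
  simp only [← trace_mul_Qm]
  simp only [Matrix.trace, Matrix.diag, Matrix.mul_apply, Gam, of_apply, Finset.mul_sum, ← integral_const_mul]
  have hI : ∀ i j, Integrable (fun a => qq a x * (C i j * Qm (un a) j i)) (gm m) := by
    intro i j
    convert (int_qQ x j i).const_mul (C i j) using 2; ring
  rw [integral_finsetSum _ fun i _ => integrable_finsetSum _ fun j _ => hI i j]
  refine Finset.sum_congr rfl fun i _ => ?_
  rw [integral_finsetSum _ fun j _ => hI i j]
  refine Finset.sum_congr rfl fun j _ => ?_
  congr 1; ext y; ring

lemma Gam_tr [Nonempty m] (x : m → ℝ) : (Gam x).trace = 0 := by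
  have hd : (0 : ℝ) < Fintype.card m := by exact_mod_cast Fintype.card_pos
  have := Gam_lin x 1
  rw [Matrix.one_mul] at this
  rw [this]
  have : ∀ y : m → ℝ, qq y x * (un y ⬝ᵥ (1 : Matrix m m ℝ) *ᵥ un y - (1 : Matrix m m ℝ).trace / Fintype.card m) = 0 := by
    intro y
    rw [one_mulVec, un_unit, trace_one, div_self hd.ne']; simp
  simp only [this, integral_zero]

lemma Gam_quad [Nonempty m] (x z : m → ℝ) : un z ⬝ᵥ Gam x *ᵥ un z = ∫ y, qq y x * qq y z ∂(gm m) := by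
  rw [← trace_mul_vecMulVec, Matrix.trace_mul_comm, Gam_lin]
  simp only [← qq_eq]

lemma meas_quad (A : Matrix m m ℝ) : Measurable fun x : m → ℝ => un x ⬝ᵥ A *ᵥ un x := by
  unfold mulVec dotProduct
  exact Finset.measurable_sum _ fun a _ => (meas_una a).mul (Finset.measurable_sum _ fun b _ => (meas_una b).const_mul _)

lemma quad_sq_le [Nonempty m] (A : Matrix m m ℝ) (x : m → ℝ) : (un x ⬝ᵥ A *ᵥ un x) ^ 2 ≤ fro A := by
  have a1 := sq_dot_le (un x) (A *ᵥ un x)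
  have a2 := fro_mulVec A (un x)
  rw [un_unit] at a1 a2
  linarith

lemma Gam_fro [Nonempty m] (x : m → ℝ) : fro (Gam x) ≤ c0 m ^ 2 := by
  have hc := c0_pos (m := m)
  have e := Gam_lin x (Gam x)
  rw [← fro_eq_trace _ (Gam_t x)] at e
  have h2 := E_c0' (Gam x) (Gam_t x)
  rw [Gam_tr] at e h2
  simp only [zero_div, sub_zero] at e h2
  have h1 := E_qq2 x
  have i1 : Integrable (fun y => qq y x ^ 2) (gm m) := int_bdd ((meas_qq x).pow_const 2) 1 (fun y => by rw [abs_of_nonneg (sq_nonneg _)]; exact qq_sq _ _)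
  have i2 : Integrable (fun y => (un y ⬝ᵥ Gam x *ᵥ un y) ^ 2) (gm m) := int_bdd ((meas_quad _).pow_const 2) (fro (Gam x)) (fun y => by rw [abs_of_nonneg (sq_nonneg _)]; exact quad_sq_le _ _)
  have i3 : Integrable (fun y => qq y x * (un y ⬝ᵥ Gam x *ᵥ un y)) (gm m) := by
    apply (i1.add i2).mono' ((meas_qq x).mul (meas_quad _)).aestronglyMeasurable
    filter_upwards with y
    rw [Real.norm_eq_abs, abs_le]
    simp only [Pi.add_apply, Pi.mul_apply]
    constructor <;> nlinarith [sq_nonneg (qq y x + un y ⬝ᵥ Gam x *ᵥ un y), sq_nonneg (qq y x - un y ⬝ᵥ Gam x *ᵥ un y), sq_nonneg (qq y x), sq_nonneg (un y ⬝ᵥ Gam x *ᵥ un y)]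
  have h3 : ∫ y, (2 * c0 m) * (qq y x * (un y ⬝ᵥ Gam x *ᵥ un y)) ∂(gm m) ≤ ∫ y, ((c0 m)^2 * qq y x ^ 2 + (un y ⬝ᵥ Gam x *ᵥ un y)^2) ∂(gm m) := by
    apply integral_mono (i3.const_mul _) ((i1.const_mul _).add i2)
    intro y
    simp only [Pi.add_apply]
    nlinarith [sq_nonneg (c0 m * qq y x - un y ⬝ᵥ Gam x *ᵥ un y)]
  rw [integral_const_mul, ← e, integral_add (i1.const_mul _) i2, integral_const_mul] at h3
  have h4 : (c0 m)^2 * ∫ y, qq y x ^ 2 ∂(gm m) ≤ (c0 m)^2 * c0 m := by gcongr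
  have : c0 m * fro (Gam x) ≤ c0 m * (c0 m)^2 := by nlinarith
  exact le_of_mul_le_mul_left this hc

lemma E_g2 [Nonempty m] (x : m → ℝ) : ∫ z, (∫ y, qq y x * qq y z ∂(gm m)) ^ 2 ∂(gm m) ≤ c0 m ^ 3 := by
  have hc := c0_pos (m := m)
  have h2 := E_c0' (Gam x) (Gam_t x)
  rw [Gam_tr] at h2
  simp only [zero_div, sub_zero, Gam_quad] at h2
  refine h2.trans ?_
  calc _ ≤ c0 m * c0 m ^ 2 := by gcongr; exact Gam_fro x
    _ = _ := by ring

/-- off-diagonal entry -/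
noncomputable def hh (x : ι → m → ℝ) (i j : ι) : ℝ := if i = j then 0 else qq (x i) (x j)

lemma hh_abs [Nonempty m] (x : ι → m → ℝ) (i j : ι) : |hh x i j| ≤ 1 := by
  unfold hh; split_ifs
  · simp
  · exact qq_abs _ _

lemma meas_hh (i j : ι) : Measurable (fun x : ι → m → ℝ => hh x i j) := by
  unfold hh; split_ifs
  · exact measurable_const
  · exact meas_qqn i j

noncomputable def t3 (i j k l : ι) (x : ι → m → ℝ) : ℝ := hh x i j * hh x j k * hh x k l * hh x l i

lemma int_t3 [Nonempty m] (i j k l : ι) : Integrable (t3 i j k l) (nu m ι) := by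
  unfold t3
  exact int_bdd ((((meas_hh i j).mul (meas_hh j k)).mul (meas_hh k l)).mul (meas_hh l i)) 1
    (fun x => abs_prod4_le_one (hh_abs _ _ _) (hh_abs _ _ _) (hh_abs _ _ _) (hh_abs _ _ _))

lemma fro_Hm (x : ι → m → ℝ) : fro (Hm (fun j => un (x j)) * Hm (fun j => un (x j))) =
    ((Fintype.card ι : ℝ)⁻¹)^4 * ∑ i, ∑ j, ∑ k, ∑ l, t3 i j k l x := by
  have he : ∀ i j, Hm (fun j => un (x j)) i j = (Fintype.card ι : ℝ)⁻¹ * hh x i j := by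
    intro i j
    unfold Hm hh qq
    split_ifs
    · simp
    · field_simp
  rw [fro_eq_trace _ (by rw [transpose_mul, Hm_t])]
  rw [Matrix.mul_assoc]
  simp only [Matrix.trace, Matrix.diag, Matrix.mul_apply, he, t3, Finset.mul_sum]
  refine Finset.sum_congr rfl fun i _ => Finset.sum_congr rfl fun j _ => Finset.sum_congr rfl fun k _ => Finset.sum_congr rfl fun l _ => ?_
  ring

lemma E_q2 [Nonempty m] (i j : ι) (h : i ≠ j) : Integrable (fun x : ι → m → ℝ => qq (x i) (x j) ^ 2) (nu m ι) ∧ ∫ x, qq (x i) (x j) ^ 2 ∂(nu m ι) ≤ c0 m := by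
  have hi : Integrable (fun x : ι → m → ℝ => qq (x i) (x j) ^ 2) (nu m ι) := int_bdd ((meas_qqn i j).pow_const 2) 1 (fun y => by rw [abs_of_nonneg (sq_nonneg _)]; exact qq_sq _ _)
  refine ⟨hi, ?_⟩
  have r := integral_resample _ i _ hi
  rw [r.2]
  simp only [Function.update_self, Function.update_of_ne (Ne.symm h)] at r ⊢
  calc _ ≤ ∫ x : ι → m → ℝ, c0 m ∂(nu m ι) := integral_mono r.1 (integrable_const _) (fun x => E_qq2 _)
    _ = _ := by simp

lemma E_q22 [Nonempty m] (i j l : ι) (h : i ≠ j) (h' : i ≠ l) (h'' : j ≠ l) : ∫ x, qq (x i) (x j) ^ 2 * qq (x i) (x l) ^ 2 ∂(nu m ι) ≤ c0 m ^ 2 := by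
  have hi : Integrable (fun x : ι → m → ℝ => qq (x i) (x j) ^ 2 * qq (x i) (x l) ^ 2) (nu m ι) := int_bdd (((meas_qqn i j).pow_const 2).mul ((meas_qqn i l).pow_const 2)) 1 (fun y => by 
    rw [abs_of_nonneg (by positivity)]; exact mul_le_one₀ (qq_sq _ _) (sq_nonneg _) (qq_sq _ _))
  have r := integral_resample _ j _ hi
  rw [r.2]
  simp only [Function.update_self, Function.update_of_ne h, Function.update_of_ne (Ne.symm h''), integral_mul_const] at r ⊢
  calc _ ≤ ∫ x : ι → m → ℝ, c0 m * qq (x i) (x l) ^ 2 ∂(nu m ι) := by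
        refine integral_mono r.1 ((E_q2 i l h').1.const_mul _) (fun x => ?_)
        refine mul_le_mul_of_nonneg_right ?_ (sq_nonneg _)
        simp only [qq_comm (x i)]
        exact E_qq2 _
    _ ≤ c0 m * c0 m := by
        rw [integral_const_mul]
        have := c0_pos (m := m)
        gcongr
        exact (E_q2 i l h').2
    _ = _ := by ring

lemma E_q4 [Nonempty m] (i j k l : ι) (h1 : i ≠ j) (h2 : i ≠ k) (h3 : i ≠ l) (h4 : j ≠ k) (h5 : j ≠ l) (h6 : k ≠ l) :
    ∫ x, t3 i j k l x ∂(nu m ι) ≤ c0 m ^ 3 := by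
  have r := integral_resample _ j _ (int_t3 (m := m) i j k l)
  rw [r.2]
  have e1 : ∀ x : ι → m → ℝ, ∫ y, t3 i j k l (Function.update x j y) ∂(gm m) = (∫ y, qq y (x i) * qq y (x k) ∂(gm m)) * (qq (x k) (x l) * qq (x l) (x i)) := by
    intro x
    rw [← integral_mul_const]
    congr 1; ext y
    simp only [t3, hh, if_neg h1, if_neg h4, if_neg h6, if_neg h3.symm, Function.update_self, Function.update_of_ne h1, Function.update_of_ne (Ne.symm h4), Function.update_of_ne (Ne.symm h5)]
    rw [qq_comm (x i) y]; ring
  simp only [e1] at r ⊢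
  have r2 := integral_resample _ l _ r.1
  rw [r2.2]
  have e2 : ∀ x : ι → m → ℝ, ∫ z, (∫ y, qq y (Function.update x l z i) * qq y (Function.update x l z k) ∂(gm m)) * (qq (Function.update x l z k) (Function.update x l z l) * qq (Function.update x l z l) (Function.update x l z i)) ∂(gm m) = (∫ y, qq y (x i) * qq y (x k) ∂(gm m)) ^ 2 := by
    intro x
    simp only [Function.update_self, Function.update_of_ne h3, Function.update_of_ne h6]
    rw [integral_const_mul, sq]
    congr 2; ext z
    rw [qq_comm (x k) z]; ring
  simp only [e2] at r2 ⊢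
  have r3 := integral_resample _ k _ r2.1
  rw [r3.2]
  simp only [Function.update_self, Function.update_of_ne h2] at r3 ⊢
  calc _ ≤ ∫ x : ι → m → ℝ, c0 m ^ 3 ∂(nu m ι) := integral_mono r3.1 (integrable_const _) (fun x => E_g2 _)
    _ = _ := by simp

lemma E_t3 [Nonempty m] (i j k l : ι) : ∫ x, t3 i j k l x ∂(nu m ι) ≤ c0 m ^ 3 + (if i = k then c0 m ^ 2 else 0) + (if j = l then c0 m ^ 2 else 0) + (if i = k then (if j = l then c0 m else 0) else 0) := by
  have hc := c0_pos (m := m)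
  have n1 : 0 ≤ (if i = k then c0 m ^ 2 else 0) := by split_ifs <;> positivity
  have n2 : 0 ≤ (if j = l then c0 m ^ 2 else 0) := by split_ifs <;> positivity
  have n3 : 0 ≤ (if i = k then (if j = l then c0 m else 0) else 0) := by split_ifs <;> positivity
  have n0 : 0 ≤ c0 m ^ 3 := by positivity
  by_cases z : i = j ∨ j = k ∨ k = l ∨ l = i
  · have : ∀ x : ι → m → ℝ, t3 i j k l x = 0 := by
      intro x
      rcases z with z | z | z | z <;> simp [t3, hh, z]
    simp only [this, integral_zero]
    linarith
  push Not at z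
  obtain ⟨z1, z2, z3, z4⟩ := z
  by_cases a : i = k
  · subst a
    have e : ∀ x : ι → m → ℝ, t3 i j i l x = qq (x i) (x j) ^ 2 * qq (x i) (x l) ^ 2 := by
      intro x
      simp only [t3, hh, if_neg z1, if_neg z2, if_neg z3, if_neg z4]
      rw [qq_comm (x j), qq_comm (x l)]; ring
    simp only [e]
    by_cases b : j = l
    · subst b
      simp only [if_true] at n1 n2 n3 ⊢
      have : ∫ x, qq (x i) (x j) ^ 2 * qq (x i) (x j) ^ 2 ∂(nu m ι) ≤ ∫ x, qq (x i) (x j) ^ 2 ∂(nu m ι) := by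
        refine integral_mono (int_bdd (((meas_qqn i j).pow_const 2).mul ((meas_qqn i j).pow_const 2)) 1 (fun y => by 
          rw [abs_of_nonneg (by positivity)]; exact mul_le_one₀ (qq_sq _ _) (sq_nonneg _) (qq_sq _ _))) (E_q2 i j z1).1 ?_
        intro x
        exact mul_le_of_le_one_right (sq_nonneg _) (qq_sq _ _)
      have h2 := (E_q2 (m := m) i j z1).2
      linarith
    · have := E_q22 (m := m) i j l z1 z3 b
      simp only [if_true] at n1 n3 ⊢
      linarith
  · by_cases b : j = l
    · subst b
      have e : ∀ x : ι → m → ℝ, t3 i j k j x = qq (x j) (x i) ^ 2 * qq (x j) (x k) ^ 2 := by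
        intro x
        simp only [t3, hh, if_neg z1, if_neg z2, if_neg z3, if_neg z4]
        rw [qq_comm (x i), qq_comm (x k)]; ring
      simp only [e]
      have := E_q22 (m := m) j i k z4 z2 a
      simp only [if_true] at n2 n3 ⊢
      linarith
    · have := E_q4 (m := m) i j k l z1 a (Ne.symm z4) z2 b z3
      linarith

lemma K3 [Nonempty m] [Nonempty ι] {κ : ℝ} (hκ : 0 < κ) :
    nu m ι {x | (κ / Fintype.card m) ^ 4 < fro (Hm (fun j => un (x j)) * Hm (fun j => un (x j)))} ≤
      ENNReal.ofReal (((C0 + 1)^3 * (1 / (Fintype.card m : ℝ))^2 + 2 * (C0 + 1)^2 * (1 / (Fintype.card ι : ℝ)) + (C0 + 1) * ((Fintype.card m : ℝ) / Fintype.card ι)^2) / κ^4) := by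
  have hd : (0 : ℝ) < Fintype.card m := by exact_mod_cast Fintype.card_pos
  have hn : (0 : ℝ) < Fintype.card ι := by exact_mod_cast Fintype.card_pos
  have hint : Integrable (fun x : ι → m → ℝ => fro (Hm (fun j => un (x j)) * Hm (fun j => un (x j)))) (nu m ι) := by
    simp only [fro_Hm]
    exact (integrable_finsetSum _ fun a _ => integrable_finsetSum _ fun b _ => integrable_finsetSum _ fun c _ => integrable_finsetSum _ fun e _ => int_t3 a b c e).const_mul _
  refine (markov' hint (fun x => fro_nonneg _) (B := ((Fintype.card ι : ℝ)⁻¹)^4 * ((Fintype.card ι : ℝ)^4 * c0 m ^ 3 + 2 * (Fintype.card ι : ℝ)^3 * c0 m ^ 2 + (Fintype.card ι : ℝ)^2 * c0 m)) ?_ (by positivity)).trans (ENNReal.ofReal_le_ofReal (le_of_eq ?_))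
  · simp only [fro_Hm]
    rw [integral_const_mul, integral_sum4 _ int_t3]
    gcongr
    calc _ ≤ ∑ i : ι, ∑ j : ι, ∑ k : ι, ∑ l : ι, (c0 m ^ 3 + (if i = k then c0 m ^ 2 else 0) + (if j = l then c0 m ^ 2 else 0) + (if i = k then (if j = l then c0 m else 0) else 0)) :=
          Finset.sum_le_sum fun i _ => Finset.sum_le_sum fun j _ => Finset.sum_le_sum fun k _ => Finset.sum_le_sum fun l _ => E_t3 i j k l
      _ = _ := by
          have e1 : ∀ i k j : ι, ∑ l : ι, (if i = k then (if j = l then c0 m else 0) else 0) = if i = k then c0 m else 0 := by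
            intro i k j; split_ifs <;> simp
          simp only [Finset.sum_add_distrib, e1, Finset.sum_const, Finset.sum_ite_eq, Finset.mem_univ, if_true, Finset.card_univ, nsmul_eq_mul, ← Finset.mul_sum]
          ring
  · unfold c0; field_simp

end P4
end TY

open MeasureTheory ProbabilityTheory Filter Matrix
set_option linter.unusedSectionVars false

namespace TY
section P5
variable {m ι : Type*} [Fintype m] [DecidableEq m] [Fintype ι] [DecidableEq ι]

lemma meas_inv (a b : m) : Measurable (fun A : m → m → ℝ => (Matrix.of A)⁻¹ a b) := by
  have c0 : Continuous (fun A : m → m → ℝ => Matrix.of A) := continuous_id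
  have h1 : Measurable (fun A : m → m → ℝ => (Matrix.of A).det) := (Continuous.matrix_det c0).measurable
  have h2 : Measurable (fun A : m → m → ℝ => (Matrix.of A).adjugate a b) :=
    ((Continuous.matrix_adjugate c0).matrix_elem a b).measurable
  have : (fun A : m → m → ℝ => (Matrix.of A)⁻¹ a b) = fun A => (Matrix.of A).det⁻¹ * (Matrix.of A).adjugate a b := by
    ext A; rw [Matrix.inv_def, Matrix.smul_apply, Ring.inverse_eq_inv', smul_eq_mul]
  rw [this]
  exact h1.inv.mul h2

lemma int_aff {α : Type*} [MeasurableSpace α] {μ : Measure α} [IsProbabilityMeasure μ] {S : α → ℝ} (hS : Integrable S μ) (a b c : ℝ) :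
    Integrable (fun x => a * S x - b + c) μ ∧ ∫ x, (a * S x - b + c) ∂μ = a * ∫ x, S x ∂μ - b + c := by
  have h1 : Integrable (fun x => a * S x) μ := hS.const_mul a
  have h2 : Integrable (fun x => a * S x - b) μ := h1.sub (integrable_const _)
  refine ⟨h2.add (integrable_const _), ?_⟩
  rw [integral_add h2 (integrable_const _), integral_sub h1 (integrable_const _), integral_const_mul]
  simp

/-- leave-one-out scatter -/
noncomputable def SS (j : ι) (x : ι → m → ℝ) : Matrix m m ℝ := Sm (fun i => un (x i)) j
noncomputable def FF (j : ι) (x : ι → m → ℝ) : ℝ := fro (SS j x - 1)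
noncomputable def NN (j : ι) (x : ι → m → ℝ) : ℝ := Nj (fun i => un (x i)) j

lemma SS_t (j : ι) (x : ι → m → ℝ) : (SS j x)ᵀ = SS j x := by
  unfold SS Sm
  rw [transpose_smul, transpose_sum]
  congr 1
  refine Finset.sum_congr rfl fun i _ => ?_
  split_ifs <;> simp [transpose_vecMulVec]

lemma SSi_t (j : ι) (x : ι → m → ℝ) : ((SS j x)⁻¹ - 1)ᵀ = (SS j x)⁻¹ - 1 := by
  rw [transpose_sub, transpose_nonsing_inv, SS_t, transpose_one]

lemma SS_update (j : ι) (x : ι → m → ℝ) (y : m → ℝ) : SS j (Function.update x j y) = SS j x := by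
  unfold SS Sm
  congr 1
  refine Finset.sum_congr rfl fun i _ => ?_
  split_ifs with h
  · rfl
  · simp only [Function.update_of_ne h]

lemma meas_SS (j : ι) : Measurable (fun (x : ι → m → ℝ) (a b : m) => SS j x a b) := by
  apply measurable_pi_lambda
  intro a
  apply measurable_pi_lambda
  intro b
  have : ∀ x : ι → m → ℝ, SS j x a b = ((Fintype.card m : ℝ) / Fintype.card ι) * ∑ i, if i = j then 0 else un (x i) a * un (x i) b := by
    intro x
    unfold SS Sm
    rw [Matrix.smul_apply, Matrix.sum_apply, smul_eq_mul]
    congr 1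
    refine Finset.sum_congr rfl fun i _ => ?_
    split_ifs <;> simp [vecMulVec_apply]
  simp only [this]
  refine (Finset.measurable_sum _ fun i _ => ?_).const_mul _
  split_ifs
  · exact measurable_const
  · exact ((meas_una a).comp (measurable_pi_apply i)).mul ((meas_una b).comp (measurable_pi_apply i))

lemma NN_eq (j : ι) (x : ι → m → ℝ) : NN j x = if fro ((SS j x)⁻¹ - 1) ≤ 4 * FF j x then (un (x j) ⬝ᵥ ((SS j x)⁻¹ - 1) *ᵥ un (x j) - ((SS j x)⁻¹ - 1).trace / Fintype.card m) ^ 2 else 0 := rfl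

lemma FF_eq [Nonempty m] (j : ι) (x : ι → m → ℝ) : FF j x =
    ((Fintype.card m : ℝ) / Fintype.card ι)^2 * (∑ i, ∑ k, (if i = j then 0 else 1) * (if k = j then 0 else 1) * (un (x i) ⬝ᵥ un (x k)) ^ 2)
     - 2 * ((Fintype.card m : ℝ) / Fintype.card ι) * (∑ i, if i = j then 0 else 1) + Fintype.card m := by
  set a : ι → ℝ := fun i => if i = j then 0 else 1 with ha
  have hS : SS j x = ((Fintype.card m : ℝ) / Fintype.card ι) • ∑ i, a i • vecMulVec (un (x i)) (un (x i)) := by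
    unfold SS Sm
    congr 1
    refine Finset.sum_congr rfl fun i _ => ?_
    simp only [ha]; split_ifs <;> simp
  unfold FF
  rw [fro_eq_trace _ (by rw [transpose_sub, SS_t, transpose_one]), sub_mul, mul_sub, mul_sub, Matrix.one_mul, Matrix.mul_one, Matrix.one_mul, trace_sub, trace_sub, trace_sub, trace_one, hS, smul_mul_smul_comm, trace_smul, trace_smul, Finset.sum_mul_sum]
  simp only [trace_sum, smul_mul_smul_comm, trace_smul, vecMulVec_mul_vecMulVec, vecMulVec_smul, trace_vecMulVec, un_unit, smul_eq_mul, mul_one]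
  have : ∀ i k, a i * a k * (un (x i) ⬝ᵥ un (x k) * un (x i) ⬝ᵥ un (x k)) = a i * a k * (un (x i) ⬝ᵥ un (x k)) ^ 2 := by intro i k; ring
  simp only [this]
  ring

lemma E_K2 [Nonempty m] (i k : ι) : Integrable (fun x : ι → m → ℝ => (un (x i) ⬝ᵥ un (x k)) ^ 2) (nu m ι) ∧ 
    ∫ x, (un (x i) ⬝ᵥ un (x k)) ^ 2 ∂(nu m ι) = 1 / Fintype.card m + (if i = k then (1 - 1 / (Fintype.card m : ℝ)) else 0) := by
  have hi : Integrable (fun x : ι → m → ℝ => (un (x i) ⬝ᵥ un (x k)) ^ 2) (nu m ι) := int_bdd ((meas_K i k).pow_const 2) 1 (fun x => by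
    rw [abs_of_nonneg (sq_nonneg _)]; exact (sq_le_one_iff_abs_le_one _).2 (dot_un_le _ _))
  refine ⟨hi, ?_⟩
  split_ifs with h
  · subst h; simp [un_unit]
  · rw [(integral_resample _ i _ hi).2]
    simp only [Function.update_self, Function.update_of_ne (Ne.symm h)]
    have : ∀ x : ι → m → ℝ, ∫ y, (un y ⬝ᵥ un (x k)) ^ 2 ∂(gm m) = 1 / Fintype.card m := by
      intro x
      have := mu1 (un (x k)) (un (x k))
      rw [un_unit] at this
      rw [← this]
      congr 1; ext y
      rw [dotProduct_comm (un (x k)), sq]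
    simp only [this]
    simp

lemma E_FF [Nonempty m] [Nonempty ι] (j : ι) : Integrable (FF (m := m) j) (nu m ι) ∧ 
    ∫ x, FF (m := m) j x ∂(nu m ι) ≤ (Fintype.card m : ℝ)^2 / Fintype.card ι := by
  have hd : (1 : ℝ) ≤ Fintype.card m := by exact_mod_cast Fintype.card_pos
  have hn : (1 : ℝ) ≤ Fintype.card ι := by exact_mod_cast Fintype.card_pos
  have e : FF (m := m) j = fun x => _ := funext fun x => FF_eq j x
  have hI : ∀ i k : ι, Integrable (fun x : ι → m → ℝ => (if i = j then 0 else 1) * (if k = j then 0 else 1) * (un (x i) ⬝ᵥ un (x k)) ^ 2) (nu m ι) := fun i k => (E_K2 i k).1.const_mul _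
  have hI2 : Integrable (fun x : ι → m → ℝ => ∑ i, ∑ k, (if i = j then 0 else 1) * (if k = j then 0 else 1) * (un (x i) ⬝ᵥ un (x k)) ^ 2) (nu m ι) :=
    integrable_finsetSum _ fun i _ => integrable_finsetSum _ fun k _ => hI i k
  have hsum : ∑ i : ι, (if i = j then (0:ℝ) else 1) = Fintype.card ι - 1 := by
    have : ∀ i : ι, (if i = j then (0:ℝ) else 1) = 1 - (if i = j then 1 else 0) := by intro i; split_ifs <;> simp
    simp only [this, Finset.sum_sub_distrib]
    simp
  have hA := int_aff hI2 (((Fintype.card m : ℝ) / Fintype.card ι)^2) (2 * ((Fintype.card m : ℝ) / Fintype.card ι) * (∑ i, if i = j then 0 else 1)) (Fintype.card m)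
  rw [e]
  refine ⟨hA.1, ?_⟩
  refine hA.2.trans_le ?_
  rw [integral_finsetSum _ fun i _ => integrable_finsetSum _ fun k _ => hI i k]
  have e2 : ∀ i : ι, ∫ x, (∑ k, (if i = j then 0 else 1) * (if k = j then 0 else 1) * (un (x i) ⬝ᵥ un (x k)) ^ 2) ∂(nu m ι)
     = (if i = j then 0 else 1) * ((Fintype.card ι - 1) * (1 / (Fintype.card m : ℝ))) + (if i = j then 0 else 1) * (1 - 1 / (Fintype.card m : ℝ)) := by
    intro i
    rw [integral_finsetSum _ fun k _ => hI i k]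
    simp only [integral_const_mul, (E_K2 i _).2, mul_add, Finset.sum_add_distrib, mul_assoc]
    rw [← Finset.mul_sum, ← Finset.sum_mul, hsum]
    congr 1
    rw [Finset.sum_eq_single i (by intro k _ hk; simp [hk.symm]) (by simp), if_pos (rfl : i = i)]
    split_ifs <;> simp
  simp only [e2, Finset.sum_add_distrib, ← Finset.sum_mul, hsum]
  set d : ℝ := (Fintype.card m : ℝ)
  set n : ℝ := (Fintype.card ι : ℝ)
  have h0 : (d / n) ^ 2 * ((n - 1) * ((n - 1) * (1 / d)) + (n - 1) * (1 - 1 / d)) - 2 * (d / n) * (n - 1) + d = d * (1 + (d - 1) * (n - 1)) / n^2 := by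
    field_simp; ring
  rw [h0, div_le_div_iff₀ (by positivity) (by positivity)]
  have : 1 + (d - 1) * (n - 1) ≤ d * n := by nlinarith
  calc _ ≤ d * (d * n) * n := by gcongr
    _ = _ := by ring

lemma fro_meas {α : Type*} [MeasurableSpace α] (A : α → Matrix m m ℝ) (h : ∀ a b, Measurable fun x => A x a b) : Measurable fun x => fro (A x) := by
  unfold fro
  exact Finset.measurable_sum _ fun a _ => Finset.measurable_sum _ fun b _ => (h a b).pow_const 2

lemma meas_NN (j : ι) : Measurable (NN (m := m) j : (ι → m → ℝ) → ℝ) := by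
  have hi : ∀ a b, Measurable fun x : ι → m → ℝ => ((SS j x)⁻¹ - 1) a b := by
    intro a b
    simp only [Matrix.sub_apply]
    exact ((meas_inv a b).comp (meas_SS j)).sub_const _
  have hF : Measurable (FF (m := m) j : (ι → m → ℝ) → ℝ) := by
    unfold FF
    apply fro_meas
    intro a b
    simp only [Matrix.sub_apply]
    exact (measurable_pi_iff.1 (measurable_pi_iff.1 (meas_SS j) a) b).sub_const _
  have hu : ∀ a, Measurable fun x : ι → m → ℝ => un (x j) a := fun a => (meas_una a).comp (measurable_pi_apply j)
  have e : NN (m := m) j = fun x => _ := funext fun x => NN_eq j x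
  rw [e]
  refine Measurable.ite (measurableSet_le (fro_meas _ hi) (hF.const_mul _)) ?_ measurable_const
  refine Measurable.pow_const (Measurable.sub ?_ (Measurable.div_const ?_ _)) 2
  · unfold mulVec dotProduct
    exact Finset.measurable_sum _ fun a _ => (hu a).mul (Finset.measurable_sum _ fun b _ => (hi a b).mul (hu b))
  · exact Finset.measurable_sum _ fun a _ => hi a a

lemma NN_nonneg (j : ι) (x : ι → m → ℝ) : 0 ≤ NN j x := by
  rw [NN_eq]; split_ifs <;> positivity

lemma center_sq_le [Nonempty m] (A : Matrix m m ℝ) (x : m → ℝ) : (un x ⬝ᵥ A *ᵥ un x - A.trace / Fintype.card m) ^ 2 ≤ fro A := by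
  refine le_trans ?_ (fro_center A)
  refine le_trans (le_of_eq ?_) (quad_sq_le _ x)
  rw [sub_mulVec, smul_mulVec, one_mulVec, dotProduct_sub, dotProduct_smul, un_unit]; simp

lemma NN_le [Nonempty m] (j : ι) (x : ι → m → ℝ) : NN j x ≤ 4 * FF j x := by
  have : 0 ≤ FF j x := fro_nonneg _
  rw [NN_eq]; split_ifs with h
  · exact (center_sq_le _ _).trans h
  · positivity

lemma E_NN [Nonempty m] [Nonempty ι] (j : ι) : Integrable (NN (m := m) j) (nu m ι) ∧ 
    ∫ x, NN (m := m) j x ∂(nu m ι) ≤ 4 * (C0 + 1) / Fintype.card ι := by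
  have hd : (0 : ℝ) < Fintype.card m := by exact_mod_cast Fintype.card_pos
  have hc := c0_pos (m := m)
  have hi : Integrable (NN (m := m) j) (nu m ι) := ((E_FF j).1.const_mul 4).mono' (meas_NN j).aestronglyMeasurable (Eventually.of_forall fun x => by
    rw [Real.norm_eq_abs, abs_of_nonneg (NN_nonneg _ _)]; exact NN_le j x)
  refine ⟨hi, ?_⟩
  have r := integral_resample _ j _ hi
  rw [r.2]
  calc _ ≤ ∫ x, (c0 m * 4) * FF (m := m) j x ∂(nu m ι) := by
        refine integral_mono r.1 ((E_FF j).1.const_mul _) (fun x => ?_)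
        have hF : 0 ≤ FF j x := fro_nonneg _
        have hFu : ∀ y, FF j (Function.update x j y) = FF j x := fun y => by unfold FF; rw [SS_update]
        simp only [NN_eq, SS_update, hFu, Function.update_self]
        split_ifs with h
        · refine (E_c0' _ (SSi_t j x)).trans ?_
          rw [mul_assoc]; gcongr
        · simp; positivity
    _ ≤ (c0 m * 4) * ((Fintype.card m : ℝ)^2 / Fintype.card ι) := by
        rw [integral_const_mul]
        gcongr
        exact (E_FF j).2
    _ = _ := by unfold c0; field_simp

lemma K4 [Nonempty m] [Nonempty ι] {L : ℝ} (hL : 0 < L) :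
    nu m ι {x | L < 2 * ∑ j, Nj (fun i => un (x i)) j + 8 / Fintype.card ι} ≤ ENNReal.ofReal ((8 * (C0 + 1) + 8) / L) := by
  have hn : (1 : ℝ) ≤ Fintype.card ι := by exact_mod_cast Fintype.card_pos
  have hs : Integrable (fun x : ι → m → ℝ => ∑ j, NN j x) (nu m ι) := integrable_finsetSum _ fun j _ => (E_NN j).1
  refine markov' (ν := nu m ι) (f := fun x : ι → m → ℝ => 2 * ∑ j, NN j x + 8 / Fintype.card ι) ((hs.const_mul 2).add (integrable_const _)) (fun x => ?_) ?_ hL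
  · have : 0 ≤ ∑ j, NN j x := Finset.sum_nonneg fun j _ => NN_nonneg j x
    positivity
  · rw [integral_add (hs.const_mul 2) (integrable_const _), integral_const_mul, integral_finsetSum _ fun j _ => (E_NN j).1]
    have h1 : ∑ j : ι, ∫ x, NN (m := m) j x ∂(nu m ι) ≤ ∑ j : ι, 4 * (C0 + 1) / (Fintype.card ι : ℝ) := Finset.sum_le_sum fun j _ => (E_NN j).2
    have h2 : ∑ j : ι, 4 * (C0 + 1) / (Fintype.card ι : ℝ) = 4 * (C0 + 1) := by
      simp; field_simp
    have h3 : 8 / (Fintype.card ι : ℝ) ≤ 8 := by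
      rw [div_le_iff₀ (by linarith)]; linarith
    simp only [integral_const, probReal_univ, one_smul]
    linarith

end P5
end TY

open MeasureTheory ProbabilityTheory Filter Matrix
set_option linter.unusedSectionVars false

namespace TY
section P6
variable {m ι : Type*} [Fintype m] [DecidableEq m] [Fintype ι] [DecidableEq ι]

lemma inner_ofLp (x y : EuclideanSpace ℝ m) : inner ℝ x y = x.ofLp ⬝ᵥ y.ofLp := by
  rw [EuclideanSpace.inner_eq_star_dotProduct, dotProduct_comm]; simp

lemma law_dot [Nonempty m] (v : m → ℝ) (hv : v ⬝ᵥ v = 1) :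
    MeasurePreserving (fun x : m → ℝ => v ⬝ᵥ x) (gm m) (gaussianReal 0 1) := by
  obtain ⟨i0⟩ := ‹Nonempty m›
  have hon : Orthonormal ℝ (Set.domRestrict (({i0} : Set m)) (fun _ : m => (WithLp.toLp 2 v : EuclideanSpace ℝ m))) := by
    constructor
    · intro i
      have : ‖(WithLp.toLp 2 v : EuclideanSpace ℝ m)‖ ^ 2 = 1 := by
        rw [← real_inner_self_eq_norm_sq, inner_ofLp]; exact hv
      have h2 : ‖(WithLp.toLp 2 v : EuclideanSpace ℝ m)‖ = 1 := by
        nlinarith [norm_nonneg (WithLp.toLp 2 v : EuclideanSpace ℝ m)]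
      exact h2
    · intro i j hij
      exact absurd (Subtype.ext (by rw [i.2, j.2])) hij
  obtain ⟨b, hb⟩ := hon.exists_orthonormalBasis_extension_of_card_eq (by simp)
  have hb0 : (b i0).ofLp = v := by rw [hb i0 (by simp)]
  have hm : Measurable (fun x : m → ℝ => v ⬝ᵥ x) := by unfold dotProduct; fun_prop
  have key : (fun x : m → ℝ => v ⬝ᵥ x) ∘ (fun x : m → ℝ => ∑ i, x i • (b i).ofLp) = Function.eval i0 := by
    ext x
    simp only [Function.comp]
    rw [dotProduct_sum]
    have : ∀ i, v ⬝ᵥ x i • (b i).ofLp = if i = i0 then x i else 0 := by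
      intro i
      rw [dotProduct_smul, ← hb0, ← inner_ofLp, orthonormal_iff_ite.1 b.orthonormal]
      simp [eq_comm]
    simp [this]
  refine ⟨hm, ?_⟩
  have hr := rot b
  rw [← hr.map_eq, Measure.map_map hm hr.measurable, key]
  exact (measurePreserving_eval (fun _ : m => gaussianReal 0 1) i0).map_eq

lemma int_exp (s : ℝ) (hs : |s| = 1) : (0:ℝ) ∈ interior (integrableExpSet (fun y : ℝ => s * (y ^ 2 - 1)) (gaussianReal 0 1)) := by
  obtain ⟨C, hC, hI⟩ := IsGaussian.exists_integrable_exp_sq (gaussianReal 0 1)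
  rw [mem_interior_iff_mem_nhds]
  filter_upwards [Ioo_mem_nhds (show -C < 0 by linarith) hC] with t ht
  have ht' : |t| < C := abs_lt.2 ht
  refine Integrable.mono' (hI.const_mul (Real.exp C)) (by fun_prop) (Eventually.of_forall fun y => ?_)
  rw [Real.norm_eq_abs, Real.abs_exp, ← Real.exp_add]
  apply Real.exp_le_exp.2
  rw [Real.norm_eq_abs, sq_abs]
  have h1 : t * (s * (y^2 - 1)) ≤ |t| * (|y^2 - 1|) := by
    refine (le_abs_self _).trans ?_
    rw [abs_mul, abs_mul, hs, one_mul]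
  have h2 : |y^2 - 1| ≤ 1 + y^2 := by
    rw [abs_le]; constructor <;> nlinarith [sq_nonneg y]
  nlinarith [abs_nonneg t, abs_nonneg (y^2-1), sq_nonneg y]

lemma chern (s : ℝ) (hs : |s| = 1) : ∃ l ρ : ℝ, 0 < l ∧ 0 < ρ ∧ ρ < 1 ∧
    Integrable (fun y : ℝ => Real.exp (l * (s * (y ^ 2 - 1) - 1/40))) (gaussianReal 0 1) ∧
    ∫ y, Real.exp (l * (s * (y ^ 2 - 1) - 1/40)) ∂(gaussianReal 0 1) = ρ := by
  have h0 := int_exp s hs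
  set Y : ℝ → ℝ := fun y => s * (y ^ 2 - 1) with hY
  have hd := hasDerivAt_mgf h0
  have e0 : (∫ y, Y y * Real.exp (0 * Y y) ∂(gaussianReal 0 1)) = 0 := by
    simp only [zero_mul, Real.exp_zero, mul_one, hY]
    rw [integral_const_mul, int_y, mul_zero]
  rw [e0] at hd
  have hd2 : HasDerivAt (fun l => Real.exp (-(l * (1/40))) * mgf Y (gaussianReal 0 1) l) (-(1/40)) 0 := by
    have h1 : HasDerivAt (fun l : ℝ => Real.exp (-(l * (1/40)))) (-(1/40)) 0 := by
      have := (((hasDerivAt_id (0:ℝ)).mul_const (1/40 : ℝ)).neg).exp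
      simpa using this
    have := h1.mul hd
    simp only [zero_mul, neg_zero, Real.exp_zero, mgf_zero, mul_zero, add_zero, mul_one] at this
    exact this
  have hlt : ∀ᶠ l in nhdsWithin (0:ℝ) (Set.Ioi 0), Real.exp (-(l * (1/40))) * mgf Y (gaussianReal 0 1) l < 1 := by
    have h3 := hd2.hasDerivWithinAt (s := Set.Ioi 0)
    rw [hasDerivWithinAt_iff_tendsto_slope' (by simp)] at h3
    filter_upwards [h3.eventually (gt_mem_nhds (show (-(1/40):ℝ) < 0 by norm_num)), self_mem_nhdsWithin] with l hl hl0
    rw [slope_def_field] at hl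
    have hl0' : (0:ℝ) < l := hl0
    rw [sub_zero, div_lt_iff₀ hl0'] at hl
    simp at hl
    linarith
  have hin : ∀ᶠ l in nhdsWithin (0:ℝ) (Set.Ioi 0), l ∈ integrableExpSet Y (gaussianReal 0 1) :=
    nhdsWithin_le_nhds (mem_interior_iff_mem_nhds.1 h0)
  obtain ⟨l, ⟨hl1, hl2⟩, hl3⟩ := ((hlt.and hin).and self_mem_nhdsWithin).exists
  have e : (fun y : ℝ => Real.exp (l * (s * (y ^ 2 - 1) - 1/40))) = fun y => Real.exp (-(l * (1/40))) * Real.exp (l * Y y) := by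
    ext y; rw [← Real.exp_add]; congr 1; simp only [hY]; ring
  have hI : Integrable (fun y => Real.exp (l * Y y)) (gaussianReal 0 1) := hl2
  refine ⟨l, Real.exp (-(l * (1/40))) * mgf Y (gaussianReal 0 1) l, hl3, ?_, hl1, ?_, ?_⟩
  · exact mul_pos (Real.exp_pos _) (mgf_pos hI)
  · rw [e]; exact hI.const_mul _
  · rw [e, integral_const_mul]; rfl

lemma quad_S [Nonempty ι] (x : ι → m → ℝ) (v : m → ℝ) (hv : v ⬝ᵥ v = 1) :
    v ⬝ᵥ ((Fintype.card ι : ℝ)⁻¹ • ∑ j, vecMulVec (x j) (x j) - 1) *ᵥ v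
      = (Fintype.card ι : ℝ)⁻¹ * ∑ j, ((v ⬝ᵥ x j) ^ 2 - 1) := by
  rw [sub_mulVec, dotProduct_sub, one_mulVec, hv, smul_mulVec, dotProduct_smul, sum_mulVec, dotProduct_sum]
  simp only [quad_vecMulVec, Finset.sum_sub_distrib, smul_eq_mul]
  have : (Fintype.card ι : ℝ) ≠ 0 := by simp
  simp only [Finset.sum_const, Finset.card_univ, nsmul_eq_mul, mul_one]
  rw [mul_sub, inv_mul_cancel₀ this]
  congr 2
  exact Finset.sum_congr rfl fun j _ => by rw [dotProduct_comm]

lemma one_dir (s : ℝ) (hs : |s| = 1) : ∃ ρ : ℝ, 0 < ρ ∧ ρ < 1 ∧ ∀ (m ι : Type) [Fintype m] [DecidableEq m] [Fintype ι] [DecidableEq ι] [Nonempty m] [Nonempty ι] (v : m → ℝ) (_ : v ⬝ᵥ v = 1),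
    nu m ι {x | 1/40 < s * (v ⬝ᵥ ((Fintype.card ι : ℝ)⁻¹ • ∑ j, vecMulVec (x j) (x j) - 1) *ᵥ v)} ≤
      ENNReal.ofReal (ρ ^ Fintype.card ι) := by
  obtain ⟨l, ρ, hl, hρ0, hρ1, hI, hE⟩ := chern s hs
  refine ⟨ρ, hρ0, hρ1, ?_⟩
  intro m ι _ _ _ _ _ _ v hv
  set g : (m → ℝ) → ℝ := fun x => Real.exp (l * (s * ((v ⬝ᵥ x) ^ 2 - 1) - 1/40)) with hg
  have hlaw := law_dot v hv
  have hgI : Integrable g (gm m) := hlaw.integrable_comp_of_integrable hI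
  have hgE : ∫ x, g x ∂(gm m) = ρ := by
    have e := integral_map (μ := gm m) (f := fun y : ℝ => Real.exp (l * (s * (y ^ 2 - 1) - 1/40))) hlaw.measurable.aemeasurable (by fun_prop)
    rw [hlaw.map_eq, hE] at e
    exact e.symm
  have hF : Integrable (fun x : ι → m → ℝ => ∏ j, g (x j)) (nu m ι) :=
    Integrable.fintype_prod (f := fun _ => g) fun _ => hgI
  have hFE : ∫ x, (∏ j, g (x j)) ∂(nu m ι) = ρ ^ Fintype.card ι := by
    rw [integral_fintype_prod_eq_prod (fun _ => g)]; simp [hgE]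
  have := markov' hF (fun x => Finset.prod_nonneg fun j _ => (Real.exp_pos _).le) hFE.le one_pos
  rw [div_one] at this
  refine le_trans (measure_mono ?_) this
  intro x hx
  simp only [Set.mem_setOf_eq] at hx ⊢
  rw [quad_S x v hv] at hx
  rw [hg]
  simp only
  rw [← Real.exp_sum, Real.one_lt_exp_iff, ← Finset.mul_sum]
  apply mul_pos hl
  rw [Finset.sum_sub_distrib, ← Finset.mul_sum]
  have hn : (0:ℝ) < Fintype.card ι := by exact_mod_cast Fintype.card_pos
  have h2 : s * ((Fintype.card ι : ℝ)⁻¹ * ∑ j, ((v ⬝ᵥ x j) ^ 2 - 1)) * Fintype.card ι = s * ∑ j, ((v ⬝ᵥ x j) ^ 2 - 1) := by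
    field_simp
  have h3 := mul_lt_mul_of_pos_right hx hn
  rw [h2] at h3
  simp only [Finset.sum_const, Finset.card_univ, nsmul_eq_mul]
  linarith

lemma net (m : Type) [Fintype m] [DecidableEq m] : ∃ s : Finset (m → ℝ), s.card ≤ 5 ^ Fintype.card m ∧ (∀ v ∈ s, v ⬝ᵥ v = 1) ∧
    ∀ u, u ⬝ᵥ u = 1 → ∃ v ∈ s, 7/8 ≤ v ⬝ᵥ u := by
  classical
  let E := EuclideanSpace ℝ m
  let Q : Finset E → Prop := fun s => (∀ c ∈ s, ‖c‖ = 2) ∧ ∀ c ∈ s, ∀ e ∈ s, c ≠ e → 1 ≤ ‖c - e‖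
  have hQ : ∀ s, Q s → s.card ≤ 5 ^ Fintype.card m := by
    intro s hs
    have := Besicovitch.card_le_of_separated s (fun c hc => (hs.1 c hc).le) hs.2
    rwa [finrank_euclideanSpace] at this
  let A : Set ℕ := {k | ∃ s, Q s ∧ s.card = k}
  have hA : sSup A ∈ A := Nat.sSup_mem ⟨0, ∅, by simp [Q], rfl⟩ ⟨5 ^ Fintype.card m, by
    rintro k ⟨s, hs, rfl⟩; exact hQ s hs⟩
  obtain ⟨s, hs, hsc⟩ := hA
  have hmax : ∀ t, Q t → t.card ≤ s.card := by
    intro t ht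
    rw [hsc]
    exact le_csSup ⟨5 ^ Fintype.card m, by rintro k ⟨s, hs, rfl⟩; exact hQ s hs⟩ ⟨t, ht, rfl⟩
  have hsn : ∀ x : E, x.ofLp ⬝ᵥ x.ofLp = ‖x‖^2 := fun x => by
    rw [← inner_ofLp, real_inner_self_eq_norm_sq]
  refine ⟨s.image fun c => (1/2:ℝ) • c.ofLp, Finset.card_image_le.trans (hQ s hs), ?_, ?_⟩
  · intro v hv
    obtain ⟨c, hc, rfl⟩ := Finset.mem_image.1 hv
    rw [smul_dotProduct, dotProduct_smul, hsn, hs.1 c hc]; norm_num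
  · intro u hu
    let w : E := WithLp.toLp 2 ((2:ℝ) • u)
    have hw : ‖w‖ ^ 2 = 4 := by
      rw [← hsn]; simp only [w]; rw [smul_dotProduct, dotProduct_smul, hu]; norm_num
    have hw2 : ‖w‖ = 2 := by nlinarith [norm_nonneg w]
    have : ∃ c ∈ s, ‖c - w‖ ≤ 1 := by
      by_contra! hcon
      have hws : w ∉ s := fun h => by have := hcon w h; simp at this; linarith
      have hQ' : Q (insert w s) := by
        refine ⟨?_, ?_⟩
        · intro c hc
          rcases Finset.mem_insert.1 hc with rfl | hc
          · exact hw2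
          · exact hs.1 c hc
        · intro c hc e he hce
          rcases Finset.mem_insert.1 hc with rfl | hc <;> rcases Finset.mem_insert.1 he with rfl | he
          · exact absurd rfl hce
          · rw [norm_sub_rev]; exact (hcon e he).le
          · exact (hcon c hc).le
          · exact hs.2 c hc e he hce
      have := hmax _ hQ'
      rw [Finset.card_insert_of_notMem hws] at this
      omega
    obtain ⟨c, hc, hcw⟩ := this
    refine ⟨_, Finset.mem_image_of_mem _ hc, ?_⟩
    have h1 : ‖c - w‖ ^ 2 ≤ 1 := by nlinarith [norm_nonneg (c - w)]
    rw [norm_sub_sq_real, hs.1 c hc, hw, inner_ofLp] at h1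
    simp only [w] at h1
    rw [dotProduct_smul, smul_eq_mul] at h1
    rw [smul_dotProduct, smul_eq_mul]
    linarith

lemma net_arg1 (M : Matrix m m ℝ) (hM : Mᵀ = M) (c c' : ℝ) (u : m → ℝ) (hu : u ⬝ᵥ u = 1)
    (hMu : M *ᵥ u = c • u) (hc : 0 ≤ c) (hcc : c' ≤ c) (h1 : ∀ w, - c' * (w ⬝ᵥ w) ≤ w ⬝ᵥ M *ᵥ w) (v : m → ℝ) (hv : v ⬝ᵥ v = 1) (ha : 7/8 ≤ v ⬝ᵥ u) :
    c / 2 ≤ v ⬝ᵥ M *ᵥ v := by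
  set a := v ⬝ᵥ u with hadef
  set z := v - a • u with hz
  have hvz : v = a • u + z := by rw [hz]; abel
  have hzu : z ⬝ᵥ u = 0 := by rw [hz, sub_dotProduct, smul_dotProduct, hu]; simp [hadef]
  have huz : u ⬝ᵥ z = 0 := by rw [dotProduct_comm, hzu]
  have hzz : z ⬝ᵥ z = 1 - a ^ 2 := by
    have := hv
    rw [hvz] at this
    simp only [add_dotProduct, dotProduct_add, smul_dotProduct, dotProduct_smul, hu, hzu, huz, smul_eq_mul] at this
    linarith
  have e : v ⬝ᵥ M *ᵥ v = a ^ 2 * c + z ⬝ᵥ M *ᵥ z := by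
    have huMz : u ⬝ᵥ M *ᵥ z = 0 := by
      rw [dotProduct_mulVec, ← mulVec_transpose, hM, hMu, smul_dotProduct, huz]; simp
    conv_lhs => rw [hvz]
    simp only [mulVec_add, mulVec_smul, hMu, add_dotProduct, dotProduct_add, smul_dotProduct, dotProduct_smul, hu, hzu, huz, huMz, smul_eq_mul]
    ring
  have h2 := h1 z
  rw [hzz] at h2
  have h3 : 0 ≤ 1 - a ^ 2 := by rw [← hzz]; exact dot_self_nonneg z
  rw [e]
  nlinarith [mul_le_mul_of_nonneg_right hcc h3, mul_nonneg hc (show 0 ≤ 2 * a^2 - 3/2 by nlinarith)]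

lemma net_arg [Nonempty m] (M : Matrix m m ℝ) (hM : Mᵀ = M) (s : Finset (m → ℝ)) (hs1 : ∀ v ∈ s, v ⬝ᵥ v = 1)
    (hs : ∀ u, u ⬝ᵥ u = 1 → ∃ v ∈ s, 7/8 ≤ v ⬝ᵥ u) (h : ∀ v ∈ s, |v ⬝ᵥ M *ᵥ v| ≤ 1/40) (v : m → ℝ) :
    |v ⬝ᵥ M *ᵥ v| ≤ 1/20 * (v ⬝ᵥ v) := by
  have hH : M.IsHermitian := by rw [IsHermitian, conjTranspose_eq_transpose_of_trivial, hM]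
  obtain ⟨c, u, hu, hMu, hmax⟩ := exists_max_eig M hH
  obtain ⟨c', u', hu', hMu', hmax'⟩ := exists_max_eig (-M) hH.neg
  have hMt' : (-M)ᵀ = -M := by rw [transpose_neg, hM]
  have hneg : ∀ w : m → ℝ, w ⬝ᵥ (-M) *ᵥ w = - (w ⬝ᵥ M *ᵥ w) := fun w => by rw [neg_mulVec, dotProduct_neg]
  have h1 := hmax u'
  have h1' := hmax' u'
  have hcc : 0 ≤ c + c' := by
    have a1 := hmax u; have a2 := hmax' u
    rw [hneg] at a2; rw [hu] at a1 a2; linarith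
  have hb : c ≤ 1/20 ∧ c' ≤ 1/20 := by
    rcases le_total c' c with hle | hle
    · obtain ⟨w, hw, hwu⟩ := hs u hu
      have := net_arg1 M hM c c' u hu hMu (by linarith) hle (fun w => by have := hmax' w; rw [hneg] at this; linarith) w (hs1 w hw) hwu
      have h2 := (abs_le.1 (h w hw)).2
      constructor <;> linarith
    · obtain ⟨w, hw, hwu⟩ := hs u' hu'
      have := net_arg1 (-M) hMt' c' c u' hu' hMu' (by linarith) hle (fun w => by have := hmax w; rw [hneg]; linarith) w (hs1 w hw) hwu
      rw [hneg] at this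
      have h2 := (abs_le.1 (h w hw)).1
      constructor <;> linarith
  have a1 := hmax v
  have a2 := hmax' v
  rw [hneg] at a2
  have := dot_self_nonneg v
  rw [abs_le]
  constructor <;> nlinarith [hb.1, hb.2]

lemma K2 : ∃ ρ : ℝ, 0 < ρ ∧ ρ < 1 ∧ ∀ (m ι : Type) [Fintype m] [DecidableEq m] [Fintype ι] [DecidableEq ι] [Nonempty m] [Nonempty ι],
    nu m ι {x | ¬ ∀ v, |v ⬝ᵥ ((Fintype.card ι : ℝ)⁻¹ • ∑ j, vecMulVec (x j) (x j) - 1) *ᵥ v| ≤ 1/20 * (v ⬝ᵥ v)} ≤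
      ENNReal.ofReal (2 * 5 ^ Fintype.card m * ρ ^ Fintype.card ι) := by
  obtain ⟨ρ1, h10, h11, H1⟩ := one_dir 1 (by simp)
  obtain ⟨ρ2, h20, h21, H2⟩ := one_dir (-1) (by simp)
  refine ⟨max ρ1 ρ2, lt_max_of_lt_left h10, max_lt h11 h21, ?_⟩
  intro m ι _ _ _ _ _ _
  obtain ⟨s, hsc, hs1, hs⟩ := net m
  set ρ := max ρ1 ρ2
  let A : (m → ℝ) → Set (ι → m → ℝ) := fun v =>
    {x | 1/40 < 1 * (v ⬝ᵥ ((Fintype.card ι : ℝ)⁻¹ • ∑ j, vecMulVec (x j) (x j) - 1) *ᵥ v)} ∪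
    {x | 1/40 < (-1) * (v ⬝ᵥ ((Fintype.card ι : ℝ)⁻¹ • ∑ j, vecMulVec (x j) (x j) - 1) *ᵥ v)}
  have hsub : {x : ι → m → ℝ | ¬ ∀ v, |v ⬝ᵥ ((Fintype.card ι : ℝ)⁻¹ • ∑ j, vecMulVec (x j) (x j) - 1) *ᵥ v| ≤ 1/20 * (v ⬝ᵥ v)} ⊆ ⋃ v ∈ s, A v := by
    intro x hx
    by_contra hcon
    apply hx
    refine net_arg _ ?_ s hs1 hs ?_
    · rw [transpose_sub, transpose_one, transpose_smul, transpose_sum]; simp [transpose_vecMulVec]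
    · intro v hv
      have : x ∉ A v := fun h => hcon (Set.mem_biUnion hv h)
      simp only [A, Set.mem_union, Set.mem_setOf_eq, not_or, not_lt] at this
      rw [abs_le]
      constructor <;> linarith [this.1, this.2]
  refine (measure_mono hsub).trans ((measure_biUnion_finset_le _ _).trans ?_)
  have hv : ∀ v ∈ s, nu m ι (A v) ≤ ENNReal.ofReal (2 * ρ ^ Fintype.card ι) := by
    intro v hv
    refine (measure_union_le _ _).trans ((add_le_add (H1 m ι v (hs1 v hv)) (H2 m ι v (hs1 v hv))).trans ?_)
    rw [← ENNReal.ofReal_add (by positivity) (by positivity)]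
    apply ENNReal.ofReal_le_ofReal
    have a1 : ρ1 ^ Fintype.card ι ≤ ρ ^ Fintype.card ι := pow_le_pow_left₀ h10.le (le_max_left _ _) _
    have a2 : ρ2 ^ Fintype.card ι ≤ ρ ^ Fintype.card ι := pow_le_pow_left₀ h20.le (le_max_right _ _) _
    linarith
  refine (Finset.sum_le_sum hv).trans ?_
  rw [Finset.sum_const, nsmul_eq_mul, ← ENNReal.ofReal_natCast, ← ENNReal.ofReal_mul (by positivity)]
  apply ENNReal.ofReal_le_ofReal
  have hρ : 0 < ρ := lt_max_of_lt_left h10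
  have : (s.card : ℝ) ≤ 5 ^ Fintype.card m := by exact_mod_cast hsc
  nlinarith [pow_pos hρ (Fintype.card ι)]

end P6
end TY

open MeasureTheory ProbabilityTheory Filter Matrix
set_option linter.unusedSectionVars false

theorem specNorm_tylerStar_sub_covStar_tendsto_zero
    {Ωs : Type*} [MeasurableSpace Ωs] (P : Measure Ωs) [IsProbabilityMeasure P]
    (n : ℕ → ℕ) (hn : Tendsto n atTop atTop)
    (hdn : Tendsto (fun d : ℕ => (d : ℝ) / (n d : ℝ)) atTop (nhds 0))
    (X : ∀ d : ℕ, Fin (n d) → Ωs → Fin d → ℝ)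
    (hmeas : ∀ d j, Measurable (X d j))
    (hindep : ∀ d, iIndepFun (X d) P)
    (hgauss : ∀ d j,
      Measure.map (X d j) P = Measure.pi fun _ : Fin d => gaussianReal 0 1)
    (T : ∀ d : ℕ, Ωs → Matrix (Fin d) (Fin d) ℝ)
    (hT : ∀ d, ∀ᵐ ω ∂P, IsTyler (fun j => X d j ω) (T d ω)) :
    ∀ ε > (0 : ℝ),
      Tendsto (fun d =>
          P {ω | specNorm
              (Real.sqrt ((n d : ℝ) / d) • (T d ω - 1) -
               Real.sqrt ((n d : ℝ) / d) •
                 ((n d : ℝ)⁻¹ • ∑ j : Fin (n d), vecMulVec (X d j ω) (X d j ω) - 1)) > ε})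
        atTop (nhds 0) := by
  intro ε hε
  rw [ENNReal.tendsto_nhds_zero]
  intro e he
  by_cases het : e = ⊤
  · rw [het]; exact Eventually.of_forall fun _ => le_top
  set η := e.toReal with hη
  have hη0 : 0 < η := ENNReal.toReal_pos he.ne' het
  have heη : e = ENNReal.ofReal η := (ENNReal.ofReal_toReal het).symm
  obtain ⟨ρ, hρ0, hρ1, HK2⟩ := TY.K2
  have hC0 := TY.C0_nonneg
  obtain ⟨L, hL, hL1⟩ : ∃ L : ℝ, 0 < L ∧ (8 * (TY.C0 + 1) + 8) / L ≤ η / 2 := by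
    refine ⟨(8 * (TY.C0 + 1) + 8) / (η / 2), by positivity, ?_⟩
    rw [div_div_cancel₀ (by positivity)]
  obtain ⟨κ', hκ'0, hκ'1, hκ'2⟩ : ∃ κ' : ℝ, 0 < κ' ∧ κ' ≤ 9/160 ∧ 40 * κ' ≤ ε/2 :=
    ⟨min (9/160) (ε/80), by positivity, min_le_left _ _, by linarith [min_le_right (9/160 : ℝ) (ε/80)]⟩
  obtain ⟨κ, hκ0, hκ1, hκ2, hκ3⟩ : ∃ κ : ℝ, 0 < κ ∧ κ ≤ 1/20 ∧ κ ≤ ε/2 ∧ 3 * (κ * L) ≤ κ'^2/2 := by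
    refine ⟨min (min (1/20) (ε/2)) (κ'^2/(6*L)), by positivity, (min_le_left _ _).trans (min_le_left _ _), (min_le_left _ _).trans (min_le_right _ _), ?_⟩
    have h := min_le_right (min (1/20) (ε/2)) (κ'^2/(6*L))
    have h2 := mul_le_mul_of_nonneg_right h (show 0 ≤ 3 * L by positivity)
    have h3 : κ'^2/(6*L) * (3 * L) = κ'^2/2 := by field_simp; norm_num
    linarith
  -- limits
  have l1 : Tendsto (fun d : ℕ => 1 / (d : ℝ)) atTop (nhds 0) := tendsto_one_div_atTop_nhds_zero_nat
  have l2 : Tendsto (fun d : ℕ => 1 / (n d : ℝ)) atTop (nhds 0) := l1.comp hn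
  have q1 : Tendsto (fun d : ℕ => (TY.C1 / κ^4) * (1 / (n d : ℝ) + 1 / (d : ℝ))) atTop (nhds 0) := by
    simpa using (l2.add l1).const_mul (TY.C1 / κ^4)
  have q3 : Tendsto (fun d : ℕ => (((TY.C0 + 1)^3 * (1 / (d : ℝ))^2 + 2 * (TY.C0 + 1)^2 * (1 / (n d : ℝ)) + (TY.C0 + 1) * ((d : ℝ) / n d)^2) / κ^4)) atTop (nhds 0) := by
    have := ((((l1.pow 2).const_mul ((TY.C0 + 1)^3)).add (l2.const_mul (2 * (TY.C0 + 1)^2))).add ((hdn.pow 2).const_mul (TY.C0 + 1))).div_const (κ^4)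
    simpa using this
  have q5 : Tendsto (fun d : ℕ => 3 * ((d : ℝ) / n d * L + L^2 * (1 / (n d : ℝ)))) atTop (nhds 0) := by
    simpa using ((hdn.mul_const L).add (l2.const_mul (L^2))).const_mul 3
  have q2 : Tendsto (fun d : ℕ => 2 * 5 ^ d * ρ ^ (n d)) atTop (nhds 0) := by
    obtain ⟨k, hk⟩ := exists_pow_lt_of_lt_one (show (0:ℝ) < 1/10 by norm_num) hρ1
    have hev : ∀ᶠ d : ℕ in atTop, k * d ≤ n d := by
      filter_upwards [hdn.eventually (gt_mem_nhds (show (0:ℝ) < 1 / (k + 1) by positivity)), hn.eventually_ge_atTop 1] with d h1 h2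
      have hnd : (0:ℝ) < n d := by exact_mod_cast h2
      rw [div_lt_div_iff₀ hnd (by positivity)] at h1
      have h3 : d * (k + 1) < 1 * n d := by exact_mod_cast h1
      nlinarith
    have hz : Tendsto (fun d : ℕ => 2 * (1/2 : ℝ) ^ d) atTop (nhds 0) := by
      simpa using (tendsto_pow_atTop_nhds_zero_of_lt_one (show (0:ℝ) ≤ 1/2 by norm_num) (by norm_num)).const_mul 2
    refine squeeze_zero' (Eventually.of_forall fun d => by positivity) ?_ hz
    filter_upwards [hev] with d hd
    have h1 : ρ ^ (n d) ≤ (ρ ^ k) ^ d := by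
      rw [← pow_mul]; exact pow_le_pow_of_le_one hρ0.le hρ1.le hd
    have h2 : (ρ ^ k) ^ d ≤ (1/10 : ℝ) ^ d := pow_le_pow_left₀ (by positivity) hk.le _
    have h3 : (5:ℝ) ^ d * (1/10) ^ d = (1/2) ^ d := by rw [← mul_pow]; norm_num
    have h5 : (0:ℝ) < 5 ^ d := by positivity
    calc 2 * 5 ^ d * ρ ^ (n d) ≤ 2 * 5 ^ d * (1/10)^d := by gcongr; exact h1.trans h2
      _ = 2 * (1/2)^d := by rw [mul_assoc, h3]
  have η8 : 0 < η / 8 := by positivity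
  filter_upwards [eventually_ge_atTop 1, hn.eventually_ge_atTop 1,
    hdn.eventually (ge_mem_nhds (show (0:ℝ) < 1/10 by norm_num)),
    q1.eventually (ge_mem_nhds η8), q2.eventually (ge_mem_nhds η8), q3.eventually (ge_mem_nhds η8),
    q5.eventually (ge_mem_nhds (show (0:ℝ) < κ'^2/2 by positivity))] with d hd hnd hδ b1 b2 b3 b5
  have : Nonempty (Fin d) := ⟨⟨0, hd⟩⟩
  have : Nonempty (Fin (n d)) := ⟨⟨0, hnd⟩⟩
  let XX : Ωs → Fin (n d) → Fin d → ℝ := fun ω j => X d j ω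
  have hXXm : Measurable XX := measurable_pi_lambda _ fun j => hmeas d j
  have hlaw : P.map XX = TY.nu (Fin d) (Fin (n d)) := by
    have h := (iIndepFun_iff_map_fun_eq_pi_map fun j => (hmeas d j).aemeasurable).1 (hindep d)
    rw [show P.map XX = _ from h]
    simp only [hgauss]
  have hpre : ∀ s, P (XX ⁻¹' s) ≤ TY.nu (Fin d) (Fin (n d)) s := fun s => by
    rw [← hlaw]; exact Measure.le_map_apply hXXm.aemeasurable s
  have hne : ∀ᵐ ω ∂P, ∀ j, X d j ω ≠ 0 := by
    rw [ae_all_iff]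
    intro j
    have h := TY.ae_ne (m := Fin d)
    rw [TY.gm, ← hgauss d j] at h
    exact ae_of_ae_map (hmeas d j).aemeasurable h
  have k1 := (hpre _).trans (TY.K1 (m := Fin d) (ι := Fin (n d)) hκ0)
  have k2 := (hpre _).trans (HK2 (Fin d) (Fin (n d)))
  have k3 := (hpre _).trans (TY.K3 (m := Fin d) (ι := Fin (n d)) hκ0)
  have k4 := (hpre _).trans (TY.K4 (m := Fin d) (ι := Fin (n d)) hL)
  simp only [Fintype.card_fin] at k1 k2 k3 k4
  set B1 := XX ⁻¹' {x | κ ^ 4 * ((d : ℝ) / n d) ^ 2 < TY.fro (TY.M1 x * TY.M1 x)} with hB1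
  set B2 := XX ⁻¹' {x | ¬ ∀ v, |v ⬝ᵥ ((n d : ℝ)⁻¹ • ∑ j, vecMulVec (x j) (x j) - 1) *ᵥ v| ≤ 1/20 * (v ⬝ᵥ v)} with hB2
  set B3 := XX ⁻¹' {x | (κ / d) ^ 4 < TY.fro (TY.Hm (fun j => TY.un (x j)) * TY.Hm (fun j => TY.un (x j)))} with hB3
  set B4 := XX ⁻¹' {x | L < 2 * ∑ j, TY.Nj (fun i => TY.un (x i)) j + 8 / n d} with hB4
  have hsub : ∀ᵐ ω ∂P, ω ∈ {ω | specNorm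
              (Real.sqrt ((n d : ℝ) / d) • (T d ω - 1) -
               Real.sqrt ((n d : ℝ) / d) •
                 ((n d : ℝ)⁻¹ • ∑ j : Fin (n d), vecMulVec (X d j ω) (X d j ω) - 1)) > ε} → ω ∈ B1 ∪ B2 ∪ B3 ∪ B4 := by
    filter_upwards [hne, hT d] with ω hω1 hω2 hω3
    by_contra hcon
    simp only [Set.mem_union, not_or, hB1, hB2, hB3, hB4, Set.mem_preimage, Set.mem_setOf_eq, not_lt, not_not] at hcon
    obtain ⟨⟨⟨g1, g2⟩, g3⟩, g4⟩ := hcon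
    have := TY.main_det hd hnd (XX ω) hω1 (T d ω) hω2 κ κ' L hκ0.le hκ1 hκ'0.le hκ'1 hδ g1 g2 g3 g4 (by
      have : L^2 / (n d : ℝ) = L^2 * (1 / (n d : ℝ)) := by ring
      rw [this]; linarith)
    have h2 : ε < _ := hω3
    exact absurd (h2.trans_le this) (by linarith)
  refine (measure_mono_ae hsub).trans ?_
  rw [heη]
  have u1 : P B1 ≤ ENNReal.ofReal (η/8) := k1.trans (ENNReal.ofReal_le_ofReal b1)
  have u2 : P B2 ≤ ENNReal.ofReal (η/8) := k2.trans (ENNReal.ofReal_le_ofReal b2)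
  have u3 : P B3 ≤ ENNReal.ofReal (η/8) := k3.trans (ENNReal.ofReal_le_ofReal b3)
  have u4 : P B4 ≤ ENNReal.ofReal (η/2) := k4.trans (ENNReal.ofReal_le_ofReal hL1)
  calc P (B1 ∪ B2 ∪ B3 ∪ B4) ≤ P B1 + P B2 + P B3 + P B4 := by
        refine (measure_union_le _ _).trans (add_le_add ((measure_union_le _ _).trans (add_le_add (measure_union_le _ _) le_rfl)) le_rfl)
    _ ≤ ENNReal.ofReal (η/8) + ENNReal.ofReal (η/8) + ENNReal.ofReal (η/8) + ENNReal.ofReal (η/2) := by gcongr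
    _ = ENNReal.ofReal (η/8 + η/8 + η/8 + η/2) := by
        rw [ENNReal.ofReal_add, ENNReal.ofReal_add, ENNReal.ofReal_add] <;> positivity
    _ ≤ ENNReal.ofReal η := ENNReal.ofReal_le_ofReal (by linarith)
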